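/- arXiv:1709.00159 — 2 statements merged into one kernel-verified Lean document; each statement's English description precedes it below -/
import Mathlib

section
/- Let a₁,a₂,b₁,b₂ ∈ ℂ satisfy: (i) a₁, a₂, b₁, b₂ ∉ ℤ≤0; (ii) Re s > 0, where s := b₁+b₂−a₁−a₂−1; (iii) bᵢ−aⱼ ∉ ℤ≤0 for all i,j ∈ {1,2}. Then the continued fraction K_{j=0}^∞ r(j)/q(j) (with q(j), r(j) as in the context) converges to ₃F₂(1,a₁,a₂;b₁,b₂) exponentially fast; more precisely there exist K > 0 and N ∈ ℕ such that for every n ≥ N, ₃F₂(1,a₁,a₂;b₁,b₂) − K_{j=0}^{n} r(j)/q(j) = C · (3n)^{1/2−s} · 2^{−(2n+a₁+a₂)} · (1 + E(n)) with |E(n)| ≤ K·n^{−1/2}, where C := π^{3/2} Γ(b₁)Γ(b₂)Γ(s)² / (Γ(a₁)Γ(a₂)Γ(b₁−a₁)Γ(b₁−a₂)Γ(b₂−a₁)Γ(b₂−a₂)). -/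
/-!
The error of the approximants is computed exactly by Pincherle's method, and each factor of the
resulting formula is then expanded asymptotically.

**A recurrence solution.** The series `₃F₂(1,a₁,a₂;b₁,b₂)` is the first member `Φ₀` of a chain of
contiguous series `Φₙ` (`cfPhi`), all with the same parametric excess `s`. A telescoping
contiguity relation (`hyp_contiguous`) shows that `x₀ = 1`, `xₙ₊₁ = const · Φₙ` (`cfSol`) satisfies
`xₙ = q(n) xₙ₊₁ + r(n+1) xₙ₊₂` (`Params.cfSol_rec`), and `x₁` is the value of the series
(`Params.cfSol_one`). With `Bₙ` the continuant of `q(0), …, q(n-1)`, the determinant formula for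
continuants then gives the exact error (`cf_error`)
`x₁ - K_{j=0}^{n} r(j)/q(j) = (-r(1)) ⋯ (-r(n+1)) · xₙ₊₂ / Bₙ₊₁`.

**Size of the solution.** In terms of the summation index `k = j + n`, the terms of `Φₙ` are those
of `Φ₀` times a weight which behaves like `exp(-n²/(3k))` (`tendsto_cfWeight`), while the `k`-th
term of `Φ₀` behaves like `k^(-s-1)`. Rescaling `k = n² x` and dominated convergence give the limit
of `n^(2s) xₙ` as a Gamma integral (`tendsto_weighted_tsum`, `Params.tendsto_cfSol`). The limit
being nonzero, `xₙ₊₁/xₙ → 1`; the Riccati recurrence of these ratios is contracting by the factor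
`1/4`, so that `xₙ₊₁/xₙ = 1 - 2s/n + O(1/n²)` (`Params.expand1_cfSol_ratio`), which upgrades the
limit to one with relative error `O(1/n)` (`Params.expand0_cfSol`).

**Size of the other factors.** The products `Bₙ xₙ` satisfy an affine recursion contracting by
`1/4`, hence `Bₙ xₙ = 4/3 + O(1/n)` (`Params.expand0_continuant`). The product of the partial
numerators is a quotient of Gamma functions (`Params.prod_cfr`), which the asymptotics of
`Γ(z+n)/Γ(n)` and the duplication formula evaluate (`Params.expand0_prod`).

Putting the three expansions together, the relative error in the final formula is `O(1/n)`, which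
is stronger than the required `O(n^(-1/2))`.
-/

open Complex

/-- Partial denominator `q₀(m)` (with `q₀(0) := 1`). -/
noncomputable def cfq0 (a1 a2 b1 b2 : ℂ) (m : ℕ) : ℂ :=
  if m = 0 then 1
  else ((3 * (m : ℂ) + b1 - 1) * (3 * (m : ℂ) + b2 - 1) -
      (2 * (m : ℂ)) * (2 * (m : ℂ) + a2)) /
    ((2 * (m : ℂ)) * (2 * (m : ℂ) + a1 - 1))

/-- Partial denominator `q₁(m)`. -/
noncomputable def cfq1 (a1 a2 b1 b2 : ℂ) (m : ℕ) : ℂ :=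
  ((3 * (m : ℂ) + b1) * (3 * (m : ℂ) + b2) -
      (2 * (m : ℂ) + 1) * (2 * (m : ℂ) + a1)) /
    ((2 * (m : ℂ) + a1) * (2 * (m : ℂ) + a2))

/-- Partial denominator `q₂(m)`. -/
noncomputable def cfq2 (a1 a2 b1 b2 : ℂ) (m : ℕ) : ℂ :=
  ((3 * (m : ℂ) + b1 + 1) * (3 * (m : ℂ) + b2 + 1) -
      (2 * (m : ℂ) + a1 + 1) * (2 * (m : ℂ) + a2 + 1)) /
    ((2 * (m : ℂ) + 1) * (2 * (m : ℂ) + a2 + 1))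

/-- Partial numerator `r₀(m)` (with `r₀(0) := 1`). -/
noncomputable def cfr0 (a1 a2 b1 b2 : ℂ) (m : ℕ) : ℂ :=
  if m = 0 then 1
  else -(((m : ℂ) + b1 - a2 - 1) * ((m : ℂ) + b2 - a2 - 1)) /
    ((2 * (m : ℂ) - 1) * (2 * (m : ℂ) + a2 - 1))

/-- Partial numerator `r₁(m)` (with `r₁(0) := −1`). -/
noncomputable def cfr1 (a1 a2 b1 b2 : ℂ) (m : ℕ) : ℂ :=
  if m = 0 then -1
  else -(((m : ℂ) + b1 - 1) * ((m : ℂ) + b2 - 1)) /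
    ((2 * (m : ℂ)) * (2 * (m : ℂ) + a1 - 1))

/-- Partial numerator `r₂(m)`. -/
noncomputable def cfr2 (a1 a2 b1 b2 : ℂ) (m : ℕ) : ℂ :=
  -(((m : ℂ) + b1 - a1) * ((m : ℂ) + b2 - a1)) /
    ((2 * (m : ℂ) + a1) * (2 * (m : ℂ) + a2))

/-- `q(n) := q_i((n−i)/3)` for `n ≡ i (mod 3)`. -/
noncomputable def cfq (a1 a2 b1 b2 : ℂ) (n : ℕ) : ℂ :=
  if n % 3 = 0 then cfq0 a1 a2 b1 b2 (n / 3)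
  else if n % 3 = 1 then cfq1 a1 a2 b1 b2 (n / 3)
  else cfq2 a1 a2 b1 b2 (n / 3)

/-- `r(n) := r_i((n−i)/3)` for `n ≡ i (mod 3)`. -/
noncomputable def cfr (a1 a2 b1 b2 : ℂ) (n : ℕ) : ℂ :=
  if n % 3 = 0 then cfr0 a1 a2 b1 b2 (n / 3)
  else if n % 3 = 1 then cfr1 a1 a2 b1 b2 (n / 3)
  else cfr2 a1 a2 b1 b2 (n / 3)

/-- `cfFrom q r j t = r(j)/(q(j) + r(j+1)/(⋯ + r(j+t)/q(j+t)))`; so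
`K_{j=0}^{n} r(j)/q(j) = cfFrom q r 0 n`. -/
noncomputable def cfFrom (q r : ℕ → ℂ) : ℕ → ℕ → ℂ
  | j, 0 => r j / q j
  | j, t + 1 => r j / (q j + cfFrom q r (j + 1) t)

/-- The series `₃F₂(1,a₁,a₂;b₁,b₂) = Σ_{j≥0} (a₁;j)(a₂;j)/((b₁;j)(b₂;j))` with
`(a;j) := Γ(a+j)/Γ(a)`. -/
noncomputable def threeF2one (a1 a2 b1 b2 : ℂ) : ℂ :=
  ∑' j : ℕ, (Gamma (a1 + j) / Gamma a1 * (Gamma (a2 + j) / Gamma a2)) /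
    (Gamma (b1 + j) / Gamma b1 * (Gamma (b2 + j) / Gamma b2))

open Filter Asymptotics Topology

/-! ### Asymptotic expansions in powers of `1/n` -/

/-- First-order expansion: `f n = a + O(1/n)`. -/
def Expand0 (f : ℕ → ℂ) (a : ℂ) : Prop :=
  (fun n : ℕ => f n - a) =O[atTop] (fun n : ℕ => ((n : ℝ))⁻¹)

/-- Second-order expansion: `f n = a + b/n + O(1/n²)`. -/
def Expand1 (f : ℕ → ℂ) (a b : ℂ) : Prop :=
  (fun n : ℕ => f n - a - b / n) =O[atTop] (fun n : ℕ => ((n : ℝ) ^ 2)⁻¹)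

lemma tendsto_inv_nat : Tendsto (fun n : ℕ => ((n : ℝ))⁻¹) atTop (𝓝 0) :=
  tendsto_inv_atTop_zero.comp tendsto_natCast_atTop_atTop

lemma isBigO_div_nat (b : ℂ) :
    (fun n : ℕ => b / (n : ℂ)) =O[atTop] (fun n : ℕ => ((n : ℝ))⁻¹) := by
  refine IsBigO.of_bound ‖b‖ (Eventually.of_forall fun n => ?_)
  simp [div_eq_mul_inv]

lemma isBigO_invSq_inv :
    (fun n : ℕ => ((n : ℝ) ^ 2)⁻¹) =O[atTop] (fun n : ℕ => ((n : ℝ))⁻¹) := by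
  refine IsBigO.of_bound 1 (eventually_atTop.2 ⟨1, fun n hn => ?_⟩)
  have : (1 : ℝ) ≤ n := by exact_mod_cast hn
  rw [Real.norm_of_nonneg (by positivity), Real.norm_of_nonneg (by positivity), one_mul]
  gcongr
  nlinarith

lemma Expand0.tendsto {f : ℕ → ℂ} {a : ℂ} (h : Expand0 f a) : Tendsto f atTop (𝓝 a) := by
  have := h.trans_tendsto tendsto_inv_nat
  simpa using this.add_const a

lemma Expand0.congr {f g : ℕ → ℂ} {a : ℂ} (h : Expand0 f a) (hfg : ∀ᶠ n in atTop, f n = g n) :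
    Expand0 g a := by
  refine IsBigO.congr' h ?_ EventuallyEq.rfl
  filter_upwards [hfg] with n hn
  rw [hn]

lemma expand0_const (a : ℂ) : Expand0 (fun _ => a) a := by
  simp only [Expand0, sub_self]
  exact isBigO_zero _ _

lemma Expand0.isBigO_one {f : ℕ → ℂ} {a : ℂ} (h : Expand0 f a) :
    f =O[atTop] (fun _ : ℕ => (1 : ℝ)) := h.tendsto.isBigO_one ℝ

lemma Expand0.mul {f g : ℕ → ℂ} {a b : ℂ} (hf : Expand0 f a) (hg : Expand0 g b) :
    Expand0 (fun n => f n * g n) (a * b) := by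
  have h1 := IsBigO.mul hf hg.isBigO_one
  have h2 := IsBigO.const_mul_left hg a
  simp only [mul_one] at h1
  refine (h1.add h2).congr_left fun n => ?_
  ring

lemma Expand0.inv {f : ℕ → ℂ} {a : ℂ} (hf : Expand0 f a) (ha : a ≠ 0) :
    Expand0 (fun n => (f n)⁻¹) a⁻¹ := by
  have h1 := (hf.tendsto.inv₀ ha).isBigO_one ℝ
  have h2 := (IsBigO.mul (IsBigO.const_mul_left hf (-a⁻¹)) h1)
  simp only [mul_one] at h2
  refine h2.congr' ?_ EventuallyEq.rfl
  filter_upwards [hf.tendsto.eventually_ne ha] with n hn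
  field_simp
  ring

lemma Expand0.pow {f : ℕ → ℂ} {a : ℂ} (hf : Expand0 f a) (k : ℕ) :
    Expand0 (fun n => f n ^ k) (a ^ k) := by
  induction k with
  | zero => simpa using expand0_const 1
  | succ k ih => simpa [pow_succ] using ih.mul hf

lemma Expand0.neg {f : ℕ → ℂ} {a : ℂ} (hf : Expand0 f a) :
    Expand0 (fun n => -f n) (-a) := by
  simpa using (expand0_const (-1)).mul hf

lemma Expand1.expand0 {f : ℕ → ℂ} {a b : ℂ} (h : Expand1 f a b) : Expand0 f a := by
  refine ((h.trans isBigO_invSq_inv).add (isBigO_div_nat b)).congr_left fun n => ?_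
  ring

lemma Expand1.congr {f g : ℕ → ℂ} {a b : ℂ} (h : Expand1 f a b)
    (hfg : ∀ᶠ n in atTop, f n = g n) : Expand1 g a b := by
  refine IsBigO.congr' h ?_ EventuallyEq.rfl
  filter_upwards [hfg] with n hn
  rw [hn]

lemma expand1_const (a : ℂ) : Expand1 (fun _ => a) a 0 := by
  simp only [Expand1, sub_self, zero_div]
  exact isBigO_zero _ _

lemma expand1_linear (a b : ℂ) : Expand1 (fun n => a + b / n) a b := by
  refine (isBigO_zero _ _).congr_left fun n => ?_
  ring

lemma Expand1.add {f g : ℕ → ℂ} {a b c d : ℂ} (hf : Expand1 f a b) (hg : Expand1 g c d) :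
    Expand1 (fun n => f n + g n) (a + c) (b + d) := by
  refine (IsBigO.add hf hg).congr_left fun n => ?_
  ring

lemma Expand1.mul {f g : ℕ → ℂ} {a b c d : ℂ} (hf : Expand1 f a b) (hg : Expand1 g c d) :
    Expand1 (fun n => f n * g n) (a * c) (a * d + b * c) := by
  have h1 := IsBigO.mul hf hg.expand0.isBigO_one
  have h2 := IsBigO.mul (expand1_linear a b).expand0.isBigO_one hg
  have h3 := (isBigO_div_nat b).mul (isBigO_div_nat d)
  simp only [mul_one, one_mul] at h1 h2
  have h3' : (fun n : ℕ => b / (n : ℂ) * (d / n)) =O[atTop] (fun n : ℕ => ((n : ℝ) ^ 2)⁻¹) :=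
    h3.congr_right fun n => by rw [pow_two, mul_inv]
  refine ((h1.add h2).add h3').congr_left fun n => ?_
  ring

lemma Expand1.neg {f : ℕ → ℂ} {a b : ℂ} (hf : Expand1 f a b) :
    Expand1 (fun n => -f n) (-a) (-b) := by
  simpa using (expand1_const (-1)).mul hf

lemma Expand1.sub {f g : ℕ → ℂ} {a b c d : ℂ} (hf : Expand1 f a b) (hg : Expand1 g c d) :
    Expand1 (fun n => f n - g n) (a - c) (b - d) := by
  simpa [sub_eq_add_neg] using hf.add hg.neg

lemma Expand1.inv {f : ℕ → ℂ} {a b : ℂ} (hf : Expand1 f a b) (ha : a ≠ 0) :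
    Expand1 (fun n => (f n)⁻¹) a⁻¹ (-b / a ^ 2) := by
  have h1 := (hf.expand0.tendsto.inv₀ ha).isBigO_one ℝ
  have h2 : (fun n : ℕ => b / (n : ℂ) * (f n - a)) =O[atTop] (fun n : ℕ => ((n : ℝ) ^ 2)⁻¹) :=
    ((isBigO_div_nat b).mul hf.expand0).congr_right fun n => by rw [pow_two, mul_inv]
  have h3 := (((IsBigO.const_mul_left hf (-a)).add h2).mul h1).const_mul_left (a ^ 2)⁻¹
  simp only [mul_one] at h3
  refine h3.congr' ?_ EventuallyEq.rfl
  filter_upwards [hf.expand0.tendsto.eventually_ne ha, eventually_ne_atTop 0] with n hn hn0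
  have : (n : ℂ) ≠ 0 := by exact_mod_cast hn0
  field_simp
  ring

lemma Expand1.div {f g : ℕ → ℂ} {a b c d : ℂ} (hf : Expand1 f a b) (hg : Expand1 g c d)
    (hc : c ≠ 0) :
    Expand1 (fun n => f n / g n) (a / c) (b / c - a * d / c ^ 2) := by
  have := hf.mul (hg.inv hc)
  simp only [div_eq_mul_inv]
  convert this using 1
  ring

/-- `(1 + 1/n)^z = 1 + z/n + O(1/n²)`. -/
lemma expand1_one_add_inv_cpow (z : ℂ) :
    Expand1 (fun n : ℕ => (1 + 1 / (n : ℂ)) ^ z) 1 z := by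
  have hlog : Expand1 (fun n : ℕ => z * log (1 + 1 / (n : ℂ))) 0 z := by
    have : Expand1 (fun n : ℕ => log (1 + 1 / (n : ℂ))) 0 1 := by
      refine IsBigO.of_bound 1 (eventually_atTop.2 ⟨2, fun n hn => ?_⟩)
      have hn' : (2 : ℝ) ≤ n := by exact_mod_cast hn
      have hz : ‖(1 / (n : ℂ))‖ = (n : ℝ)⁻¹ := by simp
      have hz2 : (n : ℝ)⁻¹ ≤ 2⁻¹ := by gcongr
      have h := norm_log_one_add_sub_self_le (z := 1 / (n : ℂ)) (by rw [hz]; norm_num at hz2; linarith)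
      rw [hz] at h
      have h4 : (1 - (n : ℝ)⁻¹)⁻¹ ≤ 2 := by
        rw [inv_le_comm₀ (by norm_num at hz2; linarith) (by norm_num)]
        norm_num at hz2 ⊢; linarith
      rw [Real.norm_of_nonneg (by positivity), sub_zero, one_mul]
      refine h.trans ?_
      rw [inv_pow]
      have : 0 ≤ ((n : ℝ) ^ 2)⁻¹ := by positivity
      nlinarith
    have h2 := (expand1_const z).mul this
    simpa using h2
  have h1 := hlog.expand0
  have hsm : ∀ᶠ n : ℕ in atTop, ‖z * log (1 + 1 / (n : ℂ))‖ ≤ 1 := by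
    have := h1.tendsto.norm
    rw [norm_zero] at this
    exact (this.eventually_lt_const one_pos).mono fun _ h => h.le
  have h2 : (fun n : ℕ => exp (z * log (1 + 1 / (n : ℂ))) - 1 - z * log (1 + 1 / (n : ℂ)))
      =O[atTop] (fun n : ℕ => ((n : ℝ) ^ 2)⁻¹) := by
    have h3 : (fun n : ℕ => exp (z * log (1 + 1 / (n : ℂ))) - 1 - z * log (1 + 1 / (n : ℂ)))
      =O[atTop] (fun n : ℕ => (z * log (1 + 1 / (n : ℂ))) * (z * log (1 + 1 / (n : ℂ)))) := by
      refine IsBigO.of_bound 1 ?_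
      filter_upwards [hsm] with n hn
      have := Complex.norm_exp_sub_one_sub_id_le hn
      rw [one_mul, norm_mul, ← pow_two]
      exact this
    have h1' : (fun n : ℕ => z * log (1 + 1 / (n : ℂ))) =O[atTop] (fun n : ℕ => ((n : ℝ))⁻¹) :=
      h1.congr_left fun n => by ring
    exact h3.trans ((h1'.mul h1').congr_right fun n => by rw [pow_two, mul_inv])
  refine (h2.add hlog).congr' ?_ EventuallyEq.rfl
  filter_upwards [eventually_ne_atTop 0] with n hn
  have hne : 1 + 1 / (n : ℂ) ≠ 0 := by
    have h0 : (n : ℂ) ≠ 0 := by exact_mod_cast hn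
    rw [one_add_div h0]
    exact div_ne_zero (by exact_mod_cast n.succ_ne_zero) h0
  rw [cpow_def_of_ne_zero hne, mul_comm (log _)]
  ring

/-- A convergent sequence whose consecutive ratios are `1 + O(1/n²)` approaches its limit at
rate `O(1/n)`. -/
lemma expand0_of_ratio {f g : ℕ → ℂ} {l : ℂ} (hf : Tendsto f atTop (𝓝 l))
    (hg : Expand1 g 1 0) (hfg : ∀ᶠ n in atTop, f (n + 1) = f n * g n) : Expand0 f l := by
  have hd : (fun n : ℕ => f (n + 1) - f n) =O[atTop] (fun n : ℕ => ((n : ℝ) ^ 2)⁻¹) := by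
    have h1 := (hf.isBigO_one ℝ).mul hg
    simp only [one_mul] at h1
    refine h1.congr' ?_ EventuallyEq.rfl
    filter_upwards [hfg] with n hn
    rw [hn]; ring
  obtain ⟨C, hC0, hC⟩ := hd.exists_pos
  obtain ⟨N, hN⟩ := eventually_atTop.1 hC.bound
  refine IsBigO.of_bound (2 * C) (eventually_atTop.2 ⟨N + 1, fun n hn => ?_⟩)
  have hn0 : (1 : ℝ) ≤ n := by exact_mod_cast (by omega : 1 ≤ n)
  -- the bound `C/k²` telescopes against `2C/k - 2C/(k+1)`
  have key : ∀ k : ℕ, ‖f n - f (n + k)‖ ≤ 2 * C * ((n : ℝ)⁻¹ - ((n + k : ℕ) : ℝ)⁻¹) := by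
    intro k
    induction k with
    | zero => simp
    | succ k ih =>
      have h1 := hN (n + k) (by omega)
      rw [Real.norm_of_nonneg (by positivity)] at h1
      have h2 : ‖f n - f (n + (k + 1))‖ ≤ ‖f n - f (n + k)‖ + ‖f (n + k + 1) - f (n + k)‖ := by
        have h := norm_sub_le (f n - f (n + k)) (f (n + k + 1) - f (n + k))
        rwa [show f n - f (n + k) - (f (n + k + 1) - f (n + k)) = f n - f (n + (k + 1)) by
          rw [← add_assoc]; ring] at h
      have h3 : (((n + k : ℕ) : ℝ) ^ 2)⁻¹ ≤
          2 * ((((n + k : ℕ) : ℝ))⁻¹ - (((n + (k + 1) : ℕ)) : ℝ)⁻¹) := by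
        have hm : (1 : ℝ) ≤ ((n + k : ℕ) : ℝ) := by exact_mod_cast (by omega : 1 ≤ n + k)
        have e : (((n + (k + 1) : ℕ)) : ℝ) = ((n + k : ℕ) : ℝ) + 1 := by push_cast; ring
        rw [e]
        generalize ((n + k : ℕ) : ℝ) = y at hm
        have hy : 0 < y := by linarith
        have hy1 : 0 < y + 1 := by linarith
        rw [inv_sub_inv hy.ne' hy1.ne', inv_eq_one_div, ← mul_div_assoc,
          div_le_div_iff₀ (by positivity) (by positivity)]
        nlinarith
      nlinarith
  have hlim : Tendsto (fun k : ℕ => ‖f n - f (n + k)‖) atTop (𝓝 ‖f n - l‖) := by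
    have : Tendsto (fun k : ℕ => f (n + k)) atTop (𝓝 l) := by
      simpa [add_comm] using (tendsto_add_atTop_iff_nat n).2 hf
    exact (tendsto_const_nhds.sub this).norm
  refine le_of_tendsto hlim (Eventually.of_forall fun k => (key k).trans ?_)
  rw [Real.norm_of_nonneg (by positivity)]
  have : 0 ≤ ((n + k : ℕ) : ℝ)⁻¹ := by positivity
  nlinarith

/-! ### Contracting recursions, continuants and the error of a continued fraction -/

/-- A polynomial decay rate can be checked on the three residue classes modulo `3`. -/
lemma isBigO_of_mod_three {f : ℕ → ℂ} (p : ℕ)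
    (h : ∀ i < 3, (fun m : ℕ => f (3 * m + i)) =O[atTop] (fun m : ℕ => ((m : ℝ) ^ p)⁻¹)) :
    f =O[atTop] (fun n : ℕ => ((n : ℝ) ^ p)⁻¹) := by
  have h' : ∀ i < 3, ∃ C : ℝ, 0 < C ∧ ∃ N : ℕ, ∀ m ≥ N,
      ‖f (3 * m + i)‖ ≤ C * ((m : ℝ) ^ p)⁻¹ := by
    intro i hi
    obtain ⟨C, hC0, hC⟩ := (h i hi).exists_pos
    obtain ⟨N, hN⟩ := eventually_atTop.1 hC.bound
    refine ⟨C, hC0, N, fun m hm => ?_⟩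
    have := hN m hm
    rwa [Real.norm_of_nonneg (by positivity)] at this
  choose! C hC0 N hN using h'
  refine IsBigO.of_bound ((C 0 + C 1 + C 2) * 5 ^ p)
    (eventually_atTop.2 ⟨3 * (N 0 + N 1 + N 2 + 1), fun n hn => ?_⟩)
  have hi : n % 3 < 3 := Nat.mod_lt _ (by norm_num)
  have hn3 : 3 * (n / 3) + n % 3 = n := Nat.div_add_mod n 3
  have hNle : N (n % 3) ≤ N 0 + N 1 + N 2 := by
    have : n % 3 = 0 ∨ n % 3 = 1 ∨ n % 3 = 2 := by omega
    rcases this with h | h | h <;> rw [h] <;> omega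
  have h0 := hC0 0 (by norm_num)
  have h1 := hC0 1 (by norm_num)
  have h2 := hC0 2 (by norm_num)
  have hCle : C (n % 3) ≤ C 0 + C 1 + C 2 := by
    have : n % 3 = 0 ∨ n % 3 = 1 ∨ n % 3 = 2 := by omega
    rcases this with h | h | h <;> rw [h] <;> linarith
  have hb := hN (n % 3) hi (n / 3) (by omega)
  rw [hn3] at hb
  have hm1 : 1 ≤ n / 3 := by omega
  have hm : (0 : ℝ) < ((n / 3 : ℕ) : ℝ) := by exact_mod_cast hm1
  have hn5 : (n : ℝ) ≤ 5 * ((n / 3 : ℕ) : ℝ) := by exact_mod_cast (by omega : n ≤ 5 * (n / 3))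
  have hn0 : (0 : ℝ) < n := by exact_mod_cast (by omega : 0 < n)
  rw [Real.norm_of_nonneg (by positivity)]
  have hle : (((n / 3 : ℕ) : ℝ) ^ p)⁻¹ ≤ 5 ^ p * ((n : ℝ) ^ p)⁻¹ := by
    rw [inv_eq_one_div, ← div_eq_mul_inv, div_le_div_iff₀ (by positivity) (by positivity), one_mul,
      ← mul_pow]
    gcongr
  calc ‖f n‖ ≤ C (n % 3) * (((n / 3 : ℕ) : ℝ) ^ p)⁻¹ := hb
    _ ≤ (C 0 + C 1 + C 2) * (5 ^ p * ((n : ℝ) ^ p)⁻¹) := by gcongr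
    _ = _ := by ring

lemma Expand0.of_mod_three {f : ℕ → ℂ} {a : ℂ}
    (h : ∀ i < 3, Expand0 (fun m => f (3 * m + i)) a) : Expand0 f a := by
  have := isBigO_of_mod_three (f := fun n => f n - a) 1 fun i hi => by
    simpa [Expand0] using h i hi
  simpa [Expand0] using this

lemma Expand0.shift {f : ℕ → ℂ} {a : ℂ} (h : Expand0 f a) : Expand0 (fun n => f (n + 1)) a := by
  have h1 := IsBigO.comp_tendsto h (tendsto_add_atTop_nat 1)
  refine IsBigO.trans h1 (IsBigO.of_bound 1 (eventually_atTop.2 ⟨1, fun n hn => ?_⟩))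
  have : (0 : ℝ) < n := by exact_mod_cast hn
  simp only [Function.comp]
  rw [Real.norm_of_nonneg (by positivity), Real.norm_of_nonneg (by positivity), one_mul]
  gcongr
  simp

lemma Expand0.comp_mul {f : ℕ → ℂ} {a : ℂ} (h : Expand0 f a) {k : ℕ} (hk : k ≠ 0) :
    Expand0 (fun n => f (k * n)) a := by
  have hle : ∀ n : ℕ, n ≤ k * n := fun n => Nat.le_mul_of_pos_left n (Nat.pos_of_ne_zero hk)
  have h1 := IsBigO.comp_tendsto h (tendsto_atTop_mono hle tendsto_id)
  refine IsBigO.trans h1 (IsBigO.of_bound 1 (eventually_atTop.2 ⟨1, fun n hn => ?_⟩))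
  have : (0 : ℝ) < n := by exact_mod_cast hn
  simp only [Function.comp]
  rw [Real.norm_of_nonneg (by positivity), Real.norm_of_nonneg (by positivity), one_mul]
  gcongr
  exact hle n

/-- A forward affine recursion `w (n+1) = a + c n * w n` with `c → 1/4` is contracting, so `w`
approaches the fixed point `4a/3` at the rate at which `c` approaches `1/4`. -/
lemma expand0_affine {w c : ℕ → ℂ} {a : ℂ} (hc : Expand0 c (1 / 4))
    (hw : ∀ᶠ n in atTop, w (n + 1) = a + c n * w n) : Expand0 w (4 / 3 * a) := by
  obtain ⟨C, hC0, hC⟩ := hc.exists_pos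
  have hc2 : ∀ᶠ n in atTop, ‖c n‖ ≤ 1 / 2 := by
    have := hc.tendsto.norm
    refine (this.eventually_lt_const (u := 1 / 2) ?_).mono fun _ h => h.le
    norm_num
  obtain ⟨N, hN⟩ := eventually_atTop.1 (hC.bound.and (hc2.and hw))
  set M : ℝ := 4 * (C * ‖4 / 3 * a‖) + (N + 4 : ℕ) * ‖w (N + 4) - 4 / 3 * a‖ with hM
  have hM0 : 0 ≤ M := by positivity
  refine IsBigO.of_bound M (eventually_atTop.2 ⟨N + 4, fun n hn => ?_⟩)
  rw [Real.norm_of_nonneg (by positivity)]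
  induction n, hn using Nat.le_induction with
  | base =>
    rw [← div_eq_mul_inv, le_div_iff₀ (by positivity)]
    have : 0 ≤ C * ‖4 / 3 * a‖ := by positivity
    rw [hM]; linarith
  | succ n hn ih =>
    obtain ⟨h1, h2, h3⟩ := hN n (by omega)
    rw [Real.norm_of_nonneg (by positivity)] at h1
    have hy : (4 : ℝ) ≤ n := by exact_mod_cast (by omega : 4 ≤ n)
    have e : w (n + 1) - 4 / 3 * a = c n * (w n - 4 / 3 * a) + (c n - 1 / 4) * (4 / 3 * a) := by
      rw [h3]; ring
    have hb : ‖w (n + 1) - 4 / 3 * a‖ ≤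
        1 / 2 * (M * (n : ℝ)⁻¹) + C * (n : ℝ)⁻¹ * ‖4 / 3 * a‖ := by
      rw [e]
      refine (norm_add_le _ _).trans ?_
      rw [norm_mul, norm_mul (c n - 1 / 4)]
      gcongr
    refine hb.trans ?_
    have hCM : 4 * (C * ‖4 / 3 * a‖) ≤ M := by
      rw [hM]
      have : 0 ≤ ((N + 4 : ℕ) : ℝ) * ‖w (N + 4) - 4 / 3 * a‖ := by positivity
      linarith
    have : ((n : ℝ))⁻¹ * (3 / 4) ≤ (((n + 1 : ℕ)) : ℝ)⁻¹ := by
      push_cast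
      rw [inv_eq_one_div, inv_eq_one_div, div_mul_eq_mul_div,
        div_le_div_iff₀ (by positivity) (by positivity)]
      linarith
    have hi : 0 ≤ ((n : ℝ))⁻¹ := by positivity
    calc 1 / 2 * (M * (n : ℝ)⁻¹) + C * (n : ℝ)⁻¹ * ‖4 / 3 * a‖
        = (n : ℝ)⁻¹ * (1 / 2 * M + C * ‖4 / 3 * a‖) := by ring
      _ ≤ (n : ℝ)⁻¹ * (3 / 4 * M) := by gcongr; linarith
      _ = M * ((n : ℝ)⁻¹ * (3 / 4)) := by ring
      _ ≤ _ := by gcongr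

/-- The backward recursion `ρ n = 1 / (q n + r (n+1) * ρ (n+1))` contracts by the factor `1/4`
near `ρ = 1`, so a solution tending to `1` is determined up to `O(1/n²)` by any approximate
solution `ρ'` with residual `O(1/n²)`. -/
lemma isBigO_ratio {ρ ρ' q r : ℕ → ℂ} (hρ : Tendsto ρ atTop (𝓝 1)) (hρ' : Tendsto ρ' atTop (𝓝 1))
    (hr : Tendsto r atTop (𝓝 (-1 / 4)))
    (hrec : ∀ᶠ n in atTop, ρ n * (q n + r (n + 1) * ρ (n + 1)) = 1)
    (hres : (fun n => 1 - ρ' n * (q n + r (n + 1) * ρ' (n + 1))) =O[atTop]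
      (fun n : ℕ => ((n : ℝ) ^ 2)⁻¹)) :
    (fun n => ρ n - ρ' n) =O[atTop] (fun n : ℕ => ((n : ℝ) ^ 2)⁻¹) := by
  obtain ⟨C, hC0, hC⟩ := hres.exists_pos
  have h1 : ∀ᶠ n in atTop, ‖ρ n * ρ' n * r (n + 1)‖ ≤ 1 / 2 := by
    have := ((hρ.mul hρ').mul ((tendsto_add_atTop_iff_nat 1).2 hr)).norm
    refine (this.eventually_lt_const (u := 1 / 2) ?_).mono fun _ h => h.le
    norm_num
  have h2 : ∀ᶠ n in atTop, ‖ρ n‖ ≤ 2 := by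
    refine (hρ.norm.eventually_lt_const (u := 2) ?_).mono fun _ h => h.le
    norm_num
  have h3 : ∀ᶠ n in atTop, ‖ρ n - ρ' n‖ ≤ 1 := by
    refine ((hρ.sub hρ').norm.eventually_lt_const (u := 1) ?_).mono fun _ h => h.le
    norm_num
  obtain ⟨N, hN⟩ := eventually_atTop.1 (hC.bound.and (h1.and (h2.and (h3.and hrec))))
  have step : ∀ n ≥ N, ‖ρ n - ρ' n‖ ≤ 2 * (C * ((n : ℝ) ^ 2)⁻¹)
      + 1 / 2 * ‖ρ (n + 1) - ρ' (n + 1)‖ := by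
    intro n hn
    obtain ⟨a1, a2, a3, -, a5⟩ := hN n hn
    rw [Real.norm_of_nonneg (r := ((n : ℝ) ^ 2)⁻¹) (by positivity)] at a1
    have e : ρ n - ρ' n = ρ n * (1 - ρ' n * (q n + r (n + 1) * ρ' (n + 1)))
        - ρ n * ρ' n * r (n + 1) * (ρ (n + 1) - ρ' (n + 1)) := by
      linear_combination (ρ' n) * a5
    rw [e]
    refine (norm_sub_le _ _).trans ?_
    rw [norm_mul, norm_mul (ρ n * ρ' n * r (n + 1))]
    gcongr
  have key : ∀ k : ℕ, ∀ n ≥ N + 1, ‖ρ n - ρ' n‖ ≤ 4 * (C * ((n : ℝ) ^ 2)⁻¹) + (1 / 2) ^ k := by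
    intro k
    induction k with
    | zero =>
      intro n hn
      obtain ⟨-, -, -, a4, -⟩ := hN n (by omega)
      have : 0 ≤ 4 * (C * ((n : ℝ) ^ 2)⁻¹) := by positivity
      rw [pow_zero]; linarith
    | succ k ih =>
      intro n hn
      have s := step n (by omega)
      have i := ih (n + 1) (by omega)
      have hn0 : (0 : ℝ) < n := by exact_mod_cast (by omega : 0 < n)
      have : (((n + 1 : ℕ) : ℝ) ^ 2)⁻¹ ≤ ((n : ℝ) ^ 2)⁻¹ := by
        gcongr; simp
      have : C * (((n + 1 : ℕ) : ℝ) ^ 2)⁻¹ ≤ C * ((n : ℝ) ^ 2)⁻¹ := by gcongr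
      rw [pow_succ (1 / 2 : ℝ)]
      linarith
  refine IsBigO.of_bound (4 * C) (eventually_atTop.2 ⟨N + 1, fun n hn => ?_⟩)
  rw [Real.norm_of_nonneg (by positivity)]
  have hl : Tendsto (fun k : ℕ => 4 * (C * ((n : ℝ) ^ 2)⁻¹) + (1 / 2 : ℝ) ^ k) atTop
      (𝓝 (4 * (C * ((n : ℝ) ^ 2)⁻¹) + 0)) :=
    tendsto_const_nhds.add (tendsto_pow_atTop_nhds_zero_of_lt_one (by norm_num) (by norm_num))
  rw [add_zero] at hl
  rw [mul_assoc]
  exact ge_of_tendsto hl (Eventually.of_forall fun k => key k n hn)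

/-- The continuant of the block `q j, …, q (j+k-1)` with partial numerators
`r (j+1), …, r (j+k-1)`, by its forward recursion in `k`. -/
noncomputable def continuant (q r : ℕ → ℂ) (j : ℕ) : ℕ → ℂ
  | 0 => 1
  | 1 => q j
  | k + 2 => q (j + k + 1) * continuant q r j (k + 1) + r (j + k + 1) * continuant q r j k

/-- Backward recursion of the continuant, in its first index. -/
lemma continuant_back (q r : ℕ → ℂ) (j k : ℕ) :
    continuant q r j (k + 2) =
      q j * continuant q r (j + 1) (k + 1) + r (j + 1) * continuant q r (j + 2) k := by
  induction k using Nat.twoStepInduction with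
  | zero => simp [continuant, mul_comm]
  | one => simp [continuant]; ring_nf
  | more k ih1 ih2 =>
    have e1 : continuant q r j (k + 2 + 2) = q (j + (k + 2) + 1) * continuant q r j (k + 1 + 2)
      + r (j + (k + 2) + 1) * continuant q r j (k + 2) := rfl
    have e2 : continuant q r (j + 1) (k + 2 + 1) = q (j + 1 + (k + 1) + 1) *
        continuant q r (j + 1) (k + 1 + 1)
      + r (j + 1 + (k + 1) + 1) * continuant q r (j + 1) (k + 1) := rfl
    have e3 : continuant q r (j + 2) (k + 2) = q (j + 2 + k + 1) * continuant q r (j + 2) (k + 1)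
      + r (j + 2 + k + 1) * continuant q r (j + 2) k := rfl
    rw [e1, ih2, ih1, e2, e3]
    rw [show j + 1 + (k + 1) + 1 = j + (k + 2) + 1 by ring,
      show j + 2 + k + 1 = j + (k + 2) + 1 by ring]
    ring

/-- The finite continued fraction is a quotient of continuants, provided all its inner
denominators are nonzero. -/
lemma cfFrom_eq_div (q r : ℕ → ℂ) (t : ℕ) : ∀ j : ℕ,
    (∀ i, 1 ≤ i → i ≤ t → continuant q r (j + i) (t + 1 - i) ≠ 0) →
    cfFrom q r j t = r j * continuant q r (j + 1) t / continuant q r j (t + 1) := by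
  induction t with
  | zero => intro j _; simp [cfFrom, continuant]
  | succ t ih =>
    intro j h
    have h1 := h 1 le_rfl (by omega)
    rw [show t + 1 + 1 - 1 = t + 1 by omega] at h1
    have := ih (j + 1) fun i hi hit => by
      have := h (i + 1) (by omega) (by omega)
      rwa [show t + 1 + 1 - (i + 1) = t + 1 - i by omega,
        show j + (i + 1) = j + 1 + i by ring] at this
    rw [cfFrom, this, continuant_back]
    rw [show q j + r (j + 1) * continuant q r (j + 1 + 1) t / continuant q r (j + 1) (t + 1) =
      (q j * continuant q r (j + 1) (t + 1) + r (j + 1) * continuant q r (j + 2) t) /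
        continuant q r (j + 1) (t + 1) by field_simp]
    rw [div_div_eq_mul_div]

section Tail

variable {q r x : ℕ → ℂ}

/-- The solution `x` expressed through a pair of consecutive continuants; the right-hand side does
not depend on `k`. -/
lemma continuant_invariant (hx : ∀ n, x n = q n * x (n + 1) + r (n + 1) * x (n + 2)) (j k : ℕ) :
    x j = continuant q r j (k + 1) * x (j + k + 1)
      + r (j + k + 1) * continuant q r j k * x (j + k + 2) := by
  induction k with
  | zero => simpa [continuant] using hx j
  | succ k ih =>
    rw [ih, hx (j + k + 1)]
    have e : continuant q r j (k + 1 + 1) = q (j + k + 1) * continuant q r j (k + 1)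
      + r (j + k + 1) * continuant q r j k := rfl
    rw [e, show j + (k + 1) + 1 = j + k + 1 + 1 by ring,
      show j + (k + 1) + 2 = j + k + 1 + 2 by ring, show j + k + 2 = j + k + 1 + 1 by ring]
    ring

/-- The determinant formula for the continuants. -/
lemma continuant_det (q r : ℕ → ℂ) (n : ℕ) :
    continuant q r 1 n * continuant q r 0 (n + 2) -
      continuant q r 1 (n + 1) * continuant q r 0 (n + 1) =
      -∏ i ∈ Finset.range (n + 1), (-r (i + 1)) := by
  induction n with
  | zero => simp [continuant]
  | succ n ih =>
    have e1 : continuant q r 0 (n + 1 + 2) = q (n + 2) * continuant q r 0 (n + 2)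
      + r (n + 2) * continuant q r 0 (n + 1) := by
      rw [continuant]; simp [add_assoc]
    have e2 : continuant q r 1 (n + 1 + 1) = q (n + 2) * continuant q r 1 (n + 1)
      + r (n + 2) * continuant q r 1 n := by
      rw [continuant]; rw [show 1 + n + 1 = n + 2 by ring]
    rw [Finset.prod_range_succ, e1, e2, show n + 1 + 1 = n + 2 by ring]
    linear_combination (-r (n + 2)) * ih

lemma continuant_pair_ne_zero (hr : ∀ n, r (n + 1) ≠ 0) (j k : ℕ) :
    continuant q r j k ≠ 0 ∨ continuant q r j (k + 1) ≠ 0 := by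
  induction k with
  | zero => left; simp [continuant]
  | succ k ih =>
    by_contra! h
    obtain ⟨h1, h2⟩ := h
    have e : continuant q r j (k + 1 + 1) = q (j + k + 1) * continuant q r j (k + 1)
      + r (j + k + 1) * continuant q r j k := rfl
    rw [e, h1, mul_zero, zero_add] at h2
    rcases mul_eq_zero.1 h2 with h3 | h3
    · exact hr _ h3
    · rcases ih with h4 | h4
      · exact h4 h3
      · exact h4 h1

/-- The products `continuant j k * x (j+k)` obey an affine recursion, contracting once `x` is in
its asymptotic regime. -/
lemma continuant_affine (hx : ∀ n, x n = q n * x (n + 1) + r (n + 1) * x (n + 2)) (j k : ℕ)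
    (hne : x (j + k) ≠ 0) :
    continuant q r j (k + 1) * x (j + (k + 1)) =
      x j + -r (j + k + 1) * x (j + k + 2) / x (j + k) * (continuant q r j k * x (j + k)) := by
  have := continuant_invariant hx j k
  rw [← add_assoc]
  field_simp
  linear_combination -this

/-- For all large `n`, no inner denominator of the `n`-th approximant vanishes. -/
lemma eventually_continuant_ne_zero
    (hx : ∀ n, x n = q n * x (n + 1) + r (n + 1) * x (n + 2))
    (hr : ∀ n, r (n + 1) ≠ 0) (hne : ∀ᶠ n in atTop, x n ≠ 0)
    (hc : Tendsto (fun n => -r (n + 1) * x (n + 2) / x n) atTop (𝓝 (1 / 4))) :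
    ∀ᶠ n in atTop, ∀ j ≤ n, continuant q r j (n + 1 - j) ≠ 0 := by
  have hc3 : ∀ᶠ n in atTop, ‖-r (n + 1) * x (n + 2) / x n‖ ≤ 1 / 3 := by
    refine (hc.norm.eventually_lt_const (u := 1 / 3) ?_).mono fun _ h => h.le
    norm_num
  obtain ⟨J, hJ⟩ := eventually_atTop.1 (hc3.and hne)
  have step : ∀ j k, J ≤ j + k → ‖continuant q r j (k + 1) * x (j + (k + 1)) - x j‖ ≤
      1 / 3 * ‖continuant q r j k * x (j + k)‖ := by
    intro j k hjk
    obtain ⟨h1, h2⟩ := hJ (j + k) hjk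
    rw [continuant_affine hx j k h2, add_sub_cancel_left, norm_mul]
    gcongr
  have nz : ∀ j k, J ≤ j + k → x j ≠ 0 → ‖continuant q r j k * x (j + k)‖ ≤ 2 * ‖x j‖ →
      continuant q r j (k + 1) ≠ 0 := by
    intro j k hjk hj hb h0
    have := step j k hjk
    rw [h0, zero_mul, zero_sub, norm_neg] at this
    have : 0 < ‖x j‖ := norm_pos_iff.2 hj
    linarith
  have stepn : ∀ j k, J ≤ j + k → ‖continuant q r j (k + 1) * x (j + (k + 1))‖ ≤
      ‖x j‖ + 1 / 3 * ‖continuant q r j k * x (j + k)‖ := by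
    intro j k hjk
    have h1 := step j k hjk
    have h2 := norm_add_le (continuant q r j (k + 1) * x (j + (k + 1)) - x j) (x j)
    rw [sub_add_cancel] at h2
    linarith
  -- uniform statement for the starting indices `j ≥ J`
  have large : ∀ j ≥ J, ∀ k, continuant q r j (k + 1) ≠ 0 := by
    intro j hj k
    have hb : ∀ k, ‖continuant q r j k * x (j + k)‖ ≤ 2 * ‖x j‖ := by
      intro k
      induction k with
      | zero => simp only [continuant, one_mul, add_zero]; linarith [norm_nonneg (x j)]
      | succ k ih =>
        have := stepn j k (by omega)
        linarith [norm_nonneg (x j)]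
    exact nz j k (by omega) (hJ j hj).2 (hb k)
  have each : ∀ j, ∀ᶠ k in atTop, continuant q r j k ≠ 0 := by
    intro j
    by_cases hj : x j = 0
    · -- here the recursion is homogeneous, so two consecutive values vanish or none does
      have iff : ∀ k ≥ J, continuant q r j (k + 1) ≠ 0 ↔ continuant q r j k ≠ 0 := by
        intro k hk
        have hinv := continuant_invariant hx j k
        rw [hj] at hinv
        have h1 := (hJ (j + k + 1) (by omega)).2
        have h2 := (hJ (j + k + 2) (by omega)).2
        have h3 := hr (j + k)
        rw [not_iff_not]
        constructor
        · intro h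
          rw [h, zero_mul, zero_add] at hinv
          simpa [h2, h3] using hinv.symm
        · intro h
          rw [h, mul_zero, zero_mul, add_zero] at hinv
          simpa [h1] using hinv.symm
      refine eventually_atTop.2 ⟨J, fun k hk => ?_⟩
      induction k, hk using Nat.le_induction with
      | base =>
        rcases continuant_pair_ne_zero hr (q := q) j J with h | h
        · exact h
        · exact (iff J le_rfl).1 h
      | succ k hk ih => exact (iff k hk).2 ih
    · have hb : ∀ i, ‖continuant q r j (J + i) * x (j + (J + i))‖ ≤
          3 / 2 * ‖x j‖ + (1 / 3) ^ i * ‖continuant q r j J * x (j + J)‖ := by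
        intro i
        induction i with
        | zero => simp
        | succ i ih =>
          have := stepn j (J + i) (by omega)
          rw [pow_succ, ← add_assoc J]
          linarith
      have hsm : ∀ᶠ i : ℕ in atTop,
          (1 / 3 : ℝ) ^ i * ‖continuant q r j J * x (j + J)‖ < 1 / 2 * ‖x j‖ := by
        have : Tendsto (fun i : ℕ => (1 / 3 : ℝ) ^ i * ‖continuant q r j J * x (j + J)‖) atTop
            (𝓝 (0 * ‖continuant q r j J * x (j + J)‖)) :=
          (tendsto_pow_atTop_nhds_zero_of_lt_one (by norm_num) (by norm_num)).mul_const _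
        rw [zero_mul] at this
        refine this.eventually_lt_const ?_
        have : 0 < ‖x j‖ := norm_pos_iff.2 hj
        linarith
      obtain ⟨I, hI⟩ := eventually_atTop.1 hsm
      refine eventually_atTop.2 ⟨J + I + 1, fun k hk => ?_⟩
      obtain ⟨i, rfl⟩ : ∃ i, k = J + i + 1 := ⟨k - J - 1, by omega⟩
      refine nz j (J + i) (by omega) hj ?_
      have := hb i
      have := hI i (by omega)
      linarith
  have fin : ∀ᶠ n in atTop, ∀ j < J, continuant q r j (n + 1 - j) ≠ 0 := by
    have : ∀ᶠ n in atTop, ∀ j ∈ Finset.range J, continuant q r j (n + 1 - j) ≠ 0 := by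
      rw [eventually_all_finset]
      intro j _
      have ht : Tendsto (fun n : ℕ => n + 1 - j) atTop atTop :=
        tendsto_atTop_atTop.2 fun b => ⟨b + j, fun n hn => by omega⟩
      exact ht.eventually (each j)
    simpa using this
  filter_upwards [fin] with n hn j hj
  by_cases h : j < J
  · exact hn j h
  · have := large j (by omega) (n - j)
    rwa [show n - j + 1 = n + 1 - j by omega] at this

/-- Exact error of the approximants of a continued fraction in terms of a solution `x` of its
three-term recurrence (Pincherle). -/
lemma cf_error (hx : ∀ n, x n = q n * x (n + 1) + r (n + 1) * x (n + 2))
    (hx0 : x 0 = 1) (hr0 : r 0 = 1)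
    (hr : ∀ n, r (n + 1) ≠ 0) (hne : ∀ᶠ n in atTop, x n ≠ 0)
    (hc : Tendsto (fun n => -r (n + 1) * x (n + 2) / x n) atTop (𝓝 (1 / 4))) :
    ∀ᶠ n in atTop, continuant q r 0 (n + 1) ≠ 0 ∧ x 1 - cfFrom q r 0 n =
      (∏ i ∈ Finset.range (n + 1), (-r (i + 1))) * x (n + 2) / continuant q r 0 (n + 1) := by
  filter_upwards [eventually_continuant_ne_zero hx hr hne hc, eventually_ge_atTop 1] with n hn hn1
  have h0 := hn 0 (Nat.zero_le n)
  rw [Nat.sub_zero] at h0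
  refine ⟨h0, ?_⟩
  rw [cfFrom_eq_div q r n 0 fun i _ hin => by simpa using hn i hin, hr0, one_mul, zero_add]
  obtain ⟨m, rfl⟩ : ∃ m, n = m + 1 := ⟨n - 1, by omega⟩
  have i0 := continuant_invariant hx 0 (m + 1)
  have i1 := continuant_invariant hx 1 m
  have d := continuant_det q r m
  rw [hx0] at i0
  rw [show 1 + m + 1 = m + 2 by ring, show 1 + m + 2 = m + 3 by ring] at i1
  simp only [zero_add] at i0
  rw [show m + 1 + 1 = m + 2 by ring, show m + 1 + 2 = m + 3 by ring] at *
  rw [Finset.prod_range_succ, show m + 1 + 1 = m + 2 by ring]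
  field_simp
  rw [i1]
  linear_combination (r (m + 2) * x (m + 3)) * d - continuant q r 1 (m + 1) * i0

end Tail

/-! ### Gamma quotients and a contiguity relation for `₃F₂(1)` -/

/-- `z` is not a pole of the Gamma function. -/
def NonPole (z : ℂ) : Prop := ∀ k : ℕ, z ≠ -(k : ℂ)

lemma NonPole.add_nat_ne_zero {z : ℂ} (h : NonPole z) (n : ℕ) : z + n ≠ 0 := fun h0 =>
  h n (eq_neg_of_add_eq_zero_left h0)

lemma NonPole.ne_zero {z : ℂ} (h : NonPole z) : z ≠ 0 := by simpa using h.add_nat_ne_zero 0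

lemma NonPole.add_nat {z : ℂ} (h : NonPole z) (n : ℕ) : NonPole (z + n) := by
  intro k hk
  apply h (n + k)
  push_cast
  linear_combination hk

lemma NonPole.add_one {z : ℂ} (h : NonPole z) : NonPole (z + 1) := by
  simpa using h.add_nat 1

lemma NonPole.gamma_ne_zero {z : ℂ} (h : NonPole z) : Gamma z ≠ 0 := Complex.Gamma_ne_zero h

lemma nonPole_of_re_pos {z : ℂ} (h : 0 < z.re) : NonPole z := by
  intro k hk
  rw [hk] at h
  have : (0 : ℝ) ≤ k := k.cast_nonneg
  simp at h
  linarith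

lemma Gamma_add_natCast {z : ℂ} (hz : NonPole z) (n : ℕ) :
    Gamma (z + n) = Gamma z * ∏ j ∈ Finset.range n, (z + j) := by
  induction n with
  | zero => simp
  | succ n ih =>
    rw [Finset.prod_range_succ, ← mul_assoc, ← ih]
    push_cast
    rw [← add_assoc, Gamma_add_one _ (hz.add_nat_ne_zero n), mul_comm]

/-- The quotient `Γ(z+n) / (Γ(n) n^z)`. -/
noncomputable def gammaQuot (z : ℂ) (n : ℕ) : ℂ := Gamma (z + n) / (Gamma n * (n : ℂ) ^ z)

lemma Gamma_natCast_ne_zero {n : ℕ} (hn : n ≠ 0) : Gamma (n : ℂ) ≠ 0 :=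
  (nonPole_of_re_pos (by simpa using Nat.pos_of_ne_zero hn)).gamma_ne_zero

lemma natCast_cpow_ne_zero {n : ℕ} (hn : n ≠ 0) (z : ℂ) : (n : ℂ) ^ z ≠ 0 := by
  rw [Ne, cpow_eq_zero_iff]
  simp [hn]

lemma Gamma_eq_gammaQuot (z : ℂ) {n : ℕ} (hn : n ≠ 0) :
    Gamma (z + n) = gammaQuot z n * (Gamma n * (n : ℂ) ^ z) := by
  rw [gammaQuot, div_mul_cancel₀]
  exact mul_ne_zero (Gamma_natCast_ne_zero hn) (natCast_cpow_ne_zero hn z)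

lemma tendsto_gammaQuot {z : ℂ} (hz : NonPole z) :
    Tendsto (gammaQuot z) atTop (𝓝 1) := by
  have h1 : Tendsto (fun n : ℕ => Gamma z / GammaSeq z n * ((n : ℂ) / (z + n))) atTop
      (𝓝 (Gamma z / Gamma z * 1)) := by
    refine (tendsto_const_nhds.div (GammaSeq_tendsto_Gamma z) hz.gamma_ne_zero).mul ?_
    have : Expand1 (fun n : ℕ => 1 / (1 + z / n)) (1 / 1) (0 / 1 - 1 * z / 1 ^ 2) :=
      (expand1_const 1).div (expand1_linear 1 z) one_ne_zero
    have h2 := this.expand0.tendsto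
    rw [div_one] at h2
    refine h2.congr' ?_
    filter_upwards [eventually_ne_atTop 0] with n hn
    have hn' : (n : ℂ) ≠ 0 := by exact_mod_cast hn
    have := hz.add_nat_ne_zero n
    rw [show 1 + z / n = (z + n) / n by rw [add_div, div_self hn', add_comm], one_div_div]
  rw [div_self hz.gamma_ne_zero, mul_one] at h1
  refine h1.congr' ?_
  filter_upwards [eventually_ne_atTop 0] with n hn
  obtain ⟨m, rfl⟩ : ∃ m, n = m + 1 := ⟨n - 1, by omega⟩
  have h2 := Gamma_add_natCast hz (m + 1)
  have hprod : ∏ j ∈ Finset.range (m + 1), (z + j) ≠ 0 :=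
    Finset.prod_ne_zero_iff.2 fun j _ => hz.add_nat_ne_zero j
  have h3 := hz.add_nat_ne_zero (m + 1)
  have h4 := natCast_cpow_ne_zero hn z
  have h5 : Gamma ((m + 1 : ℕ) : ℂ) = (m.factorial : ℂ) := by
    push_cast; exact Gamma_nat_eq_factorial m
  have h6 : (m.factorial : ℂ) ≠ 0 := by exact_mod_cast m.factorial_ne_zero
  have h7 : ((m + 1 : ℕ) : ℂ) ≠ 0 := by exact_mod_cast hn
  rw [gammaQuot, h2, h5, GammaSeq, Finset.prod_range_succ, Nat.factorial_succ, Nat.cast_mul]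
  field_simp

lemma natCast_succ_cpow (z : ℂ) {n : ℕ} (hn : n ≠ 0) :
    ((n + 1 : ℕ) : ℂ) ^ z = (n : ℂ) ^ z * (1 + 1 / (n : ℂ)) ^ z := by
  have hn0 : (0 : ℝ) < n := by exact_mod_cast Nat.pos_of_ne_zero hn
  have h := mul_cpow_ofReal_nonneg hn0.le (by positivity : (0 : ℝ) ≤ 1 + 1 / n) z
  push_cast at h
  rw [← h]
  congr 1
  have : (n : ℂ) ≠ 0 := by exact_mod_cast hn
  push_cast
  field_simp

lemma expand0_gammaQuot {z : ℂ} (hz : NonPole z) : Expand0 (gammaQuot z) 1 := by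
  have hg : Expand1 (fun n : ℕ => (1 + z / (n : ℂ)) * ((1 + 1 / (n : ℂ)) ^ z)⁻¹) 1 0 := by
    have := (expand1_linear 1 z).mul ((expand1_one_add_inv_cpow z).inv one_ne_zero)
    convert this using 1 <;> simp
  refine expand0_of_ratio (tendsto_gammaQuot hz) hg ?_
  filter_upwards [eventually_ne_atTop 0] with n hn
  have hn' : (n : ℂ) ≠ 0 := by exact_mod_cast hn
  have h4 := natCast_cpow_ne_zero hn z
  have h5 := Gamma_natCast_ne_zero hn
  have e1 := natCast_succ_cpow z hn
  have h6 : (1 + 1 / (n : ℂ)) ^ z ≠ 0 := by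
    intro h
    rw [h, mul_zero] at e1
    exact natCast_cpow_ne_zero n.succ_ne_zero z e1
  rw [gammaQuot, gammaQuot, e1]
  push_cast
  rw [← add_assoc, Gamma_add_one _ (hz.add_nat_ne_zero n), Gamma_add_one _ hn']
  field_simp
  ring

/-- Asymptotics of the central binomial coefficient, in Gamma form, from the duplication
formula. -/
lemma expand0_gamma_sq_div :
    Expand0 (fun n : ℕ => Gamma n ^ 2 / Gamma ((2 * n : ℕ) : ℂ) *
      ((2 : ℂ) ^ (2 * n) * (n : ℂ) ^ (1 / 2 : ℂ))) (2 * (Real.sqrt Real.pi : ℂ)) := by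
  have hp : NonPole (1 / 2 : ℂ) := nonPole_of_re_pos (by norm_num)
  have h1 := ((expand0_gammaQuot hp).inv one_ne_zero).mul
    (expand0_const (2 * (Real.sqrt Real.pi : ℂ)))
  rw [inv_one, one_mul] at h1
  refine h1.congr ?_
  filter_upwards [eventually_ne_atTop 0] with n hn
  have hn' : (n : ℂ) ≠ 0 := by exact_mod_cast hn
  have h4 := natCast_cpow_ne_zero hn (1 / 2)
  have h5 := Gamma_natCast_ne_zero hn
  have h6 := Gamma_natCast_ne_zero (n := 2 * n) (by omega)
  have h7 : Gamma (1 / 2 + (n : ℂ)) ≠ 0 := (hp.add_nat n).gamma_ne_zero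
  have hd := Gamma_mul_Gamma_add_half (n : ℂ)
  have h2 : (2 : ℂ) ^ (1 - 2 * (n : ℂ)) = 2 / 2 ^ (2 * n) := by
    rw [cpow_sub _ _ two_ne_zero, cpow_one]
    congr 1
    rw [← cpow_natCast]
    push_cast; rfl
  rw [h2, add_comm (n : ℂ)] at hd
  push_cast at h6 ⊢
  have h8 : (2 : ℂ) ^ (2 * n) ≠ 0 := pow_ne_zero _ two_ne_zero
  rw [gammaQuot]
  generalize Gamma (1 / 2 + (n : ℂ)) = G at *
  generalize Gamma (2 * (n : ℂ)) = H at *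
  generalize (n : ℂ) ^ (1 / 2 : ℂ) = P at *
  field_simp at hd ⊢
  linear_combination -hd

/-- The `j`-th term of the (Gamma-normalised) series `₃F₂(α₀,α₁,α₂;β₁,β₂)` at argument `1`. -/
noncomputable def hyp (α0 α1 α2 β1 β2 : ℂ) (j : ℕ) : ℂ :=
  Gamma (α0 + j) * Gamma (α1 + j) * Gamma (α2 + j) /
    (Gamma (β1 + j) * Gamma (β2 + j) * (j.factorial : ℂ))

section Hyp

variable {α0 α1 α2 β1 β2 : ℂ}

lemma tendsto_hyp (h0 : NonPole α0) (h1 : NonPole α1) (h2 : NonPole α2) (h3 : NonPole β1)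
    (h4 : NonPole β2) {s : ℂ} (hs : s = β1 + β2 - α0 - α1 - α2) :
    Tendsto (fun j : ℕ => hyp α0 α1 α2 β1 β2 j * (j : ℂ) ^ (s + 1)) atTop (𝓝 1) := by
  have := (((tendsto_gammaQuot h0).mul (tendsto_gammaQuot h1)).mul (tendsto_gammaQuot h2)).div
    ((tendsto_gammaQuot h3).mul (tendsto_gammaQuot h4)) (by simp)
  simp only [mul_one, div_one] at this
  refine this.congr' ?_
  filter_upwards [eventually_ne_atTop 0] with j hj
  have hj' : (j : ℂ) ≠ 0 := by exact_mod_cast hj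
  have hf : (j.factorial : ℂ) = j * Gamma (j : ℂ) := by
    rw [← Gamma_add_one _ hj', Gamma_nat_eq_factorial]
  have e1 := (h3.add_nat j).gamma_ne_zero
  have e2 := (h4.add_nat j).gamma_ne_zero
  have e5 := Gamma_natCast_ne_zero hj
  have hpow : (j : ℂ) ^ (s + 1) * ((j : ℂ) ^ α0 * (j : ℂ) ^ α1 * (j : ℂ) ^ α2) =
      (j : ℂ) ^ β1 * (j : ℂ) ^ β2 * j := by
    rw [← cpow_add _ _ hj', ← cpow_add _ _ hj', ← cpow_add _ _ hj', ← cpow_add _ _ hj']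
    nth_rw 3 [← cpow_one (j : ℂ)]
    rw [← cpow_add _ _ hj']
    congr 1
    rw [hs]; ring
  have c0 := natCast_cpow_ne_zero hj α0
  have c1 := natCast_cpow_ne_zero hj α1
  have c2 := natCast_cpow_ne_zero hj α2
  have c3 := natCast_cpow_ne_zero hj β1
  have c4 := natCast_cpow_ne_zero hj β2
  have e : (j : ℂ) ^ (s + 1) = (j : ℂ) ^ β1 * (j : ℂ) ^ β2 * j /
      ((j : ℂ) ^ α0 * (j : ℂ) ^ α1 * (j : ℂ) ^ α2) := by
    rw [← hpow]; field_simp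
  simp only [Pi.div_apply]
  rw [hyp, hf, e]
  simp only [gammaQuot]
  field_simp

lemma hyp_norm_le (h0 : NonPole α0) (h1 : NonPole α1) (h2 : NonPole α2) (h3 : NonPole β1)
    (h4 : NonPole β2) {s : ℂ} (hs : s = β1 + β2 - α0 - α1 - α2) :
    ∃ C : ℝ, 0 < C ∧ ∀ j : ℕ, j ≠ 0 → ‖hyp α0 α1 α2 β1 β2 j‖ ≤ C * (j : ℝ) ^ (-(s.re + 1)) := by
  obtain ⟨C, hC⟩ := (tendsto_hyp h0 h1 h2 h3 h4 hs).norm.bddAbove_range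
  refine ⟨max C 1, by positivity, fun j hj => ?_⟩
  have h := hC ⟨j, rfl⟩
  have hj0 : (0 : ℝ) < j := by exact_mod_cast Nat.pos_of_ne_zero hj
  dsimp only at h
  rw [norm_mul, norm_natCast_cpow_of_pos (Nat.pos_of_ne_zero hj)] at h
  rw [Real.rpow_neg hj0.le, ← div_eq_mul_inv, le_div_iff₀ (by positivity)]
  simpa using h.trans (le_max_left C 1)

lemma summable_norm_hyp (h0 : NonPole α0) (h1 : NonPole α1) (h2 : NonPole α2) (h3 : NonPole β1)
    (h4 : NonPole β2) (hs : 0 < (β1 + β2 - α0 - α1 - α2).re) :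
    Summable (fun j => ‖hyp α0 α1 α2 β1 β2 j‖) := by
  obtain ⟨C, hC0, hC⟩ := hyp_norm_le h0 h1 h2 h3 h4 rfl
  rw [← summable_nat_add_iff 1]
  have hsum := ((Real.summable_nat_rpow (p := -((β1 + β2 - α0 - α1 - α2).re + 1))).2
    (by linarith)).mul_left C
  refine Summable.of_nonneg_of_le (fun _ => norm_nonneg _) (fun j => hC (j + 1) (by omega))
    ((summable_nat_add_iff 1).2 hsum)

/-- Raising all parameters but `α₀` shifts the series by one index, up to a rational factor. -/
lemma hyp_shift (h0 : NonPole α0) (j : ℕ) :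
    hyp α0 (α1 + 1) (α2 + 1) (β1 + 1) (β2 + 1) j =
      hyp α0 α1 α2 β1 β2 (j + 1) * (((j : ℂ) + 1) / (α0 + j)) := by
  have e : ∀ z : ℂ, z + ((j + 1 : ℕ) : ℂ) = z + 1 + j := fun z => by push_cast; ring
  simp only [hyp, e]
  have h := h0.add_nat_ne_zero j
  have hg := (h0.add_nat j).gamma_ne_zero
  rw [show α0 + 1 + (j : ℂ) = α0 + j + 1 by ring, Gamma_add_one _ h, Nat.factorial_succ]
  have : (j : ℂ) + 1 ≠ 0 := by exact_mod_cast j.succ_ne_zero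
  push_cast
  field_simp

/-- Contiguity relation between `₃F₂(α₀,α₁,α₂;β₁,β₂)` and its two successors; the partial sums
telescope, with certificate `α₀ j t_j` for `t_j` the `j`-th term of the first series. -/
lemma hyp_contiguous (h0 : NonPole α0) (h1 : NonPole α1) (h2 : NonPole α2) (h3 : NonPole β1)
    (h4 : NonPole β2) (hs : 0 < (β1 + β2 - α0 - α1 - α2).re) :
    α0 * α1 * ∑' j, hyp α0 α1 α2 β1 β2 j =
      (β1 * β2 - α0 * α2) * ∑' j, hyp (α0 + 1) (α1 + 1) α2 (β1 + 1) (β2 + 1) j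
      - (β1 - α0) * (β2 - α0) *
        ∑' j, hyp (α0 + 1) (α1 + 2) (α2 + 1) (β1 + 2) (β2 + 2) j := by
  have two : ∀ z : ℂ, z + 2 = z + 1 + 1 := fun z => by ring
  have cur : ∀ j : ℕ, hyp (α0 + 1) (α1 + 1) α2 (β1 + 1) (β2 + 1) j =
      hyp α0 α1 α2 β1 β2 j * ((α0 + j) * (α1 + j) / ((β1 + j) * (β2 + j))) := by
    intro j
    simp only [hyp]
    rw [add_right_comm α0, add_right_comm α1, add_right_comm β1, add_right_comm β2,
      Gamma_add_one _ (h0.add_nat_ne_zero j), Gamma_add_one _ (h1.add_nat_ne_zero j),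
      Gamma_add_one _ (h3.add_nat_ne_zero j), Gamma_add_one _ (h4.add_nat_ne_zero j)]
    have := (h3.add_nat j).gamma_ne_zero
    have := (h4.add_nat j).gamma_ne_zero
    have := h3.add_nat_ne_zero j
    have := h4.add_nat_ne_zero j
    field_simp
  have succ : ∀ j : ℕ, hyp α0 α1 α2 β1 β2 (j + 1) = hyp α0 α1 α2 β1 β2 j *
      ((α0 + j) * (α1 + j) * (α2 + j) / ((β1 + j) * (β2 + j) * (j + 1))) := by
    intro j
    simp only [hyp]
    push_cast
    simp only [← add_assoc]
    rw [Gamma_add_one _ (h0.add_nat_ne_zero j), Gamma_add_one _ (h1.add_nat_ne_zero j),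
      Gamma_add_one _ (h2.add_nat_ne_zero j), Nat.factorial_succ,
      Gamma_add_one _ (h3.add_nat_ne_zero j), Gamma_add_one _ (h4.add_nat_ne_zero j)]
    have := (h3.add_nat j).gamma_ne_zero
    have := (h4.add_nat j).gamma_ne_zero
    have := h3.add_nat_ne_zero j
    have := h4.add_nat_ne_zero j
    have : (j : ℂ) + 1 ≠ 0 := by exact_mod_cast j.succ_ne_zero
    have : (j.factorial : ℂ) ≠ 0 := by exact_mod_cast j.factorial_ne_zero
    push_cast
    field_simp
  have next : ∀ j : ℕ, hyp (α0 + 1) (α1 + 2) (α2 + 1) (β1 + 2) (β2 + 2) j =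
      hyp α0 α1 α2 β1 β2 (j + 1) * (((j : ℂ) + 1) * (α1 + (j + 1)) /
        ((β1 + (j + 1)) * (β2 + (j + 1)))) := by
    intro j
    simp only [two]
    rw [hyp_shift h0.add_one, cur]
    have e0 := h0.add_nat_ne_zero (j + 1)
    have e1 := h3.add_nat_ne_zero (j + 1)
    have e2 := h4.add_nat_ne_zero (j + 1)
    push_cast at e0 e1 e2 ⊢
    rw [show α0 + 1 + (j : ℂ) = α0 + (j + 1) by ring]
    field_simp
  have part : ∀ N : ℕ, α0 * α1 * ∑ j ∈ Finset.range (N + 1), hyp α0 α1 α2 β1 β2 j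
      - (β1 * β2 - α0 * α2) *
        ∑ j ∈ Finset.range (N + 1), hyp (α0 + 1) (α1 + 1) α2 (β1 + 1) (β2 + 1) j
      + (β1 - α0) * (β2 - α0) *
        ∑ j ∈ Finset.range N, hyp (α0 + 1) (α1 + 2) (α2 + 1) (β1 + 2) (β2 + 2) j =
      α0 * ((N + 1 : ℕ) * hyp α0 α1 α2 β1 β2 (N + 1)) := by
    intro N
    induction N with
    | zero =>
      have e1 := h3.ne_zero
      have e2 := h4.ne_zero
      simp only [zero_add, Finset.sum_range_one, Finset.sum_range_zero, mul_zero, add_zero,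
        cur]
      have := succ 0
      simp only [zero_add, Nat.cast_zero, add_zero] at this
      rw [this]
      simp only [Nat.cast_zero, add_zero, Nat.cast_one]
      field_simp
      ring
    | succ N ih =>
      rw [Finset.sum_range_succ, Finset.sum_range_succ _ (N + 1), Finset.sum_range_succ
          (fun j => hyp (α0 + 1) (α1 + 2) (α2 + 1) (β1 + 2) (β2 + 2) j) N,
        cur, next, succ (N + 1)]
      have e1 := h3.add_nat_ne_zero (N + 1)
      have e2 := h4.add_nat_ne_zero (N + 1)
      have e3 : ((N : ℂ) + 1 + 1) ≠ 0 := by exact_mod_cast (N + 1).succ_ne_zero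
      push_cast at e1 e2 ih ⊢
      have key : α0 * α1 * hyp α0 α1 α2 β1 β2 (N + 1)
        - (β1 * β2 - α0 * α2) * (hyp α0 α1 α2 β1 β2 (N + 1) *
          ((α0 + (N + 1)) * (α1 + (N + 1)) / ((β1 + (N + 1)) * (β2 + (N + 1)))))
        + (β1 - α0) * (β2 - α0) * (hyp α0 α1 α2 β1 β2 (N + 1) * (((N : ℂ) + 1) * (α1 + (N + 1)) /
          ((β1 + (N + 1)) * (β2 + (N + 1)))))
        = α0 * (((N : ℂ) + 1 + 1) * (hyp α0 α1 α2 β1 β2 (N + 1) *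
          ((α0 + (N + 1)) * (α1 + (N + 1)) * (α2 + (N + 1)) /
            ((β1 + (N + 1)) * (β2 + (N + 1)) * (N + 1 + 1)))))
          - α0 * (((N : ℂ) + 1) * hyp α0 α1 α2 β1 β2 (N + 1)) := by
        field_simp
        ring
      linear_combination ih + key
  have sre : (0 : ℝ) < (β1 + 1 + (β2 + 1) - (α0 + 1) - (α1 + 1) - α2).re := by
    convert hs using 2; ring
  have sre2 : (0 : ℝ) < (β1 + 2 + (β2 + 2) - (α0 + 1) - (α1 + 2) - (α2 + 1)).re := by
    convert hs using 2; ring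
  have n2 : ∀ {z : ℂ}, NonPole z → NonPole (z + 2) := fun h => by simpa using h.add_nat 2
  have S0 := (summable_norm_hyp h0 h1 h2 h3 h4 hs).of_norm.hasSum.tendsto_sum_nat
  have S1 := (summable_norm_hyp h0.add_one h1.add_one h2 h3.add_one h4.add_one
    sre).of_norm.hasSum.tendsto_sum_nat
  have S2 := (summable_norm_hyp h0.add_one (n2 h1) h2.add_one (n2 h3) (n2 h4)
    sre2).of_norm.hasSum.tendsto_sum_nat
  have L := (((((tendsto_add_atTop_iff_nat 1).2 S0).const_mul (α0 * α1)).sub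
    (((tendsto_add_atTop_iff_nat 1).2 S1).const_mul (β1 * β2 - α0 * α2))).add
    (S2.const_mul ((β1 - α0) * (β2 - α0))))
  have Z : Tendsto (fun N : ℕ => α0 * ((N + 1 : ℕ) * hyp α0 α1 α2 β1 β2 (N + 1))) atTop
      (𝓝 0) := by
    rw [← mul_zero α0]
    refine Tendsto.const_mul α0 ?_
    rw [tendsto_add_atTop_iff_nat (f := fun N : ℕ => (N : ℂ) * hyp α0 α1 α2 β1 β2 N) 1]
    obtain ⟨C, hC0, hC⟩ := hyp_norm_le h0 h1 h2 h3 h4 rfl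
    refine squeeze_zero_norm' (a := fun N : ℕ => C * (N : ℝ) ^ (-(β1 + β2 - α0 - α1 - α2).re))
      ?_ ?_
    · filter_upwards [eventually_ne_atTop 0] with N hN
      have hN0 : (0 : ℝ) < N := by exact_mod_cast Nat.pos_of_ne_zero hN
      rw [norm_mul, Complex.norm_natCast]
      refine (mul_le_mul_of_nonneg_left (hC N hN) hN0.le).trans_eq ?_
      rw [neg_add, Real.rpow_add hN0, Real.rpow_neg_one]
      field_simp
    · have := ((tendsto_rpow_neg_atTop hs).comp tendsto_natCast_atTop_atTop).const_mul C
      rw [mul_zero] at this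
      exact this
  have := tendsto_nhds_unique (L.congr part) Z
  linear_combination this

end Hyp

/-! ### The contiguous chain and its three-term recurrence -/

/-- The standing assumptions on the parameters of the series. -/
structure Params (a1 a2 b1 b2 : ℂ) : Prop where
  na1 : NonPole a1
  na2 : NonPole a2
  nb1 : NonPole b1
  nb2 : NonPole b2
  b1a1 : NonPole (b1 - a1)
  b1a2 : NonPole (b1 - a2)
  b2a1 : NonPole (b2 - a1)
  b2a2 : NonPole (b2 - a2)
  s : 0 < (b1 + b2 - a1 - a2 - 1).re

lemma nonPole_one : NonPole 1 := nonPole_of_re_pos (by norm_num)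

/-- The terms of the `n`-th series of the contiguous chain. Each step raises both lower parameters
and, cyclically, all upper parameters but one by `1`; after `n` steps the upper parameter number
`i` has grown by `⌊(2n+i)/3⌋`. -/
noncomputable def cfTerm (a1 a2 b1 b2 : ℂ) (n : ℕ) (j : ℕ) : ℂ :=
  hyp (1 + (2 * n / 3 : ℕ)) (a1 + ((2 * n + 1) / 3 : ℕ)) (a2 + ((2 * n + 2) / 3 : ℕ))
    (b1 + n) (b2 + n) j

/-- The sum of the `n`-th series of the contiguous chain. -/
noncomputable def cfPhi (a1 a2 b1 b2 : ℂ) (n : ℕ) : ℂ := ∑' j, cfTerm a1 a2 b1 b2 n j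

/-- The factor turning the Gamma-normalised series into the Pochhammer-normalised one. -/
noncomputable def cfNorm (a1 a2 b1 b2 : ℂ) : ℂ :=
  Gamma b1 * Gamma b2 / (Gamma a1 * Gamma a2)

/-- The solution of the three-term recurrence attached to the continued fraction that is built
from the contiguous chain. -/
noncomputable def cfSol (a1 a2 b1 b2 : ℂ) : ℕ → ℂ
  | 0 => 1
  | n + 1 => cfNorm a1 a2 b1 b2 * cfPhi a1 a2 b1 b2 n

section Chain

variable {a1 a2 b1 b2 : ℂ}

lemma cfq_three_mul (m : ℕ) : cfq a1 a2 b1 b2 (3 * m) = cfq0 a1 a2 b1 b2 m := by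
  rw [cfq, if_pos (by omega)]; congr 1; omega
lemma cfq_three_mul_add_one (m : ℕ) : cfq a1 a2 b1 b2 (3 * m + 1) = cfq1 a1 a2 b1 b2 m := by
  rw [cfq, if_neg (by omega), if_pos (by omega)]; congr 1; omega
lemma cfq_three_mul_add_two (m : ℕ) : cfq a1 a2 b1 b2 (3 * m + 2) = cfq2 a1 a2 b1 b2 m := by
  rw [cfq, if_neg (by omega), if_neg (by omega)]; congr 1; omega
lemma cfr_three_mul (m : ℕ) : cfr a1 a2 b1 b2 (3 * m) = cfr0 a1 a2 b1 b2 m := by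
  rw [cfr, if_pos (by omega)]; congr 1; omega
lemma cfr_three_mul_add_one (m : ℕ) : cfr a1 a2 b1 b2 (3 * m + 1) = cfr1 a1 a2 b1 b2 m := by
  rw [cfr, if_neg (by omega), if_pos (by omega)]; congr 1; omega
lemma cfr_three_mul_add_two (m : ℕ) : cfr a1 a2 b1 b2 (3 * m + 2) = cfr2 a1 a2 b1 b2 m := by
  rw [cfr, if_neg (by omega), if_neg (by omega)]; congr 1; omega

lemma cfTerm_three_mul (m j : ℕ) : cfTerm a1 a2 b1 b2 (3 * m) j =
    hyp (1 + (2 * m : ℕ)) (a1 + (2 * m : ℕ)) (a2 + (2 * m : ℕ))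
      (b1 + (3 * m : ℕ)) (b2 + (3 * m : ℕ)) j := by
  rw [cfTerm, show 2 * (3 * m) / 3 = 2 * m by omega, show (2 * (3 * m) + 1) / 3 = 2 * m by omega,
    show (2 * (3 * m) + 2) / 3 = 2 * m by omega]

lemma cfTerm_three_mul_add_one (m j : ℕ) : cfTerm a1 a2 b1 b2 (3 * m + 1) j =
    hyp (1 + (2 * m : ℕ)) (a1 + (2 * m + 1 : ℕ)) (a2 + (2 * m + 1 : ℕ))
      (b1 + (3 * m + 1 : ℕ)) (b2 + (3 * m + 1 : ℕ)) j := by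
  rw [cfTerm, show 2 * (3 * m + 1) / 3 = 2 * m by omega,
    show (2 * (3 * m + 1) + 1) / 3 = 2 * m + 1 by omega,
    show (2 * (3 * m + 1) + 2) / 3 = 2 * m + 1 by omega]

lemma cfTerm_three_mul_add_two (m j : ℕ) : cfTerm a1 a2 b1 b2 (3 * m + 2) j =
    hyp (1 + (2 * m + 1 : ℕ)) (a1 + (2 * m + 1 : ℕ)) (a2 + (2 * m + 2 : ℕ))
      (b1 + (3 * m + 2 : ℕ)) (b2 + (3 * m + 2 : ℕ)) j := by
  rw [cfTerm, show 2 * (3 * m + 2) / 3 = 2 * m + 1 by omega,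
    show (2 * (3 * m + 2) + 1) / 3 = 2 * m + 1 by omega,
    show (2 * (3 * m + 2) + 2) / 3 = 2 * m + 2 by omega]

/-- All series of the chain have the same parametric excess. -/
lemma cfExponent (n : ℕ) : b1 + b2 - a1 - a2 - 1 = (b1 + n) + (b2 + n) - (1 + (2 * n / 3 : ℕ)) -
    (a1 + ((2 * n + 1) / 3 : ℕ)) - (a2 + ((2 * n + 2) / 3 : ℕ)) := by
  have h : 2 * n / 3 + (2 * n + 1) / 3 + (2 * n + 2) / 3 = 2 * n := by
    have : n % 3 < 3 := Nat.mod_lt _ (by norm_num)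
    interval_cases h : n % 3 <;> omega
  have h' : ((2 * n / 3 : ℕ) : ℂ) + ((2 * n + 1) / 3 : ℕ) + ((2 * n + 2) / 3 : ℕ) =
    2 * (n : ℂ) := by exact_mod_cast h
  linear_combination h'

lemma Params.summable_norm (hp : Params a1 a2 b1 b2) (n : ℕ) :
    Summable (fun j => ‖cfTerm a1 a2 b1 b2 n j‖) := by
  refine summable_norm_hyp (nonPole_one.add_nat _) (hp.na1.add_nat _) (hp.na2.add_nat _)
    (hp.nb1.add_nat _) (hp.nb2.add_nat _) ?_
  rw [← cfExponent]
  exact hp.s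

lemma hyp_rotate (α0 α1 α2 β1 β2 : ℂ) (j : ℕ) :
    hyp α0 α1 α2 β1 β2 j = hyp α1 α2 α0 β1 β2 j := by
  simp only [hyp]; congr 1; ring

lemma Params.phi_rec_two (hp : Params a1 a2 b1 b2) (m : ℕ) :
    (2 * m + 2) * (2 * m + a1 + 1) * cfPhi a1 a2 b1 b2 (3 * m + 2) =
      ((3 * m + b1 + 2) * (3 * m + b2 + 2) - (2 * m + 2) * (2 * m + a2 + 2)) *
        cfPhi a1 a2 b1 b2 (3 * m + 3)
      - (m + b1) * (m + b2) * cfPhi a1 a2 b1 b2 (3 * m + 4) := by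
  have h := hyp_contiguous (nonPole_one.add_nat (2 * m + 1)) (hp.na1.add_nat (2 * m + 1))
    (hp.na2.add_nat (2 * m + 2)) (hp.nb1.add_nat (3 * m + 2)) (hp.nb2.add_nat (3 * m + 2))
    (by convert hp.s using 2; push_cast; ring)
  have e0 : ∀ j, cfTerm a1 a2 b1 b2 (3 * m + 3) j = _ := fun j => cfTerm_three_mul (m + 1) j
  have e1 : ∀ j, cfTerm a1 a2 b1 b2 (3 * m + 4) j = _ :=
    fun j => cfTerm_three_mul_add_one (m + 1) j
  simp only [cfPhi, e0, e1, cfTerm_three_mul_add_two]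
  push_cast at h ⊢
  ring_nf at h ⊢
  linear_combination h

lemma Params.phi_rec_zero (hp : Params a1 a2 b1 b2) (m : ℕ) :
    (2 * m + a1) * (2 * m + a2) * cfPhi a1 a2 b1 b2 (3 * m) =
      ((3 * m + b1) * (3 * m + b2) - (2 * m + 1) * (2 * m + a1)) *
        cfPhi a1 a2 b1 b2 (3 * m + 1)
      - (m + b1 - a1) * (m + b2 - a1) * cfPhi a1 a2 b1 b2 (3 * m + 2) := by
  have h := hyp_contiguous (hp.na1.add_nat (2 * m)) (hp.na2.add_nat (2 * m))
    (nonPole_one.add_nat (2 * m)) (hp.nb1.add_nat (3 * m)) (hp.nb2.add_nat (3 * m))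
    (by convert hp.s using 2; push_cast; ring)
  simp only [cfPhi, cfTerm_three_mul, cfTerm_three_mul_add_one, cfTerm_three_mul_add_two,
    hyp_rotate (1 + _)]
  push_cast at h ⊢
  ring_nf at h ⊢
  linear_combination h

lemma Params.phi_rec_one (hp : Params a1 a2 b1 b2) (m : ℕ) :
    (2 * m + 1) * (2 * m + a2 + 1) * cfPhi a1 a2 b1 b2 (3 * m + 1) =
      ((3 * m + b1 + 1) * (3 * m + b2 + 1) - (2 * m + a1 + 1) * (2 * m + a2 + 1)) *
        cfPhi a1 a2 b1 b2 (3 * m + 2)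
      - (m + b1 - a2) * (m + b2 - a2) * cfPhi a1 a2 b1 b2 (3 * m + 3) := by
  have h := hyp_contiguous (hp.na2.add_nat (2 * m + 1)) (nonPole_one.add_nat (2 * m))
    (hp.na1.add_nat (2 * m + 1)) (hp.nb1.add_nat (3 * m + 1)) (hp.nb2.add_nat (3 * m + 1))
    (by convert hp.s using 2; push_cast; ring)
  have e0 : ∀ j, cfTerm a1 a2 b1 b2 (3 * m + 3) j = _ := fun j => cfTerm_three_mul (m + 1) j
  simp only [cfPhi, e0, cfTerm_three_mul_add_one, cfTerm_three_mul_add_two,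
    fun x y z w : ℂ => hyp_rotate (1 + x) y z w, fun x y z w : ℂ => hyp_rotate (a1 + x) y z w]
  push_cast at h ⊢
  ring_nf at h ⊢
  linear_combination h

lemma Params.cfNorm_mul_cfTerm_zero (hp : Params a1 a2 b1 b2) :
    cfNorm a1 a2 b1 b2 * cfTerm a1 a2 b1 b2 0 0 = 1 := by
  have := hp.na1.gamma_ne_zero
  have := hp.na2.gamma_ne_zero
  have := hp.nb1.gamma_ne_zero
  have := hp.nb2.gamma_ne_zero
  simp [cfNorm, cfTerm, hyp]
  field_simp

lemma Params.cfSol_one (hp : Params a1 a2 b1 b2) :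
    cfSol a1 a2 b1 b2 1 = threeF2one a1 a2 b1 b2 := by
  rw [cfSol, cfPhi, threeF2one, ← tsum_mul_left]
  refine tsum_congr fun j => ?_
  have := hp.na1.gamma_ne_zero
  have := hp.na2.gamma_ne_zero
  have := hp.nb1.gamma_ne_zero
  have := hp.nb2.gamma_ne_zero
  have := (hp.nb1.add_nat j).gamma_ne_zero
  have := (hp.nb2.add_nat j).gamma_ne_zero
  have : (j.factorial : ℂ) ≠ 0 := by exact_mod_cast j.factorial_ne_zero
  simp only [cfNorm, cfTerm, hyp, mul_zero, Nat.zero_div, Nat.cast_zero, add_zero, zero_add,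
    show 1 / 3 = 0 from rfl]
  rw [add_comm (1 : ℂ), Gamma_nat_eq_factorial]
  field_simp

lemma two_mul_add_ne_zero {z : ℂ} (hz : NonPole z) (m : ℕ) : 2 * (m : ℂ) + z ≠ 0 := by
  have := hz.add_nat_ne_zero (2 * m)
  rw [add_comm]
  push_cast at this
  exact this

lemma rec_of_mul_eq {D Q R x y z : ℂ} (hD : D ≠ 0) (h : D * x = Q * y - R * z) (G : ℂ) :
    G * x = Q / D * (G * y) + -R / D * (G * z) := by
  field_simp
  linear_combination G * h

/-- The chain solves the three-term recurrence of the continued fraction. -/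
lemma Params.cfSol_rec (hp : Params a1 a2 b1 b2) (n : ℕ) :
    cfSol a1 a2 b1 b2 n = cfq a1 a2 b1 b2 n * cfSol a1 a2 b1 b2 (n + 1) +
      cfr a1 a2 b1 b2 (n + 1) * cfSol a1 a2 b1 b2 (n + 2) := by
  obtain ⟨m, rfl | rfl | rfl⟩ : ∃ m, n = 3 * m ∨ n = 3 * m + 1 ∨ n = 3 * m + 2 :=
    ⟨n / 3, by omega⟩
  · cases m with
    | zero =>
      rw [cfq_three_mul, cfr_three_mul_add_one]
      simp only [cfq0, cfr1, if_true, cfSol]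
      rw [cfPhi, (hp.summable_norm 0).of_norm.tsum_eq_zero_add, mul_add,
        hp.cfNorm_mul_cfTerm_zero, cfPhi]
      have : ∀ j, cfTerm a1 a2 b1 b2 1 j = cfTerm a1 a2 b1 b2 0 (j + 1) := by
        intro j
        have h1 := cfTerm_three_mul_add_one (a1 := a1) (a2 := a2) (b1 := b1) (b2 := b2) 0 j
        have h2 := cfTerm_three_mul (a1 := a1) (a2 := a2) (b1 := b1) (b2 := b2) 0 (j + 1)
        simp only [mul_zero, zero_add, Nat.cast_zero, add_zero, Nat.cast_one] at h1 h2
        rw [h1, h2, hyp_shift nonPole_one]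
        have : (1 : ℂ) + j ≠ 0 := nonPole_one.add_nat_ne_zero j
        rw [add_comm (j : ℂ) 1, div_self this, mul_one]
      simp only [this]
      ring
    | succ m =>
      rw [cfq_three_mul, cfr_three_mul_add_one]
      simp only [cfq0, cfr1, if_neg m.succ_ne_zero]
      have h := hp.phi_rec_two m
      change cfNorm a1 a2 b1 b2 * cfPhi a1 a2 b1 b2 (3 * m + 2) =
        _ * (cfNorm a1 a2 b1 b2 * cfPhi a1 a2 b1 b2 (3 * m + 3)) +
        _ * (cfNorm a1 a2 b1 b2 * cfPhi a1 a2 b1 b2 (3 * m + 4))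
      have e1 := two_mul_add_ne_zero (hp.na1.add_one) m
      have e2 := two_mul_add_ne_zero nonPole_one.add_one m
      have hD : (2 * (m : ℂ) + 2) * (2 * m + a1 + 1) ≠ 0 := by
        convert mul_ne_zero e2 e1 using 1; ring
      convert rec_of_mul_eq hD h (cfNorm a1 a2 b1 b2) using 3 <;> (push_cast; ring)
  · rw [cfq_three_mul_add_one, show 3 * m + 1 + 1 = 3 * m + 2 from rfl, cfr_three_mul_add_two]
    have h := hp.phi_rec_zero m
    change cfNorm a1 a2 b1 b2 * cfPhi a1 a2 b1 b2 (3 * m) =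
      _ * (cfNorm a1 a2 b1 b2 * cfPhi a1 a2 b1 b2 (3 * m + 1)) +
      _ * (cfNorm a1 a2 b1 b2 * cfPhi a1 a2 b1 b2 (3 * m + 2))
    have e1 := two_mul_add_ne_zero hp.na1 m
    have e2 := two_mul_add_ne_zero hp.na2 m
    exact rec_of_mul_eq (mul_ne_zero e1 e2) h _
  · rw [cfq_three_mul_add_two, show 3 * m + 2 + 1 = 3 * (m + 1) from rfl, cfr_three_mul]
    have h := hp.phi_rec_one m
    change cfNorm a1 a2 b1 b2 * cfPhi a1 a2 b1 b2 (3 * m + 1) =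
      _ * (cfNorm a1 a2 b1 b2 * cfPhi a1 a2 b1 b2 (3 * m + 2)) +
      _ * (cfNorm a1 a2 b1 b2 * cfPhi a1 a2 b1 b2 (3 * m + 3))
    have e1 := two_mul_add_ne_zero nonPole_one m
    have e2 := two_mul_add_ne_zero hp.na2.add_one m
    simp only [cfq2, cfr0, if_neg m.succ_ne_zero]
    have hD : (2 * (m : ℂ) + 1) * (2 * m + a2 + 1) ≠ 0 := by
      convert mul_ne_zero e1 e2 using 1; ring
    convert rec_of_mul_eq hD h (cfNorm a1 a2 b1 b2) using 3 <;> (push_cast; ring)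

lemma Params.cfr_ne_zero (hp : Params a1 a2 b1 b2) (n : ℕ) : cfr a1 a2 b1 b2 (n + 1) ≠ 0 := by
  obtain ⟨m, hm⟩ : ∃ m, n + 1 = 3 * (m + 1) ∨ n + 1 = 3 * m + 1 ∨ n + 1 = 3 * m + 2 :=
    ⟨n / 3, by omega⟩
  have key : ∀ {z : ℂ}, NonPole z → ∀ w : ℂ, w = z + m → w ≠ 0 :=
    fun h w hw => hw ▸ h.add_nat_ne_zero m
  rcases hm with h | h | h <;> rw [h]
  · rw [cfr_three_mul, cfr0, if_neg m.succ_ne_zero]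
    refine div_ne_zero (neg_ne_zero.2 (mul_ne_zero (key hp.b1a2 _ ?_) (key hp.b2a2 _ ?_)))
      (mul_ne_zero ?_ ?_)
    · push_cast; ring
    · push_cast; ring
    · convert two_mul_add_ne_zero nonPole_one m using 1; push_cast; ring
    · convert two_mul_add_ne_zero hp.na2.add_one m using 1; push_cast; ring
  · rw [cfr_three_mul_add_one, cfr1]
    cases m with
    | zero => simp
    | succ m =>
      rw [if_neg m.succ_ne_zero]
      have e1 := hp.nb1.add_nat_ne_zero m
      have e2 := hp.nb2.add_nat_ne_zero m
      refine div_ne_zero (neg_ne_zero.2 (mul_ne_zero ?_ ?_))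
        (mul_ne_zero (mul_ne_zero two_ne_zero (by exact_mod_cast m.succ_ne_zero)) ?_)
      · convert e1 using 1; push_cast; ring
      · convert e2 using 1; push_cast; ring
      · convert two_mul_add_ne_zero hp.na1.add_one m using 1; push_cast; ring
  · rw [cfr_three_mul_add_two, cfr2]
    refine div_ne_zero (neg_ne_zero.2 (mul_ne_zero (key hp.b1a1 _ ?_) (key hp.b2a1 _ ?_)))
      (mul_ne_zero (two_mul_add_ne_zero hp.na1 m) (two_mul_add_ne_zero hp.na2 m))
    · ring
    · ring

/-- The parameter that stays fixed in the step from series `n` to series `n + 1`, minus `1`. -/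
noncomputable def cfFixed (a1 a2 : ℂ) (n : ℕ) : ℂ :=
  if n % 3 = 0 then 2 * (n / 3 : ℕ)
  else if n % 3 = 1 then 2 * (n / 3 : ℕ) + a1
  else 2 * (n / 3 : ℕ) + a2 + 1

/-- Each series of the chain is, up to a rational factor in its terms, an index shift of the
previous one. -/
lemma Params.cfTerm_succ (hp : Params a1 a2 b1 b2) (n j : ℕ) :
    cfTerm a1 a2 b1 b2 (n + 1) j = cfTerm a1 a2 b1 b2 n (j + 1) *
      (((j : ℂ) + 1) / (cfFixed a1 a2 n + 1 + j)) := by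
  obtain ⟨m, rfl | rfl | rfl⟩ : ∃ m, n = 3 * m ∨ n = 3 * m + 1 ∨ n = 3 * m + 2 :=
    ⟨n / 3, by omega⟩
  · have hc : cfFixed a1 a2 (3 * m) + 1 = 1 + (2 * m : ℕ) := by
      rw [cfFixed, if_pos (by omega), show 3 * m / 3 = m by omega]; push_cast; ring
    rw [hc, cfTerm_three_mul, cfTerm_three_mul_add_one, ← hyp_shift (nonPole_one.add_nat _)]
    push_cast
    simp only [add_assoc]
  · have hc : cfFixed a1 a2 (3 * m + 1) + 1 = a1 + (2 * m + 1 : ℕ) := by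
      rw [cfFixed, if_neg (by omega), if_pos (by omega), show (3 * m + 1) / 3 = m by omega]
      push_cast; ring
    rw [hc, cfTerm_three_mul_add_one, show 3 * m + 1 + 1 = 3 * m + 2 from rfl,
      cfTerm_three_mul_add_two, hyp_rotate (1 + _), hyp_rotate (1 + _),
      ← hyp_shift (hp.na1.add_nat _)]
    push_cast
    congr 1 <;> ring
  · have hc : cfFixed a1 a2 (3 * m + 2) + 1 = a2 + (2 * m + 2 : ℕ) := by
      rw [cfFixed, if_neg (by omega), if_neg (by omega), show (3 * m + 2) / 3 = m by omega]
      push_cast; ring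
    rw [hc, cfTerm_three_mul_add_two, show 3 * m + 2 + 1 = 3 * (m + 1) from rfl,
      cfTerm_three_mul, hyp_rotate (1 + _), hyp_rotate (1 + _),
      hyp_rotate (a1 + _), hyp_rotate (a1 + _), ← hyp_shift (hp.na2.add_nat _)]
    push_cast
    congr 1 <;> ring

end Chain

/-! ### Sums as integrals, and Gamma integrals -/

/-- A summable series is the integral of the associated step function. -/
lemma integral_floor_eq_tsum {f : ℕ → ℂ} (hf : Summable fun k => ‖f k‖) :
    ∫ y in Set.Ioi (0 : ℝ), f ⌊y⌋₊ = ∑' k, f k := by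
  set S : ℕ → Set ℝ := fun k => Set.Ico (k : ℝ) (k + 1)
  have hS : ∀ k, MeasurableSet (S k) := fun k => measurableSet_Ico
  have hfl : ∀ k, ∀ y ∈ S k, ⌊y⌋₊ = k := fun k y hy =>
    (Nat.floor_eq_iff (k.cast_nonneg.trans hy.1)).2 hy
  have hU : ⋃ k, S k = Set.Ici (0 : ℝ) := by
    ext y
    simp only [Set.mem_iUnion, Set.mem_Ici]
    exact ⟨fun ⟨k, hk⟩ => k.cast_nonneg.trans hk.1,
      fun hy => ⟨⌊y⌋₊, Nat.floor_le hy, Nat.lt_floor_add_one y⟩⟩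
  have hd : Pairwise (Function.onFun Disjoint S) := by
    intro i j hij
    rw [Function.onFun, Set.disjoint_left]
    intro y hi hj
    exact hij ((hfl i y hi).symm.trans (hfl j y hj))
  have hvol : ∀ k, MeasureTheory.volume.real (S k) = 1 := by intro k; simp [S]
  have hint : ∀ k, MeasureTheory.IntegrableOn (fun y : ℝ => f ⌊y⌋₊) (S k) := by
    intro k
    have : MeasureTheory.IntegrableOn (fun _ : ℝ => f k) (S k) :=
      MeasureTheory.integrableOn_const (by simp [S])
    exact this.congr_fun (fun y hy => by simp only [hfl k y hy]) (hS k)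
  have hval : ∀ {E : Type} [NormedAddCommGroup E] [NormedSpace ℝ E] [CompleteSpace E]
      (g : ℕ → E) (k : ℕ), ∫ y in S k, g ⌊y⌋₊ = g k := by
    intro E _ _ _ g k
    rw [MeasureTheory.setIntegral_congr_fun (hS k) (g := fun _ => g k)
      (fun y hy => by simp only [hfl k y hy]), MeasureTheory.setIntegral_const, hvol, one_smul]
  have hall := MeasureTheory.integrableOn_iUnion_of_summable_integral_norm hint (by
    simpa only [hval (fun k => ‖f k‖)] using hf)
  have h := MeasureTheory.hasSum_integral_iUnion hS hd hall
  simp only [hval f] at h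
  rw [hU, MeasureTheory.integral_Ici_eq_integral_Ioi] at h
  exact h.tsum_eq.symm

/-- The Gamma integral after the substitution `x ↦ 1 / x`. -/
lemma integral_cpow_mul_exp_neg_div {s : ℂ} (hs : 0 < s.re) :
    ∫ x in Set.Ioi (0 : ℝ), ((1 / x : ℝ) : ℂ) ^ (s + 1) * Complex.exp (-(1 / (3 * x) : ℝ)) =
      3 ^ s * Gamma s := by
  have h := integral_cpow_mul_exp_neg_mul_Ioi hs (r := 1 / 3) (by norm_num)
  rw [show (1 / ((1 / 3 : ℝ) : ℂ)) = 3 by norm_num] at h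
  rw [← h, ← MeasureTheory.integral_comp_rpow_Ioi _ (p := -1) (by norm_num)]
  refine MeasureTheory.setIntegral_congr_fun measurableSet_Ioi fun x hx => ?_
  have hx0 : 0 < x := hx
  rw [Real.rpow_neg_one, show (-1 - 1 : ℝ) = -2 by norm_num, abs_neg, abs_one, one_mul,
    Real.rpow_neg hx0.le, Complex.real_smul, ← mul_assoc]
  have hx1 : (x : ℂ) ≠ 0 := by exact_mod_cast hx0.ne'
  have e : (((x ^ (2 : ℝ))⁻¹ : ℝ) : ℂ) = (x : ℂ) ^ (-2 : ℂ) := by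
    rw [show (2 : ℝ) = ((2 : ℕ) : ℝ) by norm_num, Real.rpow_natCast, cpow_neg,
      show (2 : ℂ) = ((2 : ℕ) : ℂ) by norm_num, cpow_natCast]
    push_cast
    rfl
  rw [e, one_div, inv_inv, ← cpow_add _ _ hx1]
  congr 2
  · ring
  · push_cast
    field_simp

lemma integrableOn_rpow_mul_exp_neg_inv {σ c : ℝ} (hσ : 0 < σ) (hc : 0 < c) :
    MeasureTheory.IntegrableOn (fun x : ℝ => x ^ (-(σ + 1)) * Real.exp (-(c / x)))
      (Set.Ioi 0) := by
  have h := integrableOn_rpow_mul_exp_neg_mul_rpow (p := 1) (s := σ - 1) (b := c)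
    (by linarith) one_pos hc
  rw [← MeasureTheory.integrableOn_Ioi_comp_rpow_iff' _ (p := -1) (by norm_num)] at h
  refine h.congr_fun (fun x hx => ?_) measurableSet_Ioi
  have hx0 : 0 < x := hx
  dsimp only
  rw [Real.rpow_one, smul_eq_mul, ← mul_assoc, ← Real.rpow_mul hx0.le, ← Real.rpow_add hx0,
    Real.rpow_neg_one]
  congr 1
  · congr 1; ring
  · congr 1; field_simp

/-! ### The Gaussian weights -/

/-- The factor by which the terms of the `n`-th series of the chain differ from those of the
first one, as a function of the summation index `k` of the first series. -/
noncomputable def cfWeight (c : ℕ → ℂ) (n k : ℕ) : ℂ :=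
  ∏ i ∈ Finset.range n, (((k : ℂ) - i) / ((k : ℂ) - i + c i))

lemma cfWeight_eq_zero (c : ℕ → ℂ) {n k : ℕ} (h : k < n) : cfWeight c n k = 0 :=
  Finset.prod_eq_zero (Finset.mem_range.2 h) (by simp)

section Weight

variable {c : ℕ → ℂ} {D : ℝ}

/-- The weights decay like a Gaussian in `n / √k`. -/
lemma norm_cfWeight_le (hc : ∀ i, ‖c i - 2 / 3 * i‖ ≤ D) :
    ∃ C : ℝ, 0 < C ∧ ∃ i0 : ℕ, ∀ n k : ℕ, i0 ≤ n → n ≤ k →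
      ‖cfWeight c n k‖ ≤ C * Real.exp (-((n : ℝ) * (n - 1) / (4 * k))) := by
  obtain ⟨i0, hi0⟩ := exists_nat_ge (6 * D)
  have hlim : Tendsto (fun k : ℕ => cfWeight c i0 k) atTop
      (𝓝 (∏ i ∈ Finset.range i0, (1 : ℂ))) := by
    refine tendsto_finsetProd _ fun i _ => ?_
    have h : Expand1 (fun k : ℕ => (1 + -(i : ℂ) / k) / (1 + (-(i : ℂ) + c i) / k)) (1 / 1) _ :=
      (expand1_linear 1 (-(i : ℂ))).div (expand1_linear 1 (-(i : ℂ) + c i)) one_ne_zero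
    have h2 := h.expand0.tendsto
    rw [div_one] at h2
    refine h2.congr' ?_
    filter_upwards [eventually_ne_atTop 0] with k hk
    have hk' : (k : ℂ) ≠ 0 := by exact_mod_cast hk
    rw [← mul_div_mul_left _ _ hk']
    congr 1 <;> field_simp <;> ring
  obtain ⟨C, hC⟩ := hlim.norm.bddAbove_range
  refine ⟨max C 1 * Real.exp ((i0 : ℝ) ^ 2), by positivity, i0, fun n k hn => ?_⟩
  have key : n ≤ k → ‖cfWeight c n k‖ ≤
      max C 1 * Real.exp (-(((n : ℝ) * (n - 1) - i0 * (i0 - 1)) / (4 * k))) := by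
    induction n, hn using Nat.le_induction with
    | base =>
      intro _
      rw [sub_self, zero_div, neg_zero, Real.exp_zero, mul_one]
      exact (hC ⟨k, rfl⟩).trans (le_max_left _ _)
    | succ n hn ih =>
      intro hk
      have hk0 : (0 : ℝ) < k := by exact_mod_cast (by omega : 0 < k)
      have hnk : (n : ℝ) + 1 ≤ k := by exact_mod_cast hk
      have hn0 : (i0 : ℝ) ≤ n := by exact_mod_cast hn
      have hnn : (0 : ℝ) ≤ n := n.cast_nonneg
      have hre : (n : ℝ) / 2 ≤ (c n).re := by
        have h1 := (abs_le.1 ((abs_re_le_norm _).trans (hc n))).1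
        have h2 : (c n - 2 / 3 * n).re = (c n).re - 2 / 3 * n := by
          rw [sub_re]; congr 1
          rw [show (2 / 3 * (n : ℂ)) = ((2 / 3 * n : ℝ) : ℂ) by push_cast; rfl, ofReal_re]
        rw [h2] at h1
        linarith
      have hden : (k : ℝ) - n / 2 ≤ ‖(k : ℂ) - n + c n‖ := by
        refine le_trans ?_ (re_le_norm _)
        simp
        linarith
      have hpos : (0 : ℝ) < k - n / 2 := by linarith
      have hfac : ‖((k : ℂ) - n) / ((k : ℂ) - n + c n)‖ ≤ Real.exp (-((n : ℝ) / (2 * k))) := by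
        have hnum : ‖(k : ℂ) - n‖ = k - n := by
          rw [show (k : ℂ) - n = ((k - n : ℝ) : ℂ) by push_cast; rfl, norm_real,
            Real.norm_of_nonneg (by linarith)]
        rw [norm_div, hnum]
        have h1 : ((k : ℝ) - n) / ‖(k : ℂ) - n + c n‖ ≤ (k - n) / (k - n / 2) :=
          div_le_div_of_nonneg_left (by linarith) hpos hden
        have h2 : ((k : ℝ) - n) / (k - n / 2) ≤ 1 - n / (2 * k) := by
          rw [div_le_iff₀ hpos]
          have : (1 - (n : ℝ) / (2 * k)) * (k - n / 2) = k - n + n ^ 2 / (4 * k) := by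
            field_simp; ring
          rw [this]
          have : 0 ≤ (n : ℝ) ^ 2 / (4 * k) := by positivity
          linarith
        have h3 := Real.add_one_le_exp (-((n : ℝ) / (2 * k)))
        linarith
      rw [cfWeight, Finset.prod_range_succ, norm_mul]
      refine (mul_le_mul (ih (by omega)) hfac (norm_nonneg _) (by positivity)).trans_eq ?_
      rw [mul_assoc, ← Real.exp_add]
      congr 2
      push_cast
      field_simp
      ring
  intro hk
  refine (key hk).trans ?_
  rw [mul_assoc, ← Real.exp_add]
  gcongr
  rcases Nat.eq_zero_or_pos k with rfl | hk0
  · simp only [Nat.cast_zero, mul_zero, div_zero, neg_zero, add_zero]; positivity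
  · have hk1 : (1 : ℝ) ≤ k := by exact_mod_cast hk0
    have h1 : (i0 : ℝ) * (i0 - 1) / (4 * k) ≤ (i0 : ℝ) ^ 2 := by
      rw [div_le_iff₀ (by linarith)]
      have : (0 : ℝ) ≤ i0 := i0.cast_nonneg
      nlinarith [sq_nonneg (i0 : ℝ)]
    rw [sub_div]
    linarith

/-- In the scaling regime `n² / k → y` the weights converge to `exp (-y/3)`. -/
lemma tendsto_cfWeight (hc : ∀ i, ‖c i - 2 / 3 * i‖ ≤ D) {k : ℕ → ℕ} {y : ℝ}
    (hk : Tendsto (fun n : ℕ => (n : ℝ) ^ 2 / k n) atTop (𝓝 y))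
    (hk2 : ∀ᶠ n in atTop, 2 * n ≤ k n) :
    Tendsto (fun n => cfWeight c n (k n)) atTop (𝓝 (Complex.exp (-(y / 3 : ℝ)))) := by
  have hD : 0 ≤ D := (norm_nonneg _).trans (hc 0)
  have hinv : Tendsto (fun n : ℕ => (1 : ℝ) / n) atTop (𝓝 0) :=
    tendsto_one_div_atTop_nhds_zero_nat
  set u : ℕ → ℕ → ℂ := fun n i => c i / ((k n : ℂ) - i)
  set δ : ℕ → ℝ := fun n => 2 * (D + 1) * ((n : ℝ) ^ 2 / k n * (1 / n))
  have hδ : Tendsto δ atTop (𝓝 0) := by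
    have := (hk.mul hinv).const_mul (2 * (D + 1))
    rw [mul_zero, mul_zero] at this
    exact this
  have hcn : ∀ n i : ℕ, i < n → ‖c i‖ ≤ (D + 1) * n := by
    intro n i hi
    have h1 : ‖c i‖ ≤ ‖c i - 2 / 3 * i‖ + ‖(2 / 3 * i : ℂ)‖ := by
      simpa using norm_add_le (c i - 2 / 3 * i) (2 / 3 * i)
    have h2 : ‖(2 / 3 * i : ℂ)‖ = 2 / 3 * i := by simp
    have h3 : (i : ℝ) + 1 ≤ n := by exact_mod_cast hi
    have h4 : (0 : ℝ) ≤ i := i.cast_nonneg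
    have := hc i
    nlinarith
  have hden : ∀ n i : ℕ, i < n → 2 * n ≤ k n →
      (0 : ℝ) < k n ∧ (k n : ℝ) / 2 ≤ ‖(k n : ℂ) - i‖ := by
    intro n i hi h
    have h1 : (i : ℝ) + 1 ≤ n := by exact_mod_cast hi
    have h2 : 2 * (n : ℝ) ≤ k n := by exact_mod_cast h
    have h4 : (0 : ℝ) ≤ i := i.cast_nonneg
    refine ⟨by linarith, ?_⟩
    rw [show (k n : ℂ) - i = ((k n - i : ℝ) : ℂ) by push_cast; rfl, norm_real,
      Real.norm_of_nonneg (by linarith)]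
    linarith
  have hu : ∀ n i : ℕ, i < n → 2 * n ≤ k n → ‖u n i‖ ≤ δ n := by
    intro n i hi h
    obtain ⟨hk0, hk1⟩ := hden n i hi h
    have hn : (0 : ℝ) < n := by exact_mod_cast (by omega : 0 < n)
    have h1 : ‖u n i‖ ≤ (D + 1) * n / (k n / 2) := by
      rw [norm_div]
      exact div_le_div₀ (by positivity) (hcn n i hi) (by positivity) hk1
    refine h1.trans_eq ?_
    simp only [δ]
    field_simp
  have hlog : Tendsto (fun n => ∑ i ∈ Finset.range n, Complex.log (1 + u n i)
      - ∑ i ∈ Finset.range n, u n i) atTop (𝓝 0) := by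
    have hb : Tendsto (fun n : ℕ => (2 * (D + 1)) ^ 2 * (((n : ℝ) ^ 2 / k n) ^ 2 * (1 / n)))
        atTop (𝓝 0) := by
      simpa using ((hk.pow 2).mul hinv).const_mul ((2 * (D + 1)) ^ 2)
    refine squeeze_zero_norm' ?_ hb
    filter_upwards [hk2, hδ.eventually_le_const (by norm_num : (0 : ℝ) < 1 / 2),
      eventually_ne_atTop 0] with n h2 hδn hn
    rw [← Finset.sum_sub_distrib]
    have hn' : (0 : ℝ) < n := by exact_mod_cast Nat.pos_of_ne_zero hn
    have : ∀ i ∈ Finset.range n, ‖Complex.log (1 + u n i) - u n i‖ ≤ δ n ^ 2 := by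
      intro i hi
      have h1 := hu n i (Finset.mem_range.1 hi) h2
      have h3 := norm_log_one_add_sub_self_le (z := u n i) (by linarith)
      have h4 : (1 - ‖u n i‖)⁻¹ ≤ 2 := by
        rw [inv_le_comm₀ (by linarith) (by norm_num)]
        linarith
      have h5 : ‖u n i‖ ^ 2 * (1 - ‖u n i‖)⁻¹ / 2 ≤ ‖u n i‖ ^ 2 := by
        nlinarith [sq_nonneg ‖u n i‖]
      exact h3.trans (h5.trans (pow_le_pow_left₀ (norm_nonneg _) h1 2))
    refine (norm_sum_le_of_le _ this).trans_eq ?_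
    rw [Finset.sum_const, Finset.card_range, nsmul_eq_mul]
    simp only [δ]
    field_simp
  have hsum : Tendsto (fun n => ∑ i ∈ Finset.range n, u n i
      - ∑ i ∈ Finset.range n, (2 / 3 * i / k n : ℂ)) atTop (𝓝 0) := by
    have hb : Tendsto (fun n : ℕ => D * ((n : ℝ) ^ 2 / k n * (1 / n)) +
        2 * (D + 1) * (((n : ℝ) ^ 2 / k n) ^ 2 * (1 / n))) atTop (𝓝 0) := by
      simpa using ((hk.mul hinv).const_mul D).add
        (((hk.pow 2).mul hinv).const_mul (2 * (D + 1)))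
    refine squeeze_zero_norm' ?_ hb
    filter_upwards [hk2, eventually_ne_atTop 0] with n h2 hn
    rw [← Finset.sum_sub_distrib]
    have hn' : (0 : ℝ) < n := by exact_mod_cast Nat.pos_of_ne_zero hn
    have : ∀ i ∈ Finset.range n, ‖u n i - 2 / 3 * i / k n‖ ≤
        D / k n + (D + 1) * n * n / (k n * (k n / 2)) := by
      intro i hi
      have hi' := Finset.mem_range.1 hi
      obtain ⟨hk0, hk1⟩ := hden n i hi' h2
      have hk0' : (k n : ℂ) ≠ 0 := by exact_mod_cast hk0.ne'
      have hki : (k n : ℂ) - i ≠ 0 := by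
        rw [← norm_pos_iff]; linarith
      have e : u n i - 2 / 3 * i / k n =
          (c i - 2 / 3 * i) / k n + c i * i / (k n * (k n - i)) := by
        simp only [u]; field_simp; ring
      rw [e]
      refine (norm_add_le _ _).trans (add_le_add ?_ ?_)
      · rw [norm_div, Complex.norm_natCast]
        exact div_le_div_of_nonneg_right (hc i) hk0.le
      · rw [norm_div, norm_mul, norm_mul, Complex.norm_natCast, Complex.norm_natCast]
        have hin : (i : ℝ) ≤ n := by exact_mod_cast hi'.le
        have := hcn n i hi'
        gcongr
    refine (norm_sum_le_of_le _ this).trans_eq ?_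
    rw [Finset.sum_const, Finset.card_range, nsmul_eq_mul]
    have hk0 := (hden n 0 (Nat.pos_of_ne_zero hn) h2).1
    field_simp
  have hmain : Tendsto (fun n => ∑ i ∈ Finset.range n, (2 / 3 * i / k n : ℂ)) atTop
      (𝓝 ((y / 3 : ℝ) : ℂ)) := by
    have h1 : Tendsto (fun n : ℕ => (n : ℝ) ^ 2 / k n * (1 - 1 / n) / 3) atTop
        (𝓝 (y * (1 - 0) / 3)) := (hk.mul (hinv.const_sub 1)).div_const 3
    rw [sub_zero, mul_one] at h1
    refine ((continuous_ofReal.tendsto _).comp h1).congr' ?_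
    filter_upwards [eventually_ne_atTop 0] with n hn
    have hn' : (n : ℂ) ≠ 0 := by exact_mod_cast hn
    have hg : ∀ n : ℕ, ∑ i ∈ Finset.range n, (i : ℂ) = (n : ℂ) * (n - 1) / 2 := by
      intro n
      induction n with
      | zero => simp
      | succ n ih => rw [Finset.sum_range_succ, ih]; push_cast; ring
    rw [← Finset.sum_div, ← Finset.mul_sum, hg]
    simp only [Function.comp_apply]
    push_cast
    field_simp
  have htot := (hlog.add hsum).add hmain
  simp only [zero_add] at htot
  have hexp := (Complex.continuous_exp.tendsto _).comp htot.neg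
  refine (Tendsto.congr' ?_ hexp).trans ?_
  · filter_upwards [hk2, hδ.eventually_le_const (by norm_num : (0 : ℝ) < 1 / 2)]
      with n h2 hδn
    simp only [Function.comp_apply]
    rw [sub_add_sub_cancel, sub_add_cancel, Complex.exp_neg, Complex.exp_sum, cfWeight,
      ← Finset.prod_inv_distrib]
    refine Finset.prod_congr rfl fun i hi => ?_
    have hi' := Finset.mem_range.1 hi
    have h1 := hu n i hi' h2
    obtain ⟨hk0, hk1⟩ := hden n i hi' h2
    have hki : (k n : ℂ) - i ≠ 0 := by
      rw [← norm_pos_iff]; linarith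
    rw [Complex.exp_log]
    · simp only [u]
      rw [show 1 + c i / ((k n : ℂ) - i) = ((k n : ℂ) - i + c i) / ((k n : ℂ) - i) by
        rw [add_div, div_self hki], inv_div]
    · intro h0
      have : u n i = -1 := by linear_combination h0
      rw [this, norm_neg, norm_one] at h1
      linarith
  · simp
end Weight

/-! ### Limit of the contiguous chain -/

/-- A sum against the weights, rescaled by `k = n² x`, converges to an inverse Gamma integral. -/
lemma tendsto_weighted_tsum {c : ℕ → ℂ} {D : ℝ} (hc : ∀ i, ‖c i - 2 / 3 * i‖ ≤ D) {s : ℂ}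
    (hs : 0 < s.re) {τ : ℕ → ℂ} (hτ : Tendsto (fun k : ℕ => τ k * (k : ℂ) ^ (s + 1)) atTop (𝓝 1))
    {C : ℝ} (hτC : ∀ k : ℕ, k ≠ 0 → ‖τ k‖ ≤ C * (k : ℝ) ^ (-(s.re + 1)))
    (hsum : ∀ n, Summable fun k => ‖τ k * cfWeight c n k‖) :
    Tendsto (fun n : ℕ => (n : ℂ) ^ (2 * s) * ∑' k, τ k * cfWeight c n k) atTop
      (𝓝 (3 ^ s * Gamma s)) := by
  obtain ⟨C', hC', i0, hw⟩ := norm_cfWeight_le hc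
  have hC : 0 ≤ C := by simpa using (norm_nonneg _).trans (hτC 1 one_ne_zero)
  set G : ℕ → ℝ → ℂ := fun n x => (n : ℂ) ^ (2 * s) * (n : ℂ) ^ 2 *
    (τ ⌊(n : ℝ) ^ 2 * x⌋₊ * cfWeight c n ⌊(n : ℝ) ^ 2 * x⌋₊) with hG
  have hint : ∀ᶠ n : ℕ in atTop, ∫ x in Set.Ioi (0 : ℝ), G n x =
      (n : ℂ) ^ (2 * s) * ∑' k, τ k * cfWeight c n k := by
    filter_upwards [eventually_ne_atTop 0] with n hn
    have hn0 : (0 : ℝ) < (n : ℝ) ^ 2 := by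
      have : (0 : ℝ) < n := by exact_mod_cast Nat.pos_of_ne_zero hn
      positivity
    have hn' : (n : ℂ) ≠ 0 := by exact_mod_cast hn
    have h := MeasureTheory.integral_comp_mul_left_Ioi
      (fun y : ℝ => τ ⌊y⌋₊ * cfWeight c n ⌊y⌋₊) 0 hn0
    rw [mul_zero, integral_floor_eq_tsum (hsum n)] at h
    simp only [hG]
    rw [MeasureTheory.integral_const_mul, h, real_smul]
    push_cast
    field_simp
  rw [← integral_cpow_mul_exp_neg_div hs]
  refine Tendsto.congr' hint ?_
  refine MeasureTheory.tendsto_integral_filter_of_dominated_convergence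
    (fun x => (C * 2 ^ (s.re + 1) * C') * (x ^ (-(s.re + 1)) * Real.exp (-((1 / 8) / x)))) ?_ ?_ ?_ ?_
  · refine Eventually.of_forall fun n => Measurable.aestronglyMeasurable ?_
    refine Measurable.const_mul ?_ _
    exact (measurable_from_nat (f := fun k => τ k * cfWeight c n k)).comp
      (Nat.measurable_floor.comp (measurable_const.mul measurable_id))
  · filter_upwards [eventually_ge_atTop i0, eventually_ge_atTop 2] with n hn hn2
    refine (MeasureTheory.ae_restrict_iff' measurableSet_Ioi).2 (Eventually.of_forall fun x hx => ?_)
    have hx0 : 0 < x := hx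
    have hnR : (2 : ℝ) ≤ n := by exact_mod_cast hn2
    have hn0 : (0 : ℝ) < n := by linarith
    simp only [hG]
    set K := ⌊(n : ℝ) ^ 2 * x⌋₊ with hK
    rcases lt_or_ge K n with h | h
    · rw [cfWeight_eq_zero c h, mul_zero, mul_zero, norm_zero]
      positivity
    · have hKn : (n : ℝ) ≤ K := by exact_mod_cast h
      have hK0 : (0 : ℝ) < K := by linarith
      have hle : (K : ℝ) ≤ (n : ℝ) ^ 2 * x := Nat.floor_le (by positivity)
      have hge : (n : ℝ) ^ 2 * x / 2 ≤ K := by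
        have := Nat.lt_floor_add_one ((n : ℝ) ^ 2 * x)
        rw [← hK] at this
        linarith
      have h1 : ‖τ K‖ ≤ C * ((n : ℝ) ^ 2 * x / 2) ^ (-(s.re + 1)) := by
        refine (hτC K (by omega)).trans (mul_le_mul_of_nonneg_left ?_ hC)
        exact Real.rpow_le_rpow_of_nonpos (by positivity) hge (by linarith)
      have h2 : ‖cfWeight c n K‖ ≤ C' * Real.exp (-((1 / 8) / x)) := by
        refine (hw n K hn h).trans (mul_le_mul_of_nonneg_left ?_ hC'.le)
        refine Real.exp_le_exp.2 (neg_le_neg ?_)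
        rw [div_le_div_iff₀ hx0 (by positivity)]
        nlinarith [mul_pos hn0 hx0]
      have h3 : ‖(n : ℂ) ^ (2 * s) * (n : ℂ) ^ 2‖ = ((n : ℝ) ^ 2) ^ (s.re + 1) := by
        rw [norm_mul, norm_pow, norm_natCast_cpow_of_pos (by omega), Complex.norm_natCast,
          ← Real.rpow_natCast, ← Real.rpow_add hn0, ← Real.rpow_mul hn0.le]
        congr 1
        simp
        ring
      rw [norm_mul, h3, norm_mul]
      refine (mul_le_mul_of_nonneg_left (mul_le_mul h1 h2 (norm_nonneg _) (by positivity))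
        (by positivity)).trans_eq ?_
      rw [show (n : ℝ) ^ 2 * x / 2 = (n : ℝ) ^ 2 * (x * 2⁻¹) by ring,
        Real.mul_rpow (by positivity) (by positivity), Real.mul_rpow hx0.le (by positivity),
        Real.rpow_neg (by positivity : (0 : ℝ) ≤ (n : ℝ) ^ 2), Real.inv_rpow (by norm_num),
        Real.rpow_neg (by norm_num : (0 : ℝ) ≤ 2), inv_inv]
      have : ((n : ℝ) ^ 2) ^ (s.re + 1) ≠ 0 := by positivity
      field_simp
  · exact (integrableOn_rpow_mul_exp_neg_inv hs (by norm_num)).const_mul _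
  · refine (MeasureTheory.ae_restrict_iff' measurableSet_Ioi).2 (Eventually.of_forall fun x hx => ?_)
    have hx0 : 0 < x := hx
    have hsq : Tendsto (fun n : ℕ => (n : ℝ) ^ 2) atTop atTop :=
      (tendsto_pow_atTop two_ne_zero).comp tendsto_natCast_atTop_atTop
    set K : ℕ → ℕ := fun n => ⌊(n : ℝ) ^ 2 * x⌋₊ with hK
    have hKt : Tendsto K atTop atTop :=
      tendsto_nat_floor_atTop.comp (hsq.atTop_mul_const hx0)
    have hq : Tendsto (fun n : ℕ => (n : ℝ) ^ 2 / K n) atTop (𝓝 (1 / x)) := by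
      have h1 : Tendsto (fun n : ℕ => (K n : ℝ) / (n : ℝ) ^ 2) atTop (𝓝 x) := by
        have := (tendsto_nat_floor_mul_div_atTop hx0.le).comp hsq
        refine this.congr fun n => ?_
        simp only [Function.comp_apply, hK, mul_comm]
      have h2 := h1.inv₀ hx0.ne'
      rw [one_div]
      exact h2.congr fun n => inv_div _ _
    have hK2 : ∀ᶠ n in atTop, 2 * n ≤ K n := by
      have h1 : ∀ᶠ n : ℕ in atTop, 2 / x ≤ (n : ℝ) :=
        tendsto_natCast_atTop_atTop.eventually_ge_atTop _
      filter_upwards [h1] with n hn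
      refine Nat.le_floor ?_
      push_cast
      rw [div_le_iff₀ hx0] at hn
      nlinarith [n.cast_nonneg (α := ℝ)]
    have hwt := tendsto_cfWeight hc hq hK2
    have hcp : Tendsto (fun n : ℕ => (((n : ℝ) ^ 2 / K n : ℝ) : ℂ) ^ (s + 1)) atTop
        (𝓝 (((1 / x : ℝ) : ℂ) ^ (s + 1))) := by
      refine Tendsto.cpow ((continuous_ofReal.tendsto _).comp hq) tendsto_const_nhds ?_
      exact ofReal_mem_slitPlane.2 (by positivity)
    have htot := ((hτ.comp hKt).mul hcp).mul hwt
    rw [one_mul, div_div, mul_comm x 3] at htot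
    refine htot.congr' ?_
    filter_upwards [hKt.eventually_ne_atTop 0, eventually_ne_atTop 0] with n hKn hn
    have hK0 : (0 : ℝ) < K n := by exact_mod_cast Nat.pos_of_ne_zero hKn
    have hn' : (n : ℂ) ≠ 0 := by exact_mod_cast hn
    have e : (n : ℂ) ^ (2 * s) * (n : ℂ) ^ 2 =
        (((n : ℝ) ^ 2 / K n : ℝ) : ℂ) ^ (s + 1) * (K n : ℂ) ^ (s + 1) := by
      rw [← ofReal_natCast (K n), ← mul_cpow_ofReal_nonneg (by positivity) hK0.le, ← ofReal_mul,
        div_mul_cancel₀ _ hK0.ne', ← Complex.cpow_natCast, ← cpow_add _ _ hn', pow_two, ofReal_mul,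
        mul_cpow_ofReal_nonneg n.cast_nonneg n.cast_nonneg, ofReal_natCast, ← cpow_add _ _ hn']
      congr 1
      push_cast
      ring
    simp only [hG, Function.comp_apply]
    change _ = _ * (τ (K n) * cfWeight c n (K n))
    rw [e]
    ring

section Chain

variable {a1 a2 b1 b2 : ℂ}

lemma norm_cfFixed_sub_le (i : ℕ) :
    ‖cfFixed a1 a2 i - 2 / 3 * i‖ ≤ ‖a1‖ + ‖a2‖ + 3 := by
  obtain ⟨m, rfl | rfl | rfl⟩ : ∃ m, i = 3 * m ∨ i = 3 * m + 1 ∨ i = 3 * m + 2 :=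
    ⟨i / 3, by omega⟩
  · rw [cfFixed, if_pos (by omega), show 3 * m / 3 = m by omega,
      show (2 * (m : ℂ) - 2 / 3 * (3 * m : ℕ)) = 0 by push_cast; ring, norm_zero]
    positivity
  · rw [cfFixed, if_neg (by omega), if_pos (by omega), show (3 * m + 1) / 3 = m by omega,
      show (2 * (m : ℂ) + a1 - 2 / 3 * (3 * m + 1 : ℕ)) = a1 - 2 / 3 by push_cast; ring]
    refine (norm_sub_le _ _).trans ?_
    have : ‖(2 / 3 : ℂ)‖ = 2 / 3 := by simp
    linarith [norm_nonneg a2]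
  · rw [cfFixed, if_neg (by omega), if_neg (by omega), show (3 * m + 2) / 3 = m by omega,
      show (2 * (m : ℂ) + a2 + 1 - 2 / 3 * (3 * m + 2 : ℕ)) = a2 - 1 / 3 by push_cast; ring]
    refine (norm_sub_le _ _).trans ?_
    have : ‖(1 / 3 : ℂ)‖ = 1 / 3 := by simp
    linarith [norm_nonneg a1]

/-- With the summation index `k = j + n`, the terms of every series of the chain are those of the
first one times a weight. -/
lemma Params.cfTerm_eq (hp : Params a1 a2 b1 b2) (n j : ℕ) :
    cfTerm a1 a2 b1 b2 n j = cfTerm a1 a2 b1 b2 0 (j + n) * cfWeight (cfFixed a1 a2) n (j + n) := by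
  induction n generalizing j with
  | zero => simp [cfWeight]
  | succ n ih =>
    rw [hp.cfTerm_succ, ih, cfWeight, cfWeight, Finset.prod_range_succ, mul_assoc,
      show j + 1 + n = j + (n + 1) by ring]
    congr 3 <;> push_cast <;> ring

lemma Params.summable_weighted (hp : Params a1 a2 b1 b2) (n : ℕ) :
    Summable fun k => ‖cfTerm a1 a2 b1 b2 0 k * cfWeight (cfFixed a1 a2) n k‖ := by
  rw [← summable_nat_add_iff n]
  exact (hp.summable_norm n).congr fun j => by rw [hp.cfTerm_eq]

lemma Params.cfPhi_eq (hp : Params a1 a2 b1 b2) (n : ℕ) :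
    cfPhi a1 a2 b1 b2 n = ∑' k, cfTerm a1 a2 b1 b2 0 k * cfWeight (cfFixed a1 a2) n k := by
  rw [← (hp.summable_weighted n).of_norm.sum_add_tsum_nat_add n, Finset.sum_eq_zero, zero_add]
  · exact tsum_congr fun j => hp.cfTerm_eq n j
  · intro k hk
    rw [cfWeight_eq_zero _ (Finset.mem_range.1 hk), mul_zero]

/-- The leading behaviour `Φₙ ~ 3^s Γ(s) n^(-2s)` of the contiguous chain. -/
lemma Params.tendsto_cfPhi (hp : Params a1 a2 b1 b2) :
    Tendsto (fun n : ℕ => (n : ℂ) ^ (2 * (b1 + b2 - a1 - a2 - 1)) * cfPhi a1 a2 b1 b2 n) atTop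
      (𝓝 (3 ^ (b1 + b2 - a1 - a2 - 1) * Gamma (b1 + b2 - a1 - a2 - 1))) := by
  obtain ⟨C, -, hC⟩ := hyp_norm_le (nonPole_one.add_nat 0) (hp.na1.add_nat 0) (hp.na2.add_nat 0)
    (hp.nb1.add_nat 0) (hp.nb2.add_nat 0) (cfExponent (a1 := a1) (a2 := a2) (b1 := b1) (b2 := b2) 0)
  have hτ := tendsto_hyp (nonPole_one.add_nat 0) (hp.na1.add_nat 0) (hp.na2.add_nat 0)
    (hp.nb1.add_nat 0) (hp.nb2.add_nat 0) (cfExponent (a1 := a1) (a2 := a2) (b1 := b1) (b2 := b2) 0)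
  simp only [hp.cfPhi_eq]
  exact tendsto_weighted_tsum norm_cfFixed_sub_le hp.s hτ hC hp.summable_weighted

end Chain

/-! ### First-order asymptotics of the recurrence solution -/

lemma expand1_quot (u v w x y z : ℂ) :
    Expand1 (fun m : ℕ => ((3 * (m : ℂ) + u) * (3 * m + v) - (2 * m + w) * (2 * m + x)) /
      ((2 * m + y) * (2 * m + z))) (5 / 4) ((3 * (u + v) - 2 * (w + x)) / 4 - 5 * (y + z) / 8) := by
  have h := (((expand1_linear 3 u).mul (expand1_linear 3 v)).sub
    ((expand1_linear 2 w).mul (expand1_linear 2 x))).div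
    ((expand1_linear 2 y).mul (expand1_linear 2 z)) (by norm_num)
  have e1 : ((3 : ℂ) * 3 - 2 * 2) / (2 * 2) = 5 / 4 := by norm_num
  rw [e1] at h
  have h2 := h.congr (g := fun m : ℕ => ((3 * (m : ℂ) + u) * (3 * m + v) -
    (2 * m + w) * (2 * m + x)) / ((2 * m + y) * (2 * m + z))) ?_
  · convert h2 using 1
    ring
  · filter_upwards [eventually_ne_atTop 0] with m hm
    have hm' : (m : ℂ) ≠ 0 := by exact_mod_cast hm
    rw [← mul_div_mul_left _ _ (pow_ne_zero 2 hm')]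
    congr 1 <;> field_simp

lemma expand1_neg_quot (u v y z : ℂ) :
    Expand1 (fun m : ℕ => -(((m : ℂ) + u) * (m + v)) /
      ((2 * m + y) * (2 * m + z))) (-1 / 4) (-(u + v) / 4 + (y + z) / 8) := by
  have h := ((expand1_linear 1 u).mul (expand1_linear 1 v)).neg.div
    ((expand1_linear 2 y).mul (expand1_linear 2 z)) (by norm_num)
  have e1 : (-((1 : ℂ) * 1)) / (2 * 2) = -1 / 4 := by norm_num
  rw [e1] at h
  have h2 := h.congr (g := fun m : ℕ => -(((m : ℂ) + u) * (m + v)) /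
      ((2 * m + y) * (2 * m + z))) ?_
  · convert h2 using 1
    ring
  · filter_upwards [eventually_ne_atTop 0] with m hm
    have hm' : (m : ℂ) ≠ 0 := by exact_mod_cast hm
    rw [← mul_div_mul_left _ _ (pow_ne_zero 2 hm')]
    congr 1 <;> field_simp

lemma expand1_one_add_div_mod (t : ℂ) (i : ℕ) :
    Expand1 (fun m : ℕ => 1 + t / ((3 * m + i : ℕ) : ℂ)) 1 (t / 3) := by
  have h := ((expand1_linear (3 : ℂ) (t + i)).div (expand1_linear 3 i) (by norm_num))
  have h2 := h.congr (g := fun m : ℕ => 1 + t / ((3 * m + i : ℕ) : ℂ)) ?_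
  · convert h2 using 1 <;> ring
  · filter_upwards [eventually_ne_atTop 0] with m hm
    have hm' : (m : ℂ) ≠ 0 := by exact_mod_cast hm
    have hi : ((3 * m + i : ℕ) : ℂ) ≠ 0 := by exact_mod_cast (by omega : 3 * m + i ≠ 0)
    rw [← mul_div_mul_left _ _ hm', one_add_div hi]
    push_cast at hi ⊢
    congr 1
    · field_simp
      ring
    · field_simp

/-- The approximate ratio `1 + t/n` solves the Riccati recurrence up to `O(1/n²)` along a residue
class as soon as the first-order coefficients match. -/
lemma isBigO_residual {q r : ℕ → ℂ} {s qq rr : ℂ} {i : ℕ} {Q R : ℕ → ℂ}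
    (hQ : Expand1 Q (5 / 4) qq) (hR : Expand1 R (-1 / 4) rr) (hs : qq + rr = s / 2)
    (hq : ∀ᶠ m in atTop, q (3 * m + i) = Q m) (hr : ∀ᶠ m in atTop, r (3 * m + i + 1) = R m) :
    (fun m : ℕ => 1 - (1 + -(2 * s) / ((3 * m + i : ℕ) : ℂ)) * (q (3 * m + i) +
      r (3 * m + i + 1) * (1 + -(2 * s) / ((3 * m + i + 1 : ℕ) : ℂ)))) =O[atTop]
      (fun m : ℕ => ((m : ℝ) ^ 2)⁻¹) := by
  have h := (expand1_const 1).sub ((expand1_one_add_div_mod (-(2 * s)) i).mul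
    (hQ.add (hR.mul (expand1_one_add_div_mod (-(2 * s)) (i + 1)))))
  have e1 : (1 : ℂ) - 1 * (5 / 4 + -1 / 4 * 1) = 0 := by norm_num
  have e2 : (0 : ℂ) - (1 * (qq + (-1 / 4 * (-(2 * s) / 3) + rr * 1)) +
    -(2 * s) / 3 * (5 / 4 + -1 / 4 * 1)) = 0 := by linear_combination -hs
  rw [e1, e2] at h
  refine h.congr' ?_ EventuallyEq.rfl
  filter_upwards [hq, hr] with m h1 h2
  rw [h1, h2, zero_div, sub_zero, sub_zero, ← add_assoc]

section Chain

variable {a1 a2 b1 b2 : ℂ}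

/-- On each residue class modulo `3` the coefficients tend to `5/4` and `-1/4`, and the sum of their
first-order corrections is `s/2` in all three cases. -/
lemma expand1_cfq_cfr (i : ℕ) (hi : i < 3) : ∃ Q R : ℕ → ℂ, ∃ qq rr : ℂ,
    Expand1 Q (5 / 4) qq ∧ Expand1 R (-1 / 4) rr ∧
    qq + rr = (b1 + b2 - a1 - a2 - 1) / 2 ∧
    (∀ᶠ m in atTop, cfq a1 a2 b1 b2 (3 * m + i) = Q m) ∧
    (∀ᶠ m in atTop, cfr a1 a2 b1 b2 (3 * m + i + 1) = R m) := by
  interval_cases i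
  · refine ⟨_, _, _, _, expand1_quot (b1 - 1) (b2 - 1) 0 a2 0 (a1 - 1),
      expand1_neg_quot (b1 - 1) (b2 - 1) 0 (a1 - 1), by ring, ?_, ?_⟩
    · filter_upwards [eventually_ne_atTop 0] with m hm
      rw [add_zero, cfq_three_mul, cfq0, if_neg hm]
      congr 1 <;> ring
    · filter_upwards [eventually_ne_atTop 0] with m hm
      rw [add_zero, cfr_three_mul_add_one, cfr1, if_neg hm]
      congr 1 <;> ring
  · refine ⟨_, _, _, _, expand1_quot b1 b2 1 a1 a1 a2,
      expand1_neg_quot (b1 - a1) (b2 - a1) a1 a2, by ring, ?_, ?_⟩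
    · refine Eventually.of_forall fun m => ?_
      rw [cfq_three_mul_add_one, cfq1]
    · refine Eventually.of_forall fun m => ?_
      rw [cfr_three_mul_add_two, cfr2]
      congr 1 ; ring
  · refine ⟨_, _, _, _, expand1_quot (b1 + 1) (b2 + 1) (a1 + 1) (a2 + 1) 1 (a2 + 1),
      expand1_neg_quot (b1 - a2) (b2 - a2) 1 (a2 + 1), by ring, ?_, ?_⟩
    · refine Eventually.of_forall fun m => ?_
      rw [cfq_three_mul_add_two, cfq2]
      congr 1 <;> ring
    · refine Eventually.of_forall fun m => ?_
      rw [show 3 * m + 2 + 1 = 3 * (m + 1) by ring, cfr_three_mul, cfr0, if_neg m.succ_ne_zero]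
      push_cast
      congr 1 <;> ring

lemma expand0_neg_cfr_succ : Expand0 (fun n => -cfr a1 a2 b1 b2 (n + 1)) (1 / 4) := by
  refine Expand0.of_mod_three fun i hi => ?_
  obtain ⟨Q, R, qq, rr, -, hR, -, -, hr⟩ :=
    expand1_cfq_cfr (a1 := a1) (a2 := a2) (b1 := b1) (b2 := b2) i hi
  have h := hR.expand0.neg
  rw [neg_div, neg_neg] at h
  refine h.congr ?_
  filter_upwards [hr] with m hm
  rw [hm]

lemma Params.cfNorm_ne_zero (hp : Params a1 a2 b1 b2) : cfNorm a1 a2 b1 b2 ≠ 0 :=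
  div_ne_zero (mul_ne_zero hp.nb1.gamma_ne_zero hp.nb2.gamma_ne_zero)
    (mul_ne_zero hp.na1.gamma_ne_zero hp.na2.gamma_ne_zero)

/-- The limit of `n ^ (2s)` times the solution. -/
noncomputable def cfLimit (a1 a2 b1 b2 : ℂ) : ℂ := cfNorm a1 a2 b1 b2 *
  (3 ^ (b1 + b2 - a1 - a2 - 1) * Gamma (b1 + b2 - a1 - a2 - 1))

lemma Params.cfLimit_ne_zero (hp : Params a1 a2 b1 b2) : cfLimit a1 a2 b1 b2 ≠ 0 := by
  refine mul_ne_zero hp.cfNorm_ne_zero (mul_ne_zero ?_ (Gamma_ne_zero_of_re_pos hp.s))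
  rw [Ne, cpow_eq_zero_iff]
  norm_num

lemma Params.tendsto_cfSol (hp : Params a1 a2 b1 b2) :
    Tendsto (fun n : ℕ => (n : ℂ) ^ (2 * (b1 + b2 - a1 - a2 - 1)) * cfSol a1 a2 b1 b2 n) atTop
      (𝓝 (cfLimit a1 a2 b1 b2)) := by
  rw [← tendsto_add_atTop_iff_nat 1]
  have h := (hp.tendsto_cfPhi.const_mul (cfNorm a1 a2 b1 b2)).mul
    (expand1_one_add_inv_cpow (2 * (b1 + b2 - a1 - a2 - 1))).expand0.tendsto
  rw [mul_one] at h
  refine h.congr' ?_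
  filter_upwards [eventually_ne_atTop 0] with n hn
  rw [natCast_succ_cpow _ hn, cfSol]
  ring

lemma Params.eventually_cfSol_ne_zero (hp : Params a1 a2 b1 b2) :
    ∀ᶠ n in atTop, cfSol a1 a2 b1 b2 n ≠ 0 := by
  filter_upwards [hp.tendsto_cfSol.eventually_ne hp.cfLimit_ne_zero] with n hn
  exact right_ne_zero_of_mul hn

lemma Params.tendsto_cfSol_ratio (hp : Params a1 a2 b1 b2) :
    Tendsto (fun n => cfSol a1 a2 b1 b2 (n + 1) / cfSol a1 a2 b1 b2 n) atTop (𝓝 1) := by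
  have h := (((tendsto_add_atTop_iff_nat 1).2 hp.tendsto_cfSol).div hp.tendsto_cfSol
    hp.cfLimit_ne_zero).mul
    ((expand1_one_add_inv_cpow (2 * (b1 + b2 - a1 - a2 - 1))).expand0.inv one_ne_zero).tendsto
  rw [div_self hp.cfLimit_ne_zero, inv_one, mul_one] at h
  refine h.congr' ?_
  filter_upwards [eventually_ne_atTop 0, (expand1_one_add_inv_cpow
    (2 * (b1 + b2 - a1 - a2 - 1))).expand0.tendsto.eventually_ne one_ne_zero,
    hp.eventually_cfSol_ne_zero] with n hn h1 h2
  have := natCast_cpow_ne_zero hn (2 * (b1 + b2 - a1 - a2 - 1))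
  rw [Pi.div_apply, natCast_succ_cpow _ hn]
  generalize (1 + 1 / (n : ℂ)) ^ (2 * (b1 + b2 - a1 - a2 - 1)) = g at h1 ⊢
  field_simp

/-- `xₙ₊₁/xₙ = 1 - 2s/n + O(1/n²)`: the ratios and the approximate ratios `1 - 2s/n` satisfy the same
contracting Riccati recurrence up to `O(1/n²)`. -/
lemma Params.expand1_cfSol_ratio (hp : Params a1 a2 b1 b2) :
    Expand1 (fun n => cfSol a1 a2 b1 b2 (n + 1) / cfSol a1 a2 b1 b2 n) 1
      (-(2 * (b1 + b2 - a1 - a2 - 1))) := by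
  have hr : Tendsto (cfr a1 a2 b1 b2) atTop (𝓝 (-1 / 4)) := by
    rw [← tendsto_add_atTop_iff_nat 1]
    have := (expand0_neg_cfr_succ (a1 := a1) (a2 := a2) (b1 := b1) (b2 := b2)).neg.tendsto
    simpa only [neg_neg, ← neg_div] using this
  have h := isBigO_ratio (q := cfq a1 a2 b1 b2) hp.tendsto_cfSol_ratio
    (expand1_linear 1 (-(2 * (b1 + b2 - a1 - a2 - 1)))).expand0.tendsto hr ?_ ?_
  · refine h.congr_left fun n => by ring
  · filter_upwards [hp.eventually_cfSol_ne_zero,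
      (tendsto_add_atTop_nat 1).eventually hp.eventually_cfSol_ne_zero] with n h0 h1
    rw [div_mul_eq_mul_div, div_eq_one_iff_eq h0, hp.cfSol_rec n]
    field_simp
  · refine isBigO_of_mod_three 2 fun i hi => ?_
    obtain ⟨Q, R, qq, rr, hQ, hR, hs, hq, hr⟩ :=
      expand1_cfq_cfr (a1 := a1) (a2 := a2) (b1 := b1) (b2 := b2) i hi
    exact isBigO_residual hQ hR hs hq hr

/-- Ratios exact to order `1/n²` turn the convergence of `n^(2s) xₙ` into convergence at rate `1/n`. -/
lemma Params.expand0_cfSol (hp : Params a1 a2 b1 b2) :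
    Expand0 (fun n : ℕ => (n : ℂ) ^ (2 * (b1 + b2 - a1 - a2 - 1)) * cfSol a1 a2 b1 b2 n)
      (cfLimit a1 a2 b1 b2) := by
  have h := (expand1_one_add_inv_cpow (2 * (b1 + b2 - a1 - a2 - 1))).mul hp.expand1_cfSol_ratio
  rw [mul_one, mul_one, one_mul, neg_add_cancel] at h
  refine expand0_of_ratio hp.tendsto_cfSol h ?_
  filter_upwards [eventually_ne_atTop 0, hp.eventually_cfSol_ne_zero] with n hn h2
  rw [natCast_succ_cpow _ hn]
  field_simp

/-- The coefficients of the affine recursion for the products `Bₙ xₙ` tend to `1/4`. -/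
lemma Params.expand0_coeff (hp : Params a1 a2 b1 b2) :
    Expand0 (fun n => -cfr a1 a2 b1 b2 (n + 1) * cfSol a1 a2 b1 b2 (n + 2) /
      cfSol a1 a2 b1 b2 n) (1 / 4) := by
  have h := expand0_neg_cfr_succ (a1 := a1) (a2 := a2) (b1 := b1) (b2 := b2)|>.mul
    (hp.expand1_cfSol_ratio.expand0.mul hp.expand1_cfSol_ratio.expand0.shift)
  rw [mul_one, mul_one] at h
  refine h.congr ?_
  filter_upwards [hp.eventually_cfSol_ne_zero,
    (tendsto_add_atTop_nat 1).eventually hp.eventually_cfSol_ne_zero] with n h0 h1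
  field_simp

/-- The denominators of the convergents, normalised by the recurrence solution. -/
lemma Params.expand0_continuant (hp : Params a1 a2 b1 b2) :
    Expand0 (fun n => continuant (cfq a1 a2 b1 b2) (cfr a1 a2 b1 b2) 0 n * cfSol a1 a2 b1 b2 n)
      (4 / 3) := by
  have h := expand0_affine (a := 1) hp.expand0_coeff (w := fun n =>
    continuant (cfq a1 a2 b1 b2) (cfr a1 a2 b1 b2) 0 n * cfSol a1 a2 b1 b2 n) ?_
  · rwa [mul_one] at h
  · filter_upwards [hp.eventually_cfSol_ne_zero] with n hn
    have := continuant_affine hp.cfSol_rec 0 n (by rwa [zero_add])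
    simpa only [zero_add, show cfSol a1 a2 b1 b2 0 = 1 from rfl] using this

end Chain

/-! ### The product of the partial numerators -/

section Chain

variable {a1 a2 b1 b2 : ℂ}

/-- Closed form of the product of the partial numerators over whole blocks of three. -/
lemma Params.prod_cfr (hp : Params a1 a2 b1 b2) (m : ℕ) :
    ∏ i ∈ Finset.range (3 * m + 1), (-cfr a1 a2 b1 b2 (i + 1)) =
      Gamma a1 * Gamma a2 / (Gamma b1 * Gamma b2 * Gamma (b1 - a1) * Gamma (b1 - a2) *
          Gamma (b2 - a1) * Gamma (b2 - a2)) *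
        (Gamma (b1 + m) * Gamma (b2 + m) * Gamma (b1 - a1 + m) * Gamma (b1 - a2 + m) *
          Gamma (b2 - a1 + m) * Gamma (b2 - a2 + m) /
        (Gamma (1 + (2 * m : ℕ)) * Gamma (a1 + (2 * m : ℕ)) * Gamma (a2 + (2 * m : ℕ)))) := by
  induction m with
  | zero =>
    have := hp.na1.gamma_ne_zero
    have := hp.na2.gamma_ne_zero
    have := hp.nb1.gamma_ne_zero
    have := hp.nb2.gamma_ne_zero
    have := hp.b1a1.gamma_ne_zero
    have := hp.b1a2.gamma_ne_zero
    have := hp.b2a1.gamma_ne_zero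
    have := hp.b2a2.gamma_ne_zero
    simp [cfr, cfr1]
    field_simp
  | succ m ih =>
    have key : ∀ {z : ℂ}, NonPole z → ∀ k : ℕ, Gamma (z + (k + 1 : ℕ)) = (z + k) * Gamma (z + k) :=
      fun h k => by rw [← Gamma_add_one _ (h.add_nat_ne_zero k)]; push_cast; rw [add_assoc]
    rw [show 3 * (m + 1) + 1 = 3 * m + 1 + 1 + 1 + 1 by ring, Finset.prod_range_succ,
      Finset.prod_range_succ, Finset.prod_range_succ, ih,
      show 3 * m + 1 + 1 = 3 * m + 2 by ring, cfr_three_mul_add_two,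
      show 3 * m + 2 + 1 = 3 * (m + 1) by ring, cfr_three_mul, cfr_three_mul_add_one,
      show 2 * (m + 1) = 2 * m + 1 + 1 by ring, cfr0, cfr1, cfr2,
      if_neg m.succ_ne_zero, if_neg m.succ_ne_zero]
    simp only [key hp.nb1, key hp.nb2, key hp.b1a1, key hp.b1a2, key hp.b2a1, key hp.b2a2,
      key hp.na1, key hp.na2, key nonPole_one]
    have f2 : -(-((↑m + b1 - a1) * (↑m + b2 - a1)) / ((2 * ↑m + a1) * (2 * ↑m + a2))) =
        (b1 - a1 + m) * (b2 - a1 + m) / ((a1 + (2 * m : ℕ)) * (a2 + (2 * m : ℕ))) := by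
      rw [neg_div, neg_neg]; push_cast; congr 1 <;> ring
    have f0 : -(-((((m + 1 : ℕ) : ℂ) + b1 - a2 - 1) * (((m + 1 : ℕ) : ℂ) + b2 - a2 - 1)) /
        ((2 * ((m + 1 : ℕ) : ℂ) - 1) * (2 * ((m + 1 : ℕ) : ℂ) + a2 - 1))) =
        (b1 - a2 + m) * (b2 - a2 + m) / ((1 + (2 * m : ℕ)) * (a2 + (2 * m + 1 : ℕ))) := by
      rw [neg_div, neg_neg]; push_cast; congr 1 <;> ring
    have f1 : -(-((((m + 1 : ℕ) : ℂ) + b1 - 1) * (((m + 1 : ℕ) : ℂ) + b2 - 1)) /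
        (2 * ((m + 1 : ℕ) : ℂ) * (2 * ((m + 1 : ℕ) : ℂ) + a1 - 1))) =
        (b1 + m) * (b2 + m) / ((1 + (2 * m + 1 : ℕ)) * (a1 + (2 * m + 1 : ℕ))) := by
      rw [neg_div, neg_neg]; push_cast; congr 1 <;> ring
    rw [f0, f1, f2]
    generalize Gamma a1 * Gamma a2 / (Gamma b1 * Gamma b2 * Gamma (b1 - a1) * Gamma (b1 - a2) *
      Gamma (b2 - a1) * Gamma (b2 - a2)) = κ
    generalize (1 + ((2 * m + 1 : ℕ) : ℂ)) = x0
    generalize (a1 + ((2 * m + 1 : ℕ) : ℂ)) = x1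
    generalize (a2 + ((2 * m + 1 : ℕ) : ℂ)) = x2
    generalize Gamma (1 + ((2 * m : ℕ) : ℂ)) = G0
    generalize Gamma (a1 + ((2 * m : ℕ) : ℂ)) = G1
    generalize Gamma (a2 + ((2 * m : ℕ) : ℂ)) = G2
    generalize (1 + ((2 * m : ℕ) : ℂ)) = y0
    generalize (a1 + ((2 * m : ℕ) : ℂ)) = y1
    generalize (a2 + ((2 * m : ℕ) : ℂ)) = y2
    ring

/-- The constant in the asymptotics of the products of partial numerators. -/
noncomputable def cfProdConst (a1 a2 b1 b2 : ℂ) : ℂ :=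
  Gamma a1 * Gamma a2 / (Gamma b1 * Gamma b2 * Gamma (b1 - a1) * Gamma (b1 - a2) *
    Gamma (b2 - a1) * Gamma (b2 - a2)) * (4 * (Real.sqrt Real.pi : ℂ) ^ 3) *
    ((2 : ℂ) ^ (a1 + a2))⁻¹ * ((3 : ℂ) ^ (3 * (b1 + b2 - a1 - a2 - 1) + 1 / 2))⁻¹

lemma Params.expand0_prod_three_mul (hp : Params a1 a2 b1 b2) :
    Expand0 (fun m : ℕ => (∏ i ∈ Finset.range (3 * m + 1), (-cfr a1 a2 b1 b2 (i + 1))) *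
      4 ^ (3 * m) * (((3 * m : ℕ) : ℂ) ^ (3 * (b1 + b2 - a1 - a2 - 1) + 1 / 2))⁻¹)
      (cfProdConst a1 a2 b1 b2) := by
  have h := (((((((expand0_gammaQuot hp.nb1).mul (expand0_gammaQuot hp.nb2)).mul
    (expand0_gammaQuot hp.b1a1)).mul (expand0_gammaQuot hp.b1a2)).mul
    (expand0_gammaQuot hp.b2a1)).mul (expand0_gammaQuot hp.b2a2)).mul
    ((((expand0_gammaQuot nonPole_one).mul (expand0_gammaQuot hp.na1)).mul
    (expand0_gammaQuot hp.na2)).comp_mul two_ne_zero |>.inv (by norm_num))).mul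
    (expand0_gamma_sq_div.pow 3)
  have h2 := h.mul (expand0_const (Gamma a1 * Gamma a2 / (Gamma b1 * Gamma b2 *
    Gamma (b1 - a1) * Gamma (b1 - a2) * Gamma (b2 - a1) * Gamma (b2 - a2)) *
    ((2 : ℂ) ^ (1 + a1 + a2))⁻¹ * ((3 : ℂ) ^ (3 * (b1 + b2 - a1 - a2 - 1) + 1 / 2))⁻¹))
  convert h2.congr ?_ using 1
  · rw [cfProdConst, add_assoc, cpow_add 1 _ two_ne_zero, cpow_one]
    ring
  · filter_upwards [eventually_ne_atTop 0] with m hm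
    have hm' : (m : ℂ) ≠ 0 := by exact_mod_cast hm
    have h2m : 2 * m ≠ 0 := by omega
    have hG := Gamma_natCast_ne_zero h2m
    have mulc : ∀ (k : ℕ) (z : ℂ), ((k * m : ℕ) : ℂ) ^ z = (k : ℂ) ^ z * (m : ℂ) ^ z := by
      intro k z
      have := mul_cpow_ofReal_nonneg k.cast_nonneg m.cast_nonneg z
      push_cast at this ⊢
      exact this
    have pow4 : (4 : ℂ) ^ (3 * m) = ((2 : ℂ) ^ (2 * m)) ^ 3 := by
      rw [← pow_mul, show (4 : ℂ) = 2 ^ 2 by norm_num, ← pow_mul]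
      congr 1
      ring
    have hexp : (m : ℂ) ^ b1 * (m : ℂ) ^ b2 * (m : ℂ) ^ (b1 - a1) * (m : ℂ) ^ (b1 - a2) *
        (m : ℂ) ^ (b2 - a1) * (m : ℂ) ^ (b2 - a2) =
        (m : ℂ) ^ (3 * (b1 + b2 - a1 - a2 - 1) + 1 / 2) *
          ((m : ℂ) ^ (1 / 2 : ℂ)) ^ 3 * ((m : ℂ) ^ (1 : ℂ) * (m : ℂ) ^ a1 * (m : ℂ) ^ a2) := by
      simp only [← cpow_nat_mul, ← cpow_add _ _ hm']
      congr 1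
      push_cast
      ring
    rw [hp.prod_cfr, Gamma_eq_gammaQuot b1 hm, Gamma_eq_gammaQuot b2 hm,
      Gamma_eq_gammaQuot (b1 - a1) hm, Gamma_eq_gammaQuot (b1 - a2) hm,
      Gamma_eq_gammaQuot (b2 - a1) hm, Gamma_eq_gammaQuot (b2 - a2) hm,
      Gamma_eq_gammaQuot 1 h2m, Gamma_eq_gammaQuot a1 h2m, Gamma_eq_gammaQuot a2 h2m,
      mulc 2, mulc 2, mulc 2, mulc 3, pow4, cpow_add _ _ two_ne_zero, cpow_add _ _ two_ne_zero]
    have n1 := natCast_cpow_ne_zero hm (3 * (b1 + b2 - a1 - a2 - 1) + 1 / 2)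
    have n2 := natCast_cpow_ne_zero hm 1
    have n3 := natCast_cpow_ne_zero hm a1
    have n4 := natCast_cpow_ne_zero hm a2
    have d1 : (2 : ℂ) ^ a1 ≠ 0 := natCast_cpow_ne_zero two_ne_zero a1
    have d2 : (2 : ℂ) ^ a2 ≠ 0 := natCast_cpow_ne_zero two_ne_zero a2
    have d3 : (3 : ℂ) ^ (3 * (b1 + b2 - a1 - a2 - 1) + 1 / 2) ≠ 0 :=
      natCast_cpow_ne_zero three_ne_zero _
    push_cast
    generalize Gamma a1 * Gamma a2 / (Gamma b1 * Gamma b2 *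
      Gamma (b1 - a1) * Gamma (b1 - a2) * Gamma (b2 - a1) * Gamma (b2 - a2)) = κ
    generalize (m : ℂ) ^ (3 * (b1 + b2 - a1 - a2 - 1) + 1 / 2) = X at *
    generalize (3 : ℂ) ^ (3 * (b1 + b2 - a1 - a2 - 1) + 1 / 2) = X3 at *
    generalize (m : ℂ) ^ (1 : ℂ) = Y1 at *
    generalize (m : ℂ) ^ a1 = Y2 at *
    generalize (m : ℂ) ^ a2 = Y3 at *
    generalize (m : ℂ) ^ (1 / 2 : ℂ) = W at *
    generalize (2 : ℂ) ^ (2 * m) = Z at *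
    generalize (2 : ℂ) ^ a1 = D1 at *
    generalize (2 : ℂ) ^ a2 = D2 at *
    rw [cpow_one]
    generalize (m : ℂ) ^ b1 = M1 at *
    generalize (m : ℂ) ^ b2 = M2 at *
    generalize (m : ℂ) ^ (b1 - a1) = M3 at *
    generalize (m : ℂ) ^ (b1 - a2) = M4 at *
    generalize (m : ℂ) ^ (b2 - a1) = M5 at *
    generalize (m : ℂ) ^ (b2 - a2) = M6 at *
    generalize gammaQuot b1 m = Q1
    generalize gammaQuot b2 m = Q2
    generalize gammaQuot (b1 - a1) m = Q3
    generalize gammaQuot (b1 - a2) m = Q4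
    generalize gammaQuot (b2 - a1) m = Q5
    generalize gammaQuot (b2 - a2) m = Q6
    have e : κ * ((Q1 * (Gamma m * M1)) * (Q2 * (Gamma m * M2)) * (Q3 * (Gamma m * M3)) *
        (Q4 * (Gamma m * M4)) * (Q5 * (Gamma m * M5)) * (Q6 * (Gamma m * M6))) =
        κ * (Q1 * Q2 * Q3 * Q4 * Q5 * Q6 * Gamma m ^ 6) * (X * W ^ 3 * (Y1 * Y2 * Y3)) := by
      rw [← hexp]; ring
    rw [← mul_div_assoc, e]
    generalize Gamma (m : ℂ) = g
    push_cast at hG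
    generalize Gamma (2 * (m : ℂ)) = H at *
    generalize gammaQuot 1 (2 * m) = q0
    generalize gammaQuot a1 (2 * m) = q1
    generalize gammaQuot a2 (2 * m) = q2
    have one : X * X⁻¹ * (Y1 * Y1⁻¹) * (Y2 * Y2⁻¹) * (Y3 * Y3⁻¹) = 1 := by
      rw [mul_inv_cancel₀ n1, mul_inv_cancel₀ n2, mul_inv_cancel₀ n3, mul_inv_cancel₀ n4]
      norm_num
    refine ((mul_one _).symm.trans (congrArg _ one.symm)).trans ?_
    clear hexp e mulc h h2 one n1 n2 n3 n4 d1 d2 d3 hG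
    ring

end Chain

/-! ### The error formula -/

section Chain

variable {a1 a2 b1 b2 : ℂ}

/-- Asymptotics of the product of the partial numerators along all integers: the blocks of three
are handled by the closed form, the remaining residues by one or two further factors `1 / 4`. -/
lemma Params.expand0_prod (hp : Params a1 a2 b1 b2) :
    Expand0 (fun n => (∏ i ∈ Finset.range (n + 1), (-cfr a1 a2 b1 b2 (i + 1))) * 4 ^ n *
      ((n : ℂ) ^ (3 * (b1 + b2 - a1 - a2 - 1) + 1 / 2))⁻¹) (cfProdConst a1 a2 b1 b2) := by
  set P : ℕ → ℂ := fun n => (∏ i ∈ Finset.range (n + 1), (-cfr a1 a2 b1 b2 (i + 1))) * 4 ^ n *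
      ((n : ℂ) ^ (3 * (b1 + b2 - a1 - a2 - 1) + 1 / 2))⁻¹ with hP
  obtain ⟨g, hg, hstep⟩ : ∃ g : ℕ → ℂ, Expand0 g 1 ∧ ∀ n, n ≠ 0 → P (n + 1) = P n * g n := by
    refine ⟨fun n => -cfr a1 a2 b1 b2 (n + 1 + 1) * 4 *
      ((1 + 1 / (n : ℂ)) ^ (3 * (b1 + b2 - a1 - a2 - 1) + 1 / 2))⁻¹, ?_, fun n hn => ?_⟩
    · have h := ((expand0_neg_cfr_succ (a1 := a1) (a2 := a2) (b1 := b1) (b2 := b2)).shift.mul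
        (expand0_const 4)).mul ((expand1_one_add_inv_cpow
          (3 * (b1 + b2 - a1 - a2 - 1) + 1 / 2)).expand0.inv one_ne_zero)
      have e : (1 / 4 * 4 * 1⁻¹ : ℂ) = 1 := by norm_num
      rwa [e] at h
    · simp only [hP]
      rw [natCast_succ_cpow _ hn, Finset.prod_range_succ _ (n + 1), mul_inv, pow_succ]
      ring
  have h0 : Expand0 (fun m => P (3 * m)) (cfProdConst a1 a2 b1 b2) := hp.expand0_prod_three_mul
  have h1 : Expand0 (fun m => P (3 * m + 1)) (cfProdConst a1 a2 b1 b2) := by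
    have h := h0.mul (hg.comp_mul three_ne_zero)
    rw [mul_one] at h
    refine h.congr ?_
    filter_upwards [eventually_ne_atTop 0] with m hm
    rw [hstep (3 * m) (by omega)]
  have h2 : Expand0 (fun m => P (3 * m + 2)) (cfProdConst a1 a2 b1 b2) := by
    have h := h1.mul (hg.shift.comp_mul three_ne_zero)
    rw [mul_one] at h
    exact h.congr (Eventually.of_forall fun m => (hstep (3 * m + 1) (by omega)).symm)
  refine Expand0.of_mod_three fun i hi => ?_
  interval_cases i
  exacts [h0, h1, h2]

/-- The error of the `n`-th convergent, scaled by `4 ^ n * n ^ (s - 1/2)`. -/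
lemma Params.expand0_error (hp : Params a1 a2 b1 b2) :
    Expand0 (fun n => (threeF2one a1 a2 b1 b2 -
        cfFrom (cfq a1 a2 b1 b2) (cfr a1 a2 b1 b2) 0 n) *
        (4 ^ n * (n : ℂ) ^ (b1 + b2 - a1 - a2 - 1 - 1 / 2)))
      (cfProdConst a1 a2 b1 b2 * cfLimit a1 a2 b1 b2 ^ 2 * (3 / 4)) := by
  have hρ := hp.expand1_cfSol_ratio.expand0
  have h := (((hp.expand0_prod.mul (hp.expand0_cfSol.pow 2)).mul
    ((hρ.pow 2).mul hρ.shift)).mul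
    (hp.expand0_continuant.shift.inv (by norm_num)))
  have e : cfProdConst a1 a2 b1 b2 * cfLimit a1 a2 b1 b2 ^ 2 * (1 ^ 2 * 1) * (4 / 3 : ℂ)⁻¹ =
      cfProdConst a1 a2 b1 b2 * cfLimit a1 a2 b1 b2 ^ 2 * (3 / 4) := by norm_num
  rw [e] at h
  refine h.congr ?_
  filter_upwards [eventually_ne_atTop 0, hp.eventually_cfSol_ne_zero,
    (tendsto_add_atTop_nat 1).eventually hp.eventually_cfSol_ne_zero,
    cf_error hp.cfSol_rec rfl (by simp [cfr, cfr0]) hp.cfr_ne_zero hp.eventually_cfSol_ne_zero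
      hp.expand0_coeff.tendsto] with n hn x0 x1 herr
  obtain ⟨hu, herr⟩ := herr
  rw [hp.cfSol_one] at herr
  rw [herr]
  have hn' : (n : ℂ) ≠ 0 := by exact_mod_cast hn
  have hpow : (n : ℂ) ^ (b1 + b2 - a1 - a2 - 1 - 1 / 2) =
      ((n : ℂ) ^ (2 * (b1 + b2 - a1 - a2 - 1))) ^ 2 *
        ((n : ℂ) ^ (3 * (b1 + b2 - a1 - a2 - 1) + 1 / 2))⁻¹ := by
    rw [← cpow_neg, pow_two, ← cpow_add _ _ hn', ← cpow_add _ _ hn']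
    congr 1
    ring
  rw [hpow]
  have := natCast_cpow_ne_zero hn (3 * (b1 + b2 - a1 - a2 - 1) + 1 / 2)
  field_simp

lemma tendsto_four_pow_mul_cpow {z : ℂ} (hz : -1 < z.re) :
    Tendsto (fun n : ℕ => (4 ^ n * (n : ℂ) ^ z)⁻¹) atTop (𝓝 0) := by
  have h := tendsto_self_mul_const_pow_of_lt_one (r := (1 / 4 : ℝ)) (by norm_num) (by norm_num)
  refine squeeze_zero_norm' ?_ h
  filter_upwards [eventually_ge_atTop 1] with n hn
  have h1 : (1 : ℝ) ≤ n := by exact_mod_cast hn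
  rw [norm_inv, norm_mul, norm_pow, norm_natCast_cpow_of_pos (by omega), mul_inv, mul_comm,
    ← Real.rpow_neg (by positivity), one_div, inv_pow]
  have h2 : (n : ℝ) ^ (-z.re) ≤ n := by
    calc (n : ℝ) ^ (-z.re) ≤ (n : ℝ) ^ (1 : ℝ) :=
          Real.rpow_le_rpow_of_exponent_le h1 (by linarith)
      _ = n := Real.rpow_one _
  simp only [Complex.norm_ofNat]
  gcongr

lemma Params.tendsto_cfFrom (hp : Params a1 a2 b1 b2) :
    Tendsto (fun n : ℕ => cfFrom (cfq a1 a2 b1 b2) (cfr a1 a2 b1 b2) 0 n) atTop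
      (𝓝 (threeF2one a1 a2 b1 b2)) := by
  have hz : -1 < (b1 + b2 - a1 - a2 - 1 - 1 / 2).re := by
    have := hp.s
    have h2 : (1 / 2 : ℂ).re = 1 / 2 := by norm_num
    rw [sub_re _ (1 / 2 : ℂ), h2]
    linarith
  have h := hp.expand0_error.tendsto.mul (tendsto_four_pow_mul_cpow hz)
  rw [mul_zero] at h
  have h' := h.const_sub (threeF2one a1 a2 b1 b2)
  rw [sub_zero] at h'
  refine h'.congr' ?_
  filter_upwards [eventually_ne_atTop 0] with n hn
  rw [mul_inv_cancel_right₀ (mul_ne_zero (pow_ne_zero n (OfNat.ofNat_ne_zero 4 : (4 : ℂ) ≠ 0))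
    (natCast_cpow_ne_zero hn _))]
  ring

/-- The constant `C` of the error formula. -/
noncomputable def errConst (a1 a2 b1 b2 : ℂ) : ℂ :=
  ((Real.pi ^ ((3 : ℝ) / 2) : ℝ) : ℂ) * Gamma b1 * Gamma b2 *
      Gamma (b1 + b2 - a1 - a2 - 1) ^ 2 /
    (Gamma a1 * Gamma a2 * Gamma (b1 - a1) * Gamma (b1 - a2) *
      Gamma (b2 - a1) * Gamma (b2 - a2))

lemma Params.errConst_ne_zero (hp : Params a1 a2 b1 b2) : errConst a1 a2 b1 b2 ≠ 0 := by
  have hpi : ((Real.pi ^ ((3 : ℝ) / 2) : ℝ) : ℂ) ≠ 0 := by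
    exact_mod_cast (Real.rpow_pos_of_pos Real.pi_pos _).ne'
  have := hp.na1.gamma_ne_zero
  have := hp.na2.gamma_ne_zero
  have := hp.nb1.gamma_ne_zero
  have := hp.nb2.gamma_ne_zero
  have := hp.b1a1.gamma_ne_zero
  have := hp.b1a2.gamma_ne_zero
  have := hp.b2a1.gamma_ne_zero
  have := hp.b2a2.gamma_ne_zero
  have := Gamma_ne_zero_of_re_pos hp.s
  unfold errConst
  positivity

/-- The limit of the scaled error, rewritten through `C`. -/
lemma Params.limit_eq (hp : Params a1 a2 b1 b2) :
    cfProdConst a1 a2 b1 b2 * cfLimit a1 a2 b1 b2 ^ 2 * (3 / 4) =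
      errConst a1 a2 b1 b2 * 3 ^ (1 / 2 - (b1 + b2 - a1 - a2 - 1)) * (2 ^ (a1 + a2))⁻¹ := by
  have hpi : ((Real.pi ^ ((3 : ℝ) / 2) : ℝ) : ℂ) = ((√Real.pi : ℝ) : ℂ) ^ 3 := by
    rw [← ofReal_pow, Real.sqrt_eq_rpow, ← Real.rpow_natCast, ← Real.rpow_mul Real.pi_pos.le]
    norm_num
  have h3 : (3 : ℂ) ^ (1 / 2 - (b1 + b2 - a1 - a2 - 1)) =
      ((3 : ℂ) ^ (b1 + b2 - a1 - a2 - 1)) ^ 2 *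
        (3 ^ (3 * (b1 + b2 - a1 - a2 - 1) + 1 / 2))⁻¹ * 3 := by
    conv_rhs => rw [← cpow_neg, pow_two, ← cpow_add _ _ three_ne_zero,
      ← cpow_add _ _ three_ne_zero]
    have h : (3 : ℂ) ^ (1 / 2 - (b1 + b2 - a1 - a2 - 1)) =
        3 ^ (1 / 2 - (b1 + b2 - a1 - a2 - 1) - 1) * 3 := by
      rw [cpow_sub _ 1 three_ne_zero, cpow_one, div_mul_cancel₀ _ three_ne_zero]
    rw [h]
    congr 2
    ring
  have := hp.na1.gamma_ne_zero
  have := hp.na2.gamma_ne_zero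
  have := hp.nb1.gamma_ne_zero
  have := hp.nb2.gamma_ne_zero
  rw [h3, errConst, hpi, cfProdConst, cfLimit, cfNorm]
  field_simp

/-- The main term of the error formula as a constant over the scaling factor of
`Params.expand0_error`. -/
lemma errTerm_eq {n : ℕ} (hn : n ≠ 0) (c s : ℂ) :
    c * (3 * (n : ℂ)) ^ ((1 : ℂ) / 2 - s) * (2 : ℂ) ^ (-(2 * (n : ℂ) + a1 + a2)) =
      c * 3 ^ (1 / 2 - s) * (2 ^ (a1 + a2))⁻¹ * (4 ^ n * (n : ℂ) ^ (s - 1 / 2))⁻¹ := by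
  have h1 : (3 * (n : ℂ)) ^ ((1 : ℂ) / 2 - s) = 3 ^ (1 / 2 - s) * (n : ℂ) ^ (1 / 2 - s) := by
    have := natCast_mul_natCast_cpow 3 n (1 / 2 - s)
    exact_mod_cast this
  have h2 : (2 : ℂ) ^ (-(2 * (n : ℂ) + a1 + a2)) = (4 ^ n)⁻¹ * (2 ^ (a1 + a2))⁻¹ := by
    rw [cpow_neg, add_assoc, cpow_add _ _ two_ne_zero, mul_inv]
    congr 2
    have : (2 : ℂ) * n = ((2 * n : ℕ) : ℂ) := by push_cast; ring
    rw [this, cpow_natCast, pow_mul]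
    norm_num
  have h3 : (n : ℂ) ^ (s - 1 / 2) = ((n : ℂ) ^ (1 / 2 - s))⁻¹ := by
    rw [← cpow_neg, neg_sub]
  rw [h1, h2, h3]
  have := natCast_cpow_ne_zero hn (1 / 2 - s)
  field_simp

lemma Params.error_bound (hp : Params a1 a2 b1 b2) :
    ∃ K : ℝ, 0 < K ∧ ∃ N : ℕ, ∀ n : ℕ, N ≤ n → ∃ E : ℂ,
      threeF2one a1 a2 b1 b2 - cfFrom (cfq a1 a2 b1 b2) (cfr a1 a2 b1 b2) 0 n =
        errConst a1 a2 b1 b2 * (3 * (n : ℂ)) ^ ((1 : ℂ) / 2 - (b1 + b2 - a1 - a2 - 1)) *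
          (2 : ℂ) ^ (-(2 * (n : ℂ) + a1 + a2)) * (1 + E) ∧
        ‖E‖ ≤ K * (n : ℝ) ^ (-(1 : ℝ) / 2) := by
  have hE := hp.expand0_error
  rw [hp.limit_eq] at hE
  set M : ℂ := errConst a1 a2 b1 b2 * 3 ^ (1 / 2 - (b1 + b2 - a1 - a2 - 1)) *
    (2 ^ (a1 + a2))⁻¹ with hM
  have hM0 : M ≠ 0 := mul_ne_zero (mul_ne_zero hp.errConst_ne_zero
    (natCast_cpow_ne_zero three_ne_zero _)) (inv_ne_zero (natCast_cpow_ne_zero two_ne_zero _))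
  have h1 := (expand0_const M⁻¹).mul hE
  rw [inv_mul_cancel₀ hM0] at h1
  obtain ⟨K, hK, hb⟩ := IsBigO.exists_pos h1
  obtain ⟨N, hN⟩ := eventually_atTop.1 hb.bound
  refine ⟨K, hK, max N 1, fun n hn => ?_⟩
  have hn1 : 1 ≤ n := le_of_max_le_right hn
  have hn0 : n ≠ 0 := by omega
  refine ⟨_, ?_, (hN n (le_of_max_le_left hn)).trans ?_⟩
  · rw [errTerm_eq hn0, ← hM, add_sub_cancel]
    have h4 := mul_ne_zero (pow_ne_zero n (OfNat.ofNat_ne_zero 4 : (4 : ℂ) ≠ 0))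
      (natCast_cpow_ne_zero hn0 (b1 + b2 - a1 - a2 - 1 - 1 / 2))
    dsimp only
    generalize (4 ^ n * (n : ℂ) ^ (b1 + b2 - a1 - a2 - 1 - 1 / 2)) = X at h4 ⊢
    field_simp
  · have : (1 : ℝ) ≤ n := by exact_mod_cast hn1
    gcongr
    rw [Real.norm_of_nonneg (by positivity), ← Real.rpow_neg_one]
    exact Real.rpow_le_rpow_of_exponent_le this (by norm_num)

end Chain

lemma nonPole_of_int {z : ℂ} (h : ∀ k : ℤ, k ≤ 0 → z ≠ (k : ℂ)) : NonPole z := fun k => by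
  have := h (-(k : ℤ)) (by omega)
  push_cast at this
  exact this

/-- Under (i) `a₁,a₂,b₁,b₂ ∉ ℤ≤0`, (ii) `Re s > 0` with
`s := b₁+b₂−a₁−a₂−1`, and (iii) `bᵢ − aⱼ ∉ ℤ≤0`, the continued fraction
`K_{j=0}^∞ r(j)/q(j)` converges to `₃F₂(1,a₁,a₂;b₁,b₂)`, and there are `K > 0`,
`N ∈ ℕ` such that for all `n ≥ N`,
`₃F₂(1,a₁,a₂;b₁,b₂) − K_{j=0}^{n} r(j)/q(j)
   = C·(3n)^{1/2−s}·2^{−(2n+a₁+a₂)}·(1+E(n))` with `|E(n)| ≤ K·n^{−1/2}`, where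
`C = π^{3/2}Γ(b₁)Γ(b₂)Γ(s)²/(Γ(a₁)Γ(a₂)Γ(b₁−a₁)Γ(b₁−a₂)Γ(b₂−a₁)Γ(b₂−a₂))`. -/
theorem threeF2_continued_fraction_error (a1 a2 b1 b2 : ℂ)
    (ha1 : ∀ k : ℤ, k ≤ 0 → a1 ≠ (k : ℂ)) (ha2 : ∀ k : ℤ, k ≤ 0 → a2 ≠ (k : ℂ))
    (hb1 : ∀ k : ℤ, k ≤ 0 → b1 ≠ (k : ℂ)) (hb2 : ∀ k : ℤ, k ≤ 0 → b2 ≠ (k : ℂ))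
    (hs : 0 < (b1 + b2 - a1 - a2 - 1).re)
    (hba : ∀ k : ℤ, k ≤ 0 →
      b1 - a1 ≠ (k : ℂ) ∧ b1 - a2 ≠ (k : ℂ) ∧ b2 - a1 ≠ (k : ℂ) ∧ b2 - a2 ≠ (k : ℂ)) :
    Filter.Tendsto (fun n : ℕ => cfFrom (cfq a1 a2 b1 b2) (cfr a1 a2 b1 b2) 0 n)
      Filter.atTop (nhds (threeF2one a1 a2 b1 b2)) ∧
    ∃ K : ℝ, 0 < K ∧ ∃ N : ℕ, ∀ n : ℕ, N ≤ n → ∃ E : ℂ,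
      threeF2one a1 a2 b1 b2 - cfFrom (cfq a1 a2 b1 b2) (cfr a1 a2 b1 b2) 0 n =
        (((Real.pi ^ ((3 : ℝ) / 2) : ℝ) : ℂ) * Gamma b1 * Gamma b2 *
              Gamma (b1 + b2 - a1 - a2 - 1) ^ 2 /
            (Gamma a1 * Gamma a2 * Gamma (b1 - a1) * Gamma (b1 - a2) *
              Gamma (b2 - a1) * Gamma (b2 - a2))) *
          (3 * (n : ℂ)) ^ ((1 : ℂ) / 2 - (b1 + b2 - a1 - a2 - 1)) *
          (2 : ℂ) ^ (-(2 * (n : ℂ) + a1 + a2)) * (1 + E) ∧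
        ‖E‖ ≤ K * (n : ℝ) ^ (-(1 : ℝ) / 2) := by
  have hp : Params a1 a2 b1 b2 :=
    { na1 := nonPole_of_int ha1
      na2 := nonPole_of_int ha2
      nb1 := nonPole_of_int hb1
      nb2 := nonPole_of_int hb2
      b1a1 := nonPole_of_int fun k hk => (hba k hk).1
      b1a2 := nonPole_of_int fun k hk => (hba k hk).2.1
      b2a1 := nonPole_of_int fun k hk => (hba k hk).2.2.1
      b2a2 := nonPole_of_int fun k hk => (hba k hk).2.2.2
      s := hs }
  exact ⟨hp.tendsto_cfFrom, hp.error_bound⟩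
end

section
/- Let p ≥ 1 and a = (a₀,a₁,…,a_p; b₁,…,b_p) ∈ ℂ^{p+1}×ℂ^p with a₀ ∉ ℤ≤0, Re bᵢ > Re aᵢ > 0 for i = 1,…,p, and Re s(a) > 0 where s(a) := b₁+⋯+b_p − a₀−a₁−⋯−a_p. Then the improper integral E_p(a) := ∫_{(0,1)^p} (∏_{i=1}^p t_i^{a_i−1}(1−t_i)^{b_i−a_i−1}) / (1 − t₁⋯t_p)^{a₀} dt₁⋯dt_p converges absolutely, and the series ₍p+1₎f_p(a) := Σ_{k=0}^∞ Γ(a₀+k)Γ(a₁+k)⋯Γ(a_p+k)/(Γ(1+k)Γ(b₁+k)⋯Γ(b_p+k)) satisfies ₍p+1₎f_p(a) = Γ(a₀)·E_p(a) / ∏_{i=1}^p Γ(bᵢ−aᵢ). -/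
/-!
On the open cube `x = t₁⋯t_p` has modulus less than one, so `(1 - x)^(-a₀)` expands in the
binomial series `∑ (a₀)ₖ/k! xᵏ`. Multiplied by the weight `∏ tᵢ^(aᵢ-1) (1-tᵢ)^(bᵢ-aᵢ-1)`, the `k`-th
term is a product of functions of a single variable, and its integral is
`(a₀)ₖ/k! ∏ B(aᵢ+k, bᵢ-aᵢ)`, which is the `k`-th term of the hypergeometric series up to the factor
`Γ(a₀)/∏ Γ(bᵢ-aᵢ)`.

Both the absolute convergence of the integral and the interchange of sum and integral follow once
the integrals of the norms of the terms are summable (`summable_coeff_norm`). These are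
`|(a₀)ₖ/k!| ∏ B(Re aᵢ+k, Re(bᵢ-aᵢ))`; the asymptotics `|Γ(z+n+1)| ≍ n^(Re z) n!`
(`isTheta_Gamma_add_nat`, from Euler's limit formula for `Γ`) show that they are
`O(k^(-1-Re s(a)))`, and `Re s(a) > 0`.
-/

open Complex MeasureTheory

open Filter Asymptotics Set

/-- Euler's limit formula `n^z n! / (z (z+1) ⋯ (z+n)) → Γ(z)`, read as the growth rate of `Γ` along
the translates of `z` by integers. -/
theorem isTheta_Gamma_add_nat {z : ℂ} (hz : ∀ k : ℕ, z ≠ -k) :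
    (fun n : ℕ => Gamma (z + (n + 1 : ℕ))) =Θ[atTop]
      fun n : ℕ => (n : ℝ) ^ z.re * (n.factorial : ℝ) := by
  have hG : Gamma z ≠ 0 := Gamma_ne_zero hz
  have key : Tendsto (fun n : ℕ => ((n : ℂ) ^ z * (n.factorial : ℂ)) / Gamma (z + (n + 1 : ℕ)))
      atTop (nhds 1) := by
    have h := (GammaSeq_tendsto_Gamma z).div_const (Gamma z)
    rw [div_self hG] at h
    refine h.congr fun n => ?_
    have hp : ∏ j ∈ Finset.range (n + 1), (z + j) = Gamma (z + (n + 1 : ℕ)) / Gamma z := by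
      rw [Gamma_add_nat_div_Gamma_eq z hz]
      generalize n + 1 = m
      induction m with
      | zero => simp
      | succ m ih => rw [Finset.prod_range_succ, ih, ascPochhammer_succ_eval]
    rw [GammaSeq, hp]
    field_simp
  have h1 := (isTheta_of_div_tendsto_nhds_ne_zero key one_ne_zero)
  refine h1.trans (IsTheta.of_norm_eventuallyEq_norm (f := fun n : ℕ => (n : ℂ) ^ z * (n.factorial : ℂ)) ?_)
  filter_upwards [eventually_gt_atTop 0] with n hn
  rw [norm_mul, norm_natCast_cpow_of_pos hn, norm_natCast, norm_mul, Real.norm_of_nonneg (by positivity),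
    Real.norm_of_nonneg (by positivity)]

theorem integrableOn_beta {u v : ℂ} (hu : 0 < u.re) (hv : 0 < v.re) :
    IntegrableOn (fun t : ℝ => (t : ℂ) ^ (u - 1) * (1 - (t : ℂ)) ^ (v - 1)) (Ioo 0 1) := by
  have h := betaIntegral_convergent hu hv
  rwa [intervalIntegrable_iff_integrableOn_Ioo_of_le zero_le_one] at h

theorem integral_beta {u v : ℂ} (hu : 0 < u.re) (hv : 0 < v.re) :
    ∫ t in Ioo (0 : ℝ) 1, (t : ℂ) ^ (u - 1) * (1 - (t : ℂ)) ^ (v - 1) =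
      Gamma u * Gamma v / Gamma (u + v) := by
  have hne : Gamma (u + v) ≠ 0 := Gamma_ne_zero_of_re_pos (by rw [add_re]; positivity)
  rw [Gamma_mul_Gamma_eq_betaIntegral hu hv, mul_div_cancel_left₀ _ hne, betaIntegral,
    intervalIntegral.integral_of_le zero_le_one, integral_Ioc_eq_integral_Ioo]

/-- The integrand of the beta integral at `(u, v)` has as its norm the integrand at
`(Re u, Re v)`. The right-hand side is a norm of complex Gamma values so that the same complex
asymptotics of `Γ` apply to it. -/
theorem integral_norm_beta {u v : ℂ} (hu : 0 < u.re) (hv : 0 < v.re) :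
    ∫ t in Ioo (0 : ℝ) 1, ‖(t : ℂ) ^ (u - 1) * (1 - (t : ℂ)) ^ (v - 1)‖ =
      ‖Gamma u.re * Gamma v.re / Gamma (u.re + v.re)‖ := by
  have hu' : 0 < (u.re : ℂ).re := by simpa
  have hv' : 0 < (v.re : ℂ).re := by simpa
  have h : ((∫ t in Ioo (0 : ℝ) 1, ‖(t : ℂ) ^ (u - 1) * (1 - (t : ℂ)) ^ (v - 1)‖ : ℝ) : ℂ) =
      Gamma u.re * Gamma v.re / Gamma (u.re + v.re) := by
    rw [← integral_beta hu' hv', ← integral_complex_ofReal]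
    refine setIntegral_congr_fun measurableSet_Ioo fun t ht => ?_
    have h1 : 0 < 1 - t := by linarith [ht.2]
    have e1 : (1 : ℂ) - t = ((1 - t : ℝ) : ℂ) := by push_cast; rfl
    simp only [e1, norm_mul, norm_cpow_eq_rpow_re_of_pos ht.1, norm_cpow_eq_rpow_re_of_pos h1]
    simp only [ofReal_mul, ofReal_cpow ht.1.le, ofReal_cpow h1.le, sub_re, one_re,
      ofReal_sub, ofReal_one]
  rw [← h, norm_real, Real.norm_of_nonneg (integral_nonneg fun _ => norm_nonneg _)]

/-- The binomial series with its coefficients `(a₀)ₖ / k!` written as Gamma quotients. -/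
theorem hasSum_one_sub_cpow {a0 : ℂ} (ha0 : ∀ k : ℕ, a0 ≠ -k) {x : ℂ} (hx : ‖x‖ < 1) :
    HasSum (fun k : ℕ => Gamma (a0 + k) / (Gamma a0 * Gamma (1 + k)) * x ^ k)
      (1 / (1 - x) ^ a0) := by
  have h := (one_div_one_sub_cpow_hasFPowerSeriesOnBall_zero a0).hasSum (y := x)
    (by simpa [enorm_eq_nnnorm] using! hx)
  rw [zero_add] at h
  refine h.congr_fun fun k => ?_
  have hf : ((k.factorial : ℕ) : ℂ) ≠ 0 := by exact_mod_cast k.factorial_ne_zero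
  have h2 := Ring.factorial_nsmul_multichoose_eq_ascPochhammer a0 k
  rw [Polynomial.ascPochhammer_smeval_eq_eval, ← Gamma_add_nat_div_Gamma_eq a0 ha0,
    Ring.multichoose_eq, nsmul_eq_mul] at h2
  rw [add_comm 1 (k : ℂ), Gamma_nat_eq_factorial, ← div_div, ← h2, mul_div_cancel_left₀ _ hf]
  simp [FormalMultilinearSeries.ofScalars]

/-- Complements `hasSum_integral_of_summable_integral_norm`, which does not assert integrability of
the sum: that must be proved separately, as the Bochner integral of a non-integrable function
is `0`. -/
theorem integrable_of_hasSum {α : Type*} {m : MeasurableSpace α} {μ : Measure α}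
    {F : ℕ → α → ℂ} {f : α → ℂ} (hF : ∀ k, Integrable (F k) μ)
    (hsum : Summable fun k => ∫ x, ‖F k x‖ ∂μ)
    (hf : ∀ᵐ x ∂μ, HasSum (fun k => F k x) (f x)) : Integrable f μ := by
  refine ⟨aestronglyMeasurable_of_tendsto_ae atTop
    (f := fun n x => ∑ k ∈ Finset.range n, F k x) (fun n => ?_) ?_, ?_⟩
  · exact (integrable_finsetSum _ fun k _ => hF k).aestronglyMeasurable
  · filter_upwards [hf] with x hx using hx.tendsto_sum_nat
  · have h1 : ∫⁻ x, ‖f x‖ₑ ∂μ ≤ ∫⁻ x, ∑' k, ‖F k x‖ₑ ∂μ := by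
      refine lintegral_mono_ae ?_
      filter_upwards [hf] with x hx
      rw [← hx.tsum_eq]
      exact enorm_tsum_le_tsum_enorm
    refine h1.trans_lt ?_
    rw [lintegral_tsum fun k => (hF k).aestronglyMeasurable.enorm]
    have h2 : ∀ k, ∫⁻ x, ‖F k x‖ₑ ∂μ = ENNReal.ofReal (∫ x, ‖F k x‖ ∂μ) := fun k =>
      (ofReal_integral_norm_eq_lintegral_enorm (hF k)).symm
    simp_rw [h2]
    rw [← ENNReal.ofReal_tsum_of_nonneg (fun k => integral_nonneg fun _ => norm_nonneg _) hsum]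
    exact ENNReal.ofReal_lt_top

/-- The integrals over the cube of the norms of the terms of the expanded integrand are summable:
by `isTheta_Gamma_add_nat` the factorials cancel and the term of index `n + 1` is
`O(n ^ (Re a₀ - 1 + ∑ Re (aᵢ - bᵢ)))`, with exponent `-1 - Re s(a)`. -/
theorem summable_coeff_norm {p : ℕ} {a0 : ℂ} {a b : Fin p → ℂ} (ha0 : ∀ k : ℕ, a0 ≠ -k)
    (hab : ∀ i, 0 < (a i).re ∧ (a i).re < (b i).re)
    (hs : 0 < (∑ i, b i - a0 - ∑ i, a i).re) :
    Summable fun k : ℕ => ‖Gamma (a0 + k) / (Gamma a0 * Gamma (1 + k))‖ *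
      ∏ i, ‖Gamma ((a i).re + k) * Gamma (b i - a i).re / Gamma ((b i).re + k)‖ := by
  have hpos : ∀ {x : ℝ}, 0 < x → ∀ k : ℕ, (x : ℂ) ≠ -k := fun {x} hx k h => by
    have := congrArg re h
    simp only [ofReal_re, neg_re, natCast_re] at this
    have : (0 : ℝ) ≤ k := k.cast_nonneg
    linarith
  -- The asymptotics are stated at `z + (n + 1)`, hence the shift of index.
  rw [← summable_nat_add_iff 1]
  have hlt : a0.re - 1 + ∑ i, ((a i).re - (b i).re) < -1 := by
    simp only [sub_re, re_sum] at hs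
    rw [Finset.sum_sub_distrib]
    linarith
  refine summable_of_isBigO_nat (Real.summable_nat_rpow.mpr hlt) ?_
  -- The asymptotics at `z = 1` provide the factor `Γ(1 + (n + 1)) ≍ n · n!` of the denominator.
  have h0 : (fun n : ℕ => ‖Gamma (a0 + (n + 1 : ℕ)) / (Gamma a0 * Gamma (1 + (n + 1 : ℕ)))‖)
      =O[atTop] fun n : ℕ => (n : ℝ) ^ (a0.re - 1) := by
    have h1 := (isTheta_Gamma_add_nat ha0).div
      (isTheta_Gamma_add_nat (z := 1) (by simpa using hpos one_pos))
    have h2 := (h1.isBigO.const_mul_left (Gamma a0)⁻¹).norm_left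
    refine (h2.congr_left fun n => ?_).trans_eventuallyEq ?_
    · congr 1; rw [← div_div, div_eq_mul_inv _ (Gamma a0)]; ring
    · filter_upwards [eventually_gt_atTop 0] with n hn
      have : 0 < (n : ℝ) := by exact_mod_cast hn
      rw [Real.rpow_sub this, one_re]
      field_simp
  have h1 : ∀ i, (fun n : ℕ =>
      ‖Gamma ((a i).re + (n + 1 : ℕ)) * Gamma (b i - a i).re / Gamma ((b i).re + (n + 1 : ℕ))‖)
      =O[atTop] fun n : ℕ => (n : ℝ) ^ ((a i).re - (b i).re) := fun i => by
    have h1 := (isTheta_Gamma_add_nat (hpos (hab i).1)).div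
      (isTheta_Gamma_add_nat (hpos ((hab i).1.trans (hab i).2)))
    have h2 := (h1.isBigO.const_mul_left (Gamma (b i - a i).re)).norm_left
    refine (h2.congr_left fun n => ?_).trans_eventuallyEq ?_
    · congr 1; ring
    · filter_upwards [eventually_gt_atTop 0] with n hn
      have : 0 < (n : ℝ) := by exact_mod_cast hn
      rw [Real.rpow_sub this, ofReal_re, ofReal_re]
      field_simp
  refine (h0.mul (IsBigO.finsetProd fun i (_ : i ∈ Finset.univ) => h1 i)).trans_eventuallyEq ?_
  filter_upwards [eventually_gt_atTop 0] with n hn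
  have : 0 < (n : ℝ) := by exact_mod_cast hn
  rw [Real.rpow_add this, Real.rpow_sum_of_pos this]

/-- Euler integral representation of the renormalized generalized
hypergeometric series `₍p+1₎f_p(a)` at unit argument: if `a₀ ∉ ℤ≤0`,
`Re bᵢ > Re aᵢ > 0` and `Re s(a) > 0`, then the Euler integral `E_p(a)` converges
absolutely and `₍p+1₎f_p(a) = Γ(a₀)·E_p(a) / ∏ Γ(bᵢ−aᵢ)`. -/
theorem euler_integral_representation (p : ℕ) (hp : 1 ≤ p)
    (a0 : ℂ) (a b : Fin p → ℂ)
    (ha0 : ∀ k : ℤ, k ≤ 0 → a0 ≠ (k : ℂ))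
    (hab : ∀ i : Fin p, 0 < (a i).re ∧ (a i).re < (b i).re)
    (hs : 0 < (∑ i, b i - a0 - ∑ i, a i).re) :
    IntegrableOn
      (fun t : Fin p → ℝ =>
        (∏ i, (t i : ℂ) ^ (a i - 1) * ((1 : ℂ) - (t i : ℂ)) ^ (b i - a i - 1)) /
          ((1 : ℂ) - ∏ i, (t i : ℂ)) ^ a0)
      (Set.univ.pi fun _ : Fin p => Set.Ioo (0 : ℝ) 1) volume ∧
    (∑' k : ℕ, (Gamma (a0 + k) * ∏ i, Gamma (a i + k)) /
        (Gamma (1 + k) * ∏ i, Gamma (b i + k))) =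
      Gamma a0 *
          (∫ t in Set.univ.pi fun _ : Fin p => Set.Ioo (0 : ℝ) 1,
            (∏ i, (t i : ℂ) ^ (a i - 1) * ((1 : ℂ) - (t i : ℂ)) ^ (b i - a i - 1)) /
              ((1 : ℂ) - ∏ i, (t i : ℂ)) ^ a0) /
        ∏ i, Gamma (b i - a i) := by
  have ha0' : ∀ k : ℕ, a0 ≠ -k := fun k => by
    simpa using ha0 (-k) (by simp)
  have hak : ∀ i (k : ℕ), 0 < (a i + k).re := fun i k => by
    have := (hab i).1
    rw [add_re, natCast_re]; positivity
  have hc : ∀ i, 0 < (b i - a i).re := fun i => by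
    rw [sub_re]; linarith [(hab i).2]
  have hG0 : Gamma a0 ≠ 0 := Gamma_ne_zero ha0'
  have hGc : ∏ i, Gamma (b i - a i) ≠ 0 :=
    Finset.prod_ne_zero_iff.mpr fun i _ => Gamma_ne_zero_of_re_pos (hc i)
  have hμ : (volume : Measure (Fin p → ℝ)).restrict (univ.pi fun _ => Ioo (0 : ℝ) 1) =
      Measure.pi fun _ => (volume : Measure ℝ).restrict (Ioo 0 1) := by
    rw [volume_pi, Measure.restrict_pi_pi]
  set c : ℕ → ℂ := fun k => Gamma (a0 + k) / (Gamma a0 * Gamma (1 + k)) with hcdef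
  set F : ℕ → (Fin p → ℝ) → ℂ := fun k t =>
    c k * ∏ i, ((t i : ℂ) ^ (a i + k - 1) * (1 - (t i : ℂ)) ^ (b i - a i - 1)) with hFdef
  have hF : ∀ k, IntegrableOn (F k) (univ.pi fun _ => Ioo (0 : ℝ) 1) := fun k => by
    rw [IntegrableOn, hμ]
    exact (Integrable.fintype_prod fun i => integrableOn_beta (hak i k) (hc i)).const_mul (c k)
  have hsum : Summable fun k => ∫ t in univ.pi fun _ => Ioo (0 : ℝ) 1, ‖F k t‖ := by
    refine (summable_coeff_norm ha0' hab hs).congr fun k => ?_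
    simp only [hFdef, norm_mul (c k), norm_prod]
    rw [integral_const_mul, hμ, integral_fintype_prod_eq_prod
      (fun i (t : ℝ) => ‖(t : ℂ) ^ (a i + k - 1) * (1 - (t : ℂ)) ^ (b i - a i - 1)‖)]
    congr 1
    refine Finset.prod_congr rfl fun i _ => ?_
    rw [integral_norm_beta (hak i k) (hc i)]
    simp only [add_re, natCast_re, ofReal_add, ofReal_natCast, sub_re, ofReal_sub]
    ring_nf
  have hint : ∀ k, ∫ t in univ.pi fun _ => Ioo (0 : ℝ) 1, F k t =
      c k * ∏ i, (Gamma (a i + k) * Gamma (b i - a i) / Gamma (b i + k)) := fun k => by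
    simp only [hFdef]
    rw [integral_const_mul, hμ, integral_fintype_prod_eq_prod
      (fun i (t : ℝ) => (t : ℂ) ^ (a i + k - 1) * (1 - (t : ℂ)) ^ (b i - a i - 1))]
    congr 1
    refine Finset.prod_congr rfl fun i _ => ?_
    rw [integral_beta (hak i k) (hc i)]
    ring_nf
  have hms : MeasurableSet (univ.pi fun _ : Fin p => Ioo (0 : ℝ) 1) :=
    MeasurableSet.univ_pi fun _ => measurableSet_Ioo
  have hpt : ∀ t ∈ univ.pi fun _ : Fin p => Ioo (0 : ℝ) 1, HasSum (fun k => F k t)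
      ((∏ i, (t i : ℂ) ^ (a i - 1) * ((1 : ℂ) - (t i : ℂ)) ^ (b i - a i - 1)) /
          ((1 : ℂ) - ∏ i, (t i : ℂ)) ^ a0) := fun t ht => by
    have ht' : ∀ i, 0 < t i ∧ t i < 1 := fun i => ht i (mem_univ i)
    -- `p ≥ 1` matters here: the empty product would be `1`.
    have hx : ‖∏ i, (t i : ℂ)‖ < 1 := by
      rw [norm_prod]
      refine (Finset.prod_lt_prod_of_nonempty (g := fun _ => (1 : ℝ)) (fun i _ => ?_)
        (fun i _ => ?_) ⟨⟨0, hp⟩, Finset.mem_univ _⟩).trans_eq (by simp)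
      · simpa using (ht' i).1.ne'
      · simpa [abs_of_pos (ht' i).1] using (ht' i).2
    have h := (hasSum_one_sub_cpow ha0' hx).mul_left
      (∏ i, (t i : ℂ) ^ (a i - 1) * ((1 : ℂ) - (t i : ℂ)) ^ (b i - a i - 1))
    rw [mul_one_div] at h
    refine h.congr_fun fun k => ?_
    have e : ∀ i, (t i : ℂ) ^ (a i + k - 1) = (t i : ℂ) ^ (a i - 1) * (t i : ℂ) ^ k := fun i => by
      rw [← cpow_natCast, ← cpow_add _ _ (by exact_mod_cast (ht' i).1.ne')]
      ring_nf
    simp only [hFdef, hcdef, e, Finset.prod_mul_distrib, Finset.prod_pow]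
    ring
  have hae := (ae_restrict_iff' (μ := volume) hms).mpr (Eventually.of_forall hpt)
  refine ⟨integrable_of_hasSum hF hsum hae, ?_⟩
  have hE := hasSum_integral_of_summable_integral_norm hF hsum
  rw [integral_congr_ae (hae.mono fun t ht => ht.tsum_eq)] at hE
  rw [← ((hE.mul_left (Gamma a0)).div_const (∏ i, Gamma (b i - a i))).tsum_eq]
  refine tsum_congr fun k => ?_
  rw [hint, Finset.prod_div_distrib, Finset.prod_mul_distrib]
  simp only [hcdef]
  field_simp
end
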